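/- arXiv:1911.01250 — 7 statements merged into one kernel-verified Lean document; each statement's English description precedes it below -/
import Mathlib

section
/- The polynomial p has degree 2k−1, p(0) = 0, and all roots of p are real and nonpositive. Moreover, if s₀ ≥ s₁ ≥ ⋯ ≥ s_{2k−2} is the list of the roots of p with multiplicity in nonincreasing order, then s₀ = 0 and s_{2j} > s_{2j+1} strictly for every j = 0,1,…,k−2; that is, 0 = s₀ > s₁ ≥ s₂ > s₃ ≥ s₄ > ⋯ > s_{2k−3} ≥ s_{2k−2}. In particular every root of p has multiplicity at most 2. -/
open Polynomial Matrix

/-- The matrix `A_m(z)` with rows `(z + α β⁻¹, α + β)` and `(z(α⁻¹+β⁻¹), z + β α⁻¹)`. -/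
noncomputable def aztecA (a b : ℝ) (z : ℂ) : Matrix (Fin 2) (Fin 2) ℂ :=
  !![z + (a : ℂ) * ((b : ℂ))⁻¹, (a : ℂ) + (b : ℂ);
     z * (((a : ℂ))⁻¹ + ((b : ℂ))⁻¹), z + (b : ℂ) * ((a : ℂ))⁻¹]

/-- `T(z) = A_1(z) A_2(z) ⋯ A_k(z)`. -/
noncomputable def aztecT {k : ℕ} (α β : Fin k → ℝ) (z : ℂ) : Matrix (Fin 2) (Fin 2) ℂ :=
  (List.ofFn fun m => aztecA (α m) (β m) z).prod

/-- The matrix `aztecA a b` with polynomial entries. -/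
noncomputable def aztecPoly (a b : ℝ) : Matrix (Fin 2) (Fin 2) ℝ[X] :=
  !![X + C (a * b⁻¹), C (a + b); X * C (a⁻¹ + b⁻¹), X + C (b * a⁻¹)]

/-- The trace of `aztecT α β` as a real polynomial. -/
noncomputable def aztecTrace {k : ℕ} (α β : Fin k → ℝ) : ℝ[X] :=
  (List.ofFn fun m => aztecPoly (α m) (β m)).prod.trace

lemma aztecPoly_map (a b : ℝ) (z : ℂ) :
    (aeval z : ℝ[X] →ₐ[ℝ] ℂ).mapMatrix (aztecPoly a b) = aztecA a b z := by
  ext i j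
  fin_cases i <;> fin_cases j <;> simp [aztecPoly, aztecA]

lemma aeval_aztecTrace {k : ℕ} (α β : Fin k → ℝ) (z : ℂ) :
    aeval z (aztecTrace α β) = (aztecT α β z).trace := by
  have h : (aeval z : ℝ[X] →ₐ[ℝ] ℂ).mapMatrix (List.ofFn fun m => aztecPoly (α m) (β m)).prod
      = aztecT α β z := by
    rw [map_list_prod, List.map_ofFn, aztecT]
    congr 2
    funext m
    exact aztecPoly_map _ _ _
  rw [← h, aztecTrace]
  simp [Matrix.trace]

lemma list_prod_coeff_nonneg (L : List (Matrix (Fin 2) (Fin 2) ℝ[X]))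
    (hL : ∀ A ∈ L, ∀ i j n, 0 ≤ (A i j).coeff n) (i j : Fin 2) (n : ℕ) :
    0 ≤ (L.prod i j).coeff n := by
  induction L generalizing i j n with
  | nil =>
    rw [List.prod_nil, Matrix.one_apply]
    split_ifs
    · rw [coeff_one]; split_ifs <;> norm_num
    · simp
  | cons A L ih =>
    rw [List.prod_cons, Matrix.mul_apply, finsetSum_coeff]
    refine Finset.sum_nonneg fun l _ => ?_
    rw [coeff_mul]
    exact Finset.sum_nonneg fun x _ => mul_nonneg (hL A (by simp) _ _ _)
      (ih (fun B hB => hL B (by simp [hB])) _ _ _)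

lemma list_prod_natDegree_le (L : List (Matrix (Fin 2) (Fin 2) ℝ[X]))
    (hL : ∀ A ∈ L, ∀ i j, (A i j).natDegree ≤ 1) (i j : Fin 2) :
    (L.prod i j).natDegree ≤ L.length := by
  induction L generalizing i j with
  | nil =>
    rw [List.prod_nil, Matrix.one_apply]
    split_ifs <;> simp
  | cons A L ih =>
    rw [List.prod_cons, Matrix.mul_apply, List.length_cons, add_comm]
    exact natDegree_sum_le_of_forall_le _ _ fun l _ => natDegree_mul_le_of_le (hL A (by simp) _ _)
      (ih (fun B hB => hL B (by simp [hB])) _ _)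

lemma list_prod_coeff_length (L : List (Matrix (Fin 2) (Fin 2) ℝ[X]))
    (hL : ∀ A ∈ L, ∀ i j, (A i j).natDegree ≤ 1)
    (hA : ∀ A ∈ L, (A 0 0).coeff 1 = 1 ∧ (A 0 1).coeff 1 = 0 ∧ (A 1 1).coeff 1 = 1) :
    (L.prod 0 0).coeff L.length = 1 ∧ (L.prod 0 1).coeff L.length = 0 ∧
      (L.prod 1 1).coeff L.length = 1 := by
  induction L with
  | nil => simp
  | cons A L ih =>
    have hL' : ∀ B ∈ L, ∀ i j, (B i j).natDegree ≤ 1 := fun B hB => hL B (by simp [hB])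
    obtain ⟨h1, h2, h3⟩ := ih hL' fun B hB => hA B (by simp [hB])
    obtain ⟨a1, a2, a3⟩ := hA A (by simp)
    have hc : ∀ i j l, (A i l * L.prod l j).coeff (1 + L.length)
        = (A i l).coeff 1 * (L.prod l j).coeff L.length := fun i j l =>
      coeff_mul_add_eq_of_natDegree_le (hL A (by simp) _ _) (list_prod_natDegree_le L hL' _ _)
    simp [List.prod_cons, Matrix.mul_apply, add_comm L.length 1, hc, h1, h2, h3, a1, a2, a3]

section aztecTrace

variable {k : ℕ} {α β : Fin k → ℝ}

lemma aztecPoly_natDegree_le (a b : ℝ) (i j : Fin 2) : (aztecPoly a b i j).natDegree ≤ 1 := by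
  fin_cases i <;> fin_cases j <;> simp only [aztecPoly] <;> simp <;> compute_degree

lemma aztecPoly_coeff_nonneg {a b : ℝ} (ha : 0 < a) (hb : 0 < b) (i j : Fin 2) (n : ℕ) :
    0 ≤ (aztecPoly a b i j).coeff n := by
  have hX : 0 ≤ (X : ℝ[X]).coeff n := by rw [coeff_X]; split_ifs <;> norm_num
  have hC : ∀ c : ℝ, 0 ≤ c → 0 ≤ (C c).coeff n := fun c hc => by
    rw [coeff_C]; split_ifs <;> simp [hc]
  fin_cases i <;> fin_cases j
  · exact (add_nonneg hX (hC _ (by positivity))).trans_eq (coeff_add _ _ _).symm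
  · exact hC _ (by positivity)
  · exact (mul_nonneg hX (by positivity : 0 ≤ a⁻¹ + b⁻¹)).trans_eq (coeff_mul_C _ _ _).symm
  · exact (add_nonneg hX (hC _ (by positivity))).trans_eq (coeff_add _ _ _).symm

lemma aztecTrace_natDegree_le : (aztecTrace α β).natDegree ≤ k := by
  have h := list_prod_natDegree_le (List.ofFn fun m => aztecPoly (α m) (β m)) (by
    intro A hA
    obtain ⟨m, rfl⟩ := (List.mem_ofFn' _ _).1 hA
    exact aztecPoly_natDegree_le _ _)
  rw [List.length_ofFn] at h
  rw [aztecTrace, Matrix.trace_fin_two]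
  exact natDegree_add_le_of_degree_le (h 0 0) (h 1 1)

lemma aztecTrace_coeff_self : (aztecTrace α β).coeff k = 2 := by
  have h := list_prod_coeff_length (List.ofFn fun m => aztecPoly (α m) (β m)) (by
      intro A hA
      obtain ⟨m, rfl⟩ := (List.mem_ofFn' _ _).1 hA
      exact aztecPoly_natDegree_le _ _) (by
      intro A hA
      obtain ⟨m, rfl⟩ := (List.mem_ofFn' _ _).1 hA
      simp [aztecPoly])
  rw [List.length_ofFn] at h
  rw [aztecTrace, Matrix.trace_fin_two, coeff_add, h.1, h.2.2]
  norm_num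

lemma aztecTrace_coeff_nonneg (hα : ∀ m, 0 < α m) (hβ : ∀ m, 0 < β m) (n : ℕ) :
    0 ≤ (aztecTrace α β).coeff n := by
  have h := list_prod_coeff_nonneg (List.ofFn fun m => aztecPoly (α m) (β m)) (by
    intro A hA
    obtain ⟨m, rfl⟩ := (List.mem_ofFn' _ _).1 hA
    exact aztecPoly_coeff_nonneg (hα m) (hβ m))
  rw [aztecTrace, Matrix.trace_fin_two, coeff_add]
  exact add_nonneg (h _ _ _) (h _ _ _)

lemma aztecTrace_natDegree : (aztecTrace α β).natDegree = k :=
  natDegree_eq_of_le_of_coeff_ne_zero aztecTrace_natDegree_le (by simp [aztecTrace_coeff_self])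

lemma aztecTrace_eval_one_pos (hα : ∀ m, 0 < α m) (hβ : ∀ m, 0 < β m) :
    0 < (aztecTrace α β).eval 1 := by
  rw [eval_eq_sum_range]
  refine Finset.sum_pos' (fun n _ => by simpa using aztecTrace_coeff_nonneg hα hβ n)
    ⟨k, ?_, ?_⟩
  · simp [aztecTrace_natDegree]
  · simp [aztecTrace_coeff_self]

end aztecTrace

section discriminant

variable {k : ℕ} {α β : Fin k → ℝ}

/-- The discriminant of `aztecT α β` as a real polynomial. -/
noncomputable def aztecDisc (α β : Fin k → ℝ) : ℝ[X] :=
  aztecTrace α β ^ 2 - C 4 * (X - C 1) ^ (2 * k)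

lemma aeval_aztecDisc (z : ℂ) :
    aeval z (aztecDisc α β) = (aztecT α β z).trace ^ 2 - 4 * (z - 1) ^ (2 * k) := by
  simp [aztecDisc, aeval_aztecTrace]

lemma aztecDisc_natDegree_and_leadingCoeff (hk : 1 ≤ k) (hα : ∀ m, 0 < α m) (hβ : ∀ m, 0 < β m) :
    (aztecDisc α β).natDegree = 2 * k - 1 ∧ 0 < (aztecDisc α β).leadingCoeff := by
  set F := aztecTrace α β with hF
  have hmon : ((X - C 1 : ℝ[X]) ^ k).Monic := (monic_X_sub_C 1).pow k
  have hdeg : ((X - C 1 : ℝ[X]) ^ k).natDegree = k := by rw [natDegree_pow, natDegree_X_sub_C, mul_one]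
  have hq : ((X - C 1 : ℝ[X]) ^ k).coeff k = 1 := by
    have := hmon.coeff_natDegree
    rwa [hdeg] at this
  have hq' : ((X - C 1 : ℝ[X]) ^ k).coeff (k - 1) = -k := by
    have := (monic_X_sub_C (1 : ℝ)).nextCoeff_pow k
    rw [nextCoeff_X_sub_C, nextCoeff_of_natDegree_pos (by omega), hdeg] at this
    simpa using this
  have hfac : aztecDisc α β
      = (F - C 2 * (X - C 1) ^ k) * (F + C 2 * (X - C 1) ^ k) := by
    rw [aztecDisc, ← hF, pow_mul', show (4 : ℝ) = 2 * 2 by norm_num, C_mul]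
    ring
  have hplus : (F + C 2 * (X - C 1) ^ k).coeff k = 4 := by
    rw [coeff_add, coeff_C_mul, hq, aztecTrace_coeff_self]; norm_num
  have hplusd : (F + C 2 * (X - C 1) ^ k).natDegree = k := by
    refine natDegree_eq_of_le_of_coeff_ne_zero ?_ (by rw [hplus]; norm_num)
    exact natDegree_add_le_of_degree_le aztecTrace_natDegree_le
      ((natDegree_C_mul_le _ _).trans hdeg.le)
  have hminus : 0 < (F - C 2 * (X - C 1) ^ k).coeff (k - 1) := by
    rw [coeff_sub, coeff_C_mul, hq']
    have := aztecTrace_coeff_nonneg hα hβ (k - 1)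
    have hk' : (1 : ℝ) ≤ k := by exact_mod_cast hk
    rw [← hF] at this
    linarith
  have hminusd : (F - C 2 * (X - C 1) ^ k).natDegree = k - 1 := by
    refine natDegree_eq_of_le_of_coeff_ne_zero ?_ hminus.ne'
    refine natDegree_le_iff_coeff_eq_zero.2 fun n hn => ?_
    rcases (show k ≤ n by omega).eq_or_lt with rfl | hn'
    · rw [coeff_sub, coeff_C_mul, hq, aztecTrace_coeff_self]; norm_num
    · rw [coeff_sub, coeff_C_mul, coeff_eq_zero_of_natDegree_lt (hdeg.trans_lt hn'),
        coeff_eq_zero_of_natDegree_lt (aztecTrace_natDegree_le.trans_lt hn')]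
      simp
  have hm0 : F - C 2 * (X - C 1) ^ k ≠ 0 := fun h => by rw [h] at hminus; simp at hminus
  have hp0 : F + C 2 * (X - C 1) ^ k ≠ 0 := fun h => by rw [h] at hplus; simp at hplus
  constructor
  · rw [hfac, natDegree_mul hm0 hp0, hminusd, hplusd]
    omega
  · rw [hfac, leadingCoeff_mul, leadingCoeff, leadingCoeff, hminusd, hplusd, hplus]
    positivity

lemma aztecT_zero_trace (hβ : ∀ m, 0 < β m) (hprod : ∏ m, α m = ∏ m, β m) :
    (aztecT α β 0).trace = 2 := by
  have key : ∀ L : List (ℝ × ℝ), (L.map fun x => aztecA x.1 x.2 0).prod 1 0 = 0 ∧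
      (L.map fun x => aztecA x.1 x.2 0).prod 0 0
        = (L.map fun x => (x.1 : ℂ) * (x.2 : ℂ)⁻¹).prod ∧
      (L.map fun x => aztecA x.1 x.2 0).prod 1 1
        = (L.map fun x => (x.2 : ℂ) * (x.1 : ℂ)⁻¹).prod := by
    intro L
    induction L with
    | nil => simp
    | cons x L ih =>
      obtain ⟨h1, h2, h3⟩ := ih
      simp only [List.map_cons, List.prod_cons, Matrix.mul_apply, Fin.sum_univ_two, h1, h2, h3]
      simp [aztecA]
  obtain ⟨-, h2, h3⟩ := key (List.ofFn fun m => (α m, β m))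
  have hβ0 : (∏ m, (β m : ℂ)) ≠ 0 :=
    Finset.prod_ne_zero_iff.2 fun m _ => by exact_mod_cast (hβ m).ne'
  have hp : ∏ m, (α m : ℂ) = ∏ m, (β m : ℂ) := by exact_mod_cast hprod
  simp only [List.map_ofFn, List.prod_ofFn, Function.comp_def, Finset.prod_mul_distrib,
    Finset.prod_inv_distrib, hp, mul_inv_cancel₀ hβ0] at h2 h3
  rw [aztecT, Matrix.trace_fin_two, h2, h3]
  norm_num

end discriminant

section monodromy

open ComplexConjugate

/-- The indefinite Hermitian form expanded by the matrices `aztecA a b (w ^ 2)`, `0 < w.re`. -/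
noncomputable def aztecForm (w : ℂ) (v : Fin 2 → ℂ) : ℝ := (w * v 0 * conj (v 1)).re

lemma aztecForm_smul (w c : ℂ) (v : Fin 2 → ℂ) :
    aztecForm w (c • v) = Complex.normSq c * aztecForm w v := by
  simp only [aztecForm, Pi.smul_apply, smul_eq_mul, map_mul]
  rw [show w * (c * v 0) * (conj c * conj (v 1)) = (c * conj c) * (w * v 0 * conj (v 1)) by ring,
    Complex.mul_conj, Complex.re_ofReal_mul]

lemma aztecForm_aztecA {a b : ℝ} (ha : 0 < a) (hb : 0 < b) (w : ℂ) (v : Fin 2 → ℂ) :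
    aztecForm w (aztecA a b (w ^ 2) *ᵥ v) = Complex.normSq (w ^ 2 - 1) * aztecForm w v +
      w.re * (a + b) * ((a * b)⁻¹ * Complex.normSq (w ^ 2 * v 0 + b * v 1) +
        (b ^ 2)⁻¹ * (Complex.normSq w * Complex.normSq (v 0 + b * v 1))) := by
  obtain ⟨x, y⟩ := w
  rcases hp : v 0 with ⟨p, q⟩
  rcases hr : v 1 with ⟨r, s⟩
  simp only [aztecForm, aztecA, Matrix.mulVec, dotProduct, Fin.sum_univ_two, hp, hr]
  simp [Complex.normSq_apply, pow_two, ← Complex.ofReal_inv]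
  field_simp
  ring

lemma aztecForm_le {a b : ℝ} (ha : 0 < a) (hb : 0 < b) {w : ℂ} (hw : 0 < w.re) (v : Fin 2 → ℂ) :
    Complex.normSq (w ^ 2 - 1) * aztecForm w v ≤ aztecForm w (aztecA a b (w ^ 2) *ᵥ v) := by
  rw [aztecForm_aztecA ha hb]
  have := Complex.normSq_nonneg (w ^ 2 * v 0 + b * v 1)
  have := Complex.normSq_nonneg (v 0 + b * v 1)
  have := Complex.normSq_nonneg w
  have : 0 ≤ w.re * (a + b) * ((a * b)⁻¹ * Complex.normSq (w ^ 2 * v 0 + b * v 1) +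
        (b ^ 2)⁻¹ * (Complex.normSq w * Complex.normSq (v 0 + b * v 1))) := by positivity
  linarith

lemma aztecForm_lt {a b : ℝ} (ha : 0 < a) (hb : 0 < b) {w : ℂ} (hw : 0 < w.re) (hw1 : w ^ 2 ≠ 1)
    {v : Fin 2 → ℂ} (hv : v ≠ 0) :
    Complex.normSq (w ^ 2 - 1) * aztecForm w v < aztecForm w (aztecA a b (w ^ 2) *ᵥ v) := by
  rw [aztecForm_aztecA ha hb]
  have h1 := Complex.normSq_nonneg (w ^ 2 * v 0 + b * v 1)
  have h2 := Complex.normSq_nonneg (v 0 + b * v 1)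
  have hw' : 0 < Complex.normSq w := Complex.normSq_pos.2 (by rintro rfl; simp at hw)
  have hpos : 0 < w.re * (a + b) * ((a * b)⁻¹ * Complex.normSq (w ^ 2 * v 0 + b * v 1) +
        (b ^ 2)⁻¹ * (Complex.normSq w * Complex.normSq (v 0 + b * v 1))) := by
    rcases h1.lt_or_eq with h1 | h1
    · positivity
    rcases h2.lt_or_eq with h2 | h2
    · positivity
    exfalso
    have e1 := Complex.normSq_eq_zero.1 h1.symm
    have e2 := Complex.normSq_eq_zero.1 h2.symm
    have e3 : (w ^ 2 - 1) * v 0 = 0 := by linear_combination e1 - e2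
    have e4 : v 0 = 0 := (mul_eq_zero.1 e3).resolve_left (sub_ne_zero.2 hw1)
    have e5 : v 1 = 0 := by
      rw [e4, zero_add] at e2
      exact (mul_eq_zero.1 e2).resolve_left (by exact_mod_cast hb.ne')
    exact hv (funext fun i => by fin_cases i <;> simp [e4, e5])
  linarith

lemma aztecForm_list_prod_le {w : ℂ} (hw : 0 < w.re) (L : List (Matrix (Fin 2) (Fin 2) ℂ))
    (hL : ∀ A ∈ L, ∃ a b : ℝ, 0 < a ∧ 0 < b ∧ A = aztecA a b (w ^ 2)) (v : Fin 2 → ℂ) :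
    Complex.normSq (w ^ 2 - 1) ^ L.length * aztecForm w v ≤ aztecForm w (L.prod *ᵥ v) := by
  induction L with
  | nil => simp
  | cons A L ih =>
    obtain ⟨a, b, ha, hb, rfl⟩ := hL A (by simp)
    rw [List.prod_cons, ← Matrix.mulVec_mulVec, List.length_cons, pow_succ', mul_assoc]
    exact (mul_le_mul_of_nonneg_left (ih fun B hB => hL B (by simp [hB]))
      (Complex.normSq_nonneg _)).trans (aztecForm_le ha hb hw _)

lemma aztecForm_list_prod_lt {w : ℂ} (hw : 0 < w.re) (hw1 : w ^ 2 ≠ 1)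
    (L : List (Matrix (Fin 2) (Fin 2) ℂ)) (hL0 : L ≠ [])
    (hL : ∀ A ∈ L, ∃ a b : ℝ, 0 < a ∧ 0 < b ∧ A = aztecA a b (w ^ 2)) {v : Fin 2 → ℂ}
    (hv : v ≠ 0) :
    Complex.normSq (w ^ 2 - 1) ^ L.length * aztecForm w v < aztecForm w (L.prod *ᵥ v) := by
  obtain ⟨L, A, rfl⟩ := (List.eq_nil_or_concat L).resolve_left hL0
  simp only [List.concat_eq_append] at hL ⊢
  obtain ⟨a, b, ha, hb, rfl⟩ := hL A (by simp)
  rw [List.prod_append, List.prod_singleton, ← Matrix.mulVec_mulVec, List.length_append,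
    List.length_singleton, pow_succ, mul_assoc]
  have hpos : 0 < Complex.normSq (w ^ 2 - 1) := Complex.normSq_pos.2 (sub_ne_zero.2 hw1)
  exact (mul_lt_mul_of_pos_left (aztecForm_lt ha hb hw hw1 hv) (pow_pos hpos _)).trans_le
    (aztecForm_list_prod_le hw L (fun B hB => hL B (by simp [hB])) _)

variable {k : ℕ} {α β : Fin k → ℝ}

lemma aztecT_det (hα : ∀ m, 0 < α m) (hβ : ∀ m, 0 < β m) (z : ℂ) :
    (aztecT α β z).det = (z - 1) ^ (2 * k) := by
  have h : ∀ m, (aztecA (α m) (β m) z).det = (z - 1) ^ 2 := fun m => by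
    have ha : (α m : ℂ) ≠ 0 := by exact_mod_cast (hα m).ne'
    have hb : (β m : ℂ) ≠ 0 := by exact_mod_cast (hβ m).ne'
    rw [aztecA, Matrix.det_fin_two_of]
    field_simp
    ring
  rw [aztecT, ← Matrix.coe_detMonoidHom, map_list_prod, List.map_ofFn, List.prod_ofFn]
  simp [h, pow_mul]

lemma exists_sq_eq_of_not_nonpos {z : ℂ} (hz : ¬ (z.im = 0 ∧ z.re ≤ 0)) :
    ∃ w : ℂ, 0 < w.re ∧ w ^ 2 = z := by
  obtain ⟨w, rfl⟩ := IsAlgClosed.exists_pow_nat_eq z (n := 2) (by norm_num)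
  rcases lt_trichotomy w.re 0 with h | h | h
  · exact ⟨-w, by simpa using h, by ring⟩
  · refine absurd ⟨?_, ?_⟩ hz
    · simp [pow_two, h]
    · simp [pow_two, h, mul_self_nonneg]
  · exact ⟨w, h, rfl⟩

/-- Away from `(-∞, 0]` and `1`, no eigenvalue of `aztecT α β z` has modulus `|z - 1| ^ k`. -/
lemma nonpos_of_aztecT_eigenvalue (hk : 1 ≤ k) (hα : ∀ m, 0 < α m) (hβ : ∀ m, 0 < β m) {z c : ℂ}
    (hz : z ≠ 1) (hc : Complex.normSq c = 1)
    (h : (c * (z - 1) ^ k) ^ 2 - (aztecT α β z).trace * (c * (z - 1) ^ k)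
      + (z - 1) ^ (2 * k) = 0) :
    z.im = 0 ∧ z.re ≤ 0 := by
  by_contra hneg
  obtain ⟨w, hw, rfl⟩ := exists_sq_eq_of_not_nonpos hneg
  set l := c * (w ^ 2 - 1) ^ k with hl
  have hdet : (aztecT α β (w ^ 2) - l • (1 : Matrix (Fin 2) (Fin 2) ℂ)).det = 0 := by
    have hd := aztecT_det hα hβ (w ^ 2)
    rw [← hd, Matrix.trace_fin_two, Matrix.det_fin_two] at h
    rw [Matrix.det_fin_two]
    simp
    linear_combination h
  obtain ⟨v, hv, hTv⟩ := Matrix.exists_mulVec_eq_zero_iff.2 hdet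
  have hTv' : aztecT α β (w ^ 2) *ᵥ v = l • v := by
    rw [Matrix.sub_mulVec, Matrix.smul_mulVec, Matrix.one_mulVec] at hTv
    exact sub_eq_zero.1 hTv
  have hlt := aztecForm_list_prod_lt hw hz
    (List.ofFn fun m => aztecA (α m) (β m) (w ^ 2)) (by
      rw [ne_eq, List.ofFn_eq_nil_iff]; omega) (by
      intro A hA
      obtain ⟨m, rfl⟩ := (List.mem_ofFn' _ _).1 hA
      exact ⟨_, _, hα m, hβ m, rfl⟩) hv
  rw [← aztecT, hTv', aztecForm_smul, List.length_ofFn, hl, map_mul, hc, map_pow, one_mul] at hlt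
  exact lt_irrefl _ hlt

lemma aztecT_trace_one_ne_zero (hα : ∀ m, 0 < α m) (hβ : ∀ m, 0 < β m) :
    (aztecT α β 1).trace ≠ 0 := by
  have h : aeval (1 : ℂ) (aztecTrace α β) = ((aztecTrace α β).eval 1 : ℝ) := by
    have := aeval_algebraMap_apply ℂ (1 : ℝ) (aztecTrace α β)
    simpa using this
  rw [← aeval_aztecTrace, h]
  exact_mod_cast (aztecTrace_eval_one_pos hα hβ).ne'

lemma nonpos_of_aztecTrace_root (hk : 1 ≤ k) (hα : ∀ m, 0 < α m) (hβ : ∀ m, 0 < β m) {z : ℂ}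
    (h : aeval z (aztecTrace α β) = 0) : z.im = 0 ∧ z.re ≤ 0 := by
  rw [aeval_aztecTrace] at h
  refine nonpos_of_aztecT_eigenvalue hk hα hβ (c := Complex.I) ?_ (by simp) ?_
  · rintro rfl
    exact aztecT_trace_one_ne_zero hα hβ h
  · rw [h, mul_pow, Complex.I_sq, pow_mul']
    ring

lemma nonpos_of_aztecDisc_root (hk : 1 ≤ k) (hα : ∀ m, 0 < α m) (hβ : ∀ m, 0 < β m) {z : ℂ}
    (h : aeval z (aztecDisc α β) = 0) : z.im = 0 ∧ z.re ≤ 0 := by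
  rw [aeval_aztecDisc] at h
  have hz : z ≠ 1 := by
    rintro rfl
    have hk' : 2 * k ≠ 0 := by omega
    simp only [sub_self, zero_pow hk', mul_zero, sub_zero] at h
    exact aztecT_trace_one_ne_zero hα hβ (pow_eq_zero_iff two_ne_zero |>.1 h)
  have hfac : ((aztecT α β z).trace - 2 * (z - 1) ^ k) *
      ((aztecT α β z).trace + 2 * (z - 1) ^ k) = 0 := by
    rw [← h, pow_mul']
    ring
  rcases mul_eq_zero.1 hfac with h | h
  · refine nonpos_of_aztecT_eigenvalue hk hα hβ (c := 1) hz (by simp) ?_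
    rw [pow_mul']
    linear_combination (-(z - 1) ^ k) * h
  · refine nonpos_of_aztecT_eigenvalue hk hα hβ (c := -1) hz (by simp) ?_
    rw [pow_mul']
    linear_combination (z - 1) ^ k * h

end monodromy

section interlacing

lemma eval_derivative_prod_X_sub_C (R : Multiset ℝ) (x : ℝ) (hx : x ∉ R) :
    (derivative (R.map fun r => X - C r).prod).eval x
        = (R.map fun r => X - C r).prod.eval x * (R.map fun r => (x - r)⁻¹).sum ∧
      (derivative (derivative (R.map fun r => X - C r).prod)).eval x
        = (R.map fun r => X - C r).prod.eval x *
          ((R.map fun r => (x - r)⁻¹).sum ^ 2 - (R.map fun r => (x - r)⁻¹ ^ 2).sum) := by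
  induction R using Multiset.induction with
  | empty => simp
  | cons r R ih =>
    rw [Multiset.mem_cons, not_or] at hx
    obtain ⟨h1, h2⟩ := ih hx.2
    have hr : x - r ≠ 0 := sub_ne_zero.2 hx.1
    simp only [Multiset.map_cons, Multiset.prod_cons, Multiset.sum_cons, derivative_mul,
      derivative_X_sub_C, derivative_add, eval_add, eval_mul, one_mul, eval_sub, eval_X, eval_C,
      h1, h2]
    constructor
    · field_simp
    · field_simp
      ring

lemma card_mul_sq_lt_sum_sq {R : Multiset ℝ} {f : ℝ → ℝ} {t r : ℝ} (hr : r ∈ R) (hrt : f r ≠ t)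
    (hsum : (R.map f).sum = R.card * t) : R.card * t ^ 2 < (R.map fun r => f r ^ 2).sum := by
  have key : (R.map fun r => (f r - t) ^ 2).sum
      = (R.map fun r => f r ^ 2).sum - 2 * t * (R.map f).sum + R.card * t ^ 2 := by
    clear hr hsum
    induction R using Multiset.induction with
    | empty => simp
    | cons r R ih =>
      simp only [Multiset.map_cons, Multiset.sum_cons, Multiset.card_cons, ih]
      push_cast
      ring
  have hpos : 0 < (R.map fun r => (f r - t) ^ 2).sum := by
    obtain ⟨R, rfl⟩ := Multiset.exists_cons_of_mem hr
    rw [Multiset.map_cons, Multiset.sum_cons]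
    refine add_pos_of_pos_of_nonneg (sq_pos_of_ne_zero (sub_ne_zero.2 hrt)) (Multiset.sum_nonneg ?_)
    simp only [Multiset.mem_map]
    rintro _ ⟨s, -, rfl⟩
    positivity
  rw [key, hsum] at hpos
  linarith

variable {k : ℕ} {α β : Fin k → ℝ}

lemma aztecTrace_splits (hk : 1 ≤ k) (hα : ∀ m, 0 < α m) (hβ : ∀ m, 0 < β m) :
    (aztecTrace α β).Splits := by
  refine Splits.of_splits_map (algebraMap ℝ ℂ) (IsAlgClosed.splits _) fun z hz => ?_
  have hz' : aeval z (aztecTrace α β) = 0 := by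
    rw [aeval_def, ← eval_map]
    exact (mem_roots'.1 hz).2
  exact ⟨z.re, Complex.ext (by simp) (by simp [(nonpos_of_aztecTrace_root hk hα hβ hz').1])⟩

/-- A multiple root of the discriminant is a strict local maximum. -/
lemma aztecDisc_second_derivative_neg (hk : 1 ≤ k) (hα : ∀ m, 0 < α m) (hβ : ∀ m, 0 < β m) {x : ℝ}
    (h0 : (aztecDisc α β).eval x = 0) (h1 : (derivative (aztecDisc α β)).eval x = 0) :
    (derivative (derivative (aztecDisc α β))).eval x < 0 := by
  set F := aztecTrace α β with hF
  have hsplit := aztecTrace_splits hk hα hβ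
  rw [← hF] at hsplit
  have hcard : F.roots.card = k := by
    rw [← hsplit.natDegree_eq_card_roots, hF, aztecTrace_natDegree]
  have hF1 : 0 < F.eval 1 := aztecTrace_eval_one_pos hα hβ
  obtain ⟨n, hn⟩ : ∃ n, 2 * k = n + 2 := ⟨2 * k - 2, by omega⟩
  have hn' : (n : ℝ) = 2 * k - 2 := by
    have : (2 * k : ℝ) = n + 2 := by exact_mod_cast hn
    linarith
  simp only [aztecDisc, ← hF, hn] at h0 h1 ⊢
  simp [derivative_pow] at h0 h1 ⊢
  have hx1 : x - 1 ≠ 0 := by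
    intro h
    obtain rfl : x = 1 := by linarith
    simp at h0
    exact hF1.ne' h0
  have hFx : F.eval x ≠ 0 := by
    intro h
    rw [h] at h0
    simp [hx1] at h0
  have hxR : x ∉ F.roots := fun h => hFx (mem_roots'.1 h).2
  obtain ⟨d1, d2⟩ := eval_derivative_prod_X_sub_C F.roots x hxR
  set S := (F.roots.map fun r => (x - r)⁻¹).sum
  set Q := (F.roots.map fun r => (x - r)⁻¹ ^ 2).sum with hQ
  have hFprod := hsplit.eq_prod_roots
  set P := (F.roots.map fun r => X - C r).prod
  have e0 : F.eval x = F.leadingCoeff * P.eval x := by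
    conv_lhs => rw [hFprod]
    simp
  have e1 : (derivative F).eval x = F.eval x * S := by
    rw [e0]
    conv_lhs => rw [hFprod]
    simp [d1, mul_assoc]
  have e2 : (derivative (derivative F)).eval x = F.eval x * (S ^ 2 - Q) := by
    rw [e0]
    conv_lhs => rw [hFprod]
    simp [d2, mul_assoc]
  set f := F.eval x
  set t := (x - 1)⁻¹ with ht
  have ht1 : (x - 1) * t = 1 := mul_inv_cancel₀ hx1
  have p1 : 4 * (x - 1) ^ (n + 1) = f ^ 2 * t := by
    linear_combination (-t) * h0 - 4 * (x - 1) ^ (n + 1) * ht1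
  have p0 : 4 * (x - 1) ^ n = f ^ 2 * t ^ 2 := by
    linear_combination t * p1 - 4 * (x - 1) ^ n * ht1
  have hf2 : 0 < f ^ 2 := by positivity
  have hS : S = k * t := by
    rw [e1] at h1
    have : f ^ 2 * (S - k * t) = 0 := by
      linear_combination h1 / 2 + (n + 2) / 2 * p1 + f ^ 2 * t / 2 * hn'
    linarith [(mul_eq_zero.1 this).resolve_left hf2.ne']
  obtain ⟨r, hr⟩ : ∃ r, r ∈ F.roots := Multiset.card_pos_iff_exists_mem.1 (by omega)
  have hrt : (x - r)⁻¹ ≠ t := by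
    intro h
    obtain rfl : r = 1 := by linarith [inv_injective h]
    exact hF1.ne' (mem_roots'.1 hr).2
  have hQt := card_mul_sq_lt_sum_sq (f := fun r => (x - r)⁻¹) hr hrt (by rw [hcard]; exact hS)
  rw [hcard, ← hQ] at hQt
  have hneg : f ^ 2 * (k * t ^ 2 - Q) < 0 := mul_neg_of_pos_of_neg hf2 (by linarith)
  have hrhs : 4 * ((n + 2) * ((n + 1) * (x - 1) ^ n))
      = 2 * k * (2 * k - 1) * (f ^ 2 * t ^ 2) := by
    rw [← p0, hn']
    ring
  rw [e1, e2, hS, hrhs]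
  linarith

end interlacing

section ordering

lemma X_sub_C_sq_mul_derivatives (x : ℝ) (h : ℝ[X]) :
    (derivative ((X - C x) ^ 2 * h)).eval x = 0 ∧
      (derivative (derivative ((X - C x) ^ 2 * h))).eval x = 2 * h.eval x := by
  constructor <;> simp [derivative_pow]

/-- In an antitone family, an even index together with its successor leave a nonnegative product of
differences. -/
lemma prod_sub_nonneg_of_antitone {n : ℕ} {s : Fin n → ℝ} (hs : Antitone s) {i j : Fin n}
    (hi : (i : ℕ) % 2 = 0) (hj : (j : ℕ) = i + 1) :
    0 ≤ ∏ l ∈ (Finset.univ.erase i).erase j, (s i - s l) := by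
  have hsplit : (Finset.univ.erase i).erase j = Finset.Iio i ∪ Finset.Ioi j := by
    ext l
    simp only [Finset.mem_erase, Finset.mem_univ, and_true, Finset.mem_union, Finset.mem_Iio,
      Finset.mem_Ioi, ne_eq, Fin.ext_iff, Fin.lt_def]
    omega
  have hdisj : Disjoint (Finset.Iio i) (Finset.Ioi j) := by
    rw [Finset.disjoint_left]
    intro l hl hl'
    rw [Finset.mem_Iio, Fin.lt_def] at hl
    rw [Finset.mem_Ioi, Fin.lt_def] at hl'
    omega
  rw [hsplit, Finset.prod_union hdisj]
  refine mul_nonneg ?_ (Finset.prod_nonneg fun l hl => sub_nonneg.2 (hs ?_))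
  · have hneg : ∏ l ∈ Finset.Iio i, (s i - s l) = ∏ l ∈ Finset.Iio i, (s l - s i) := by
      rw [Finset.prod_congr rfl fun l _ => (neg_sub (s l) (s i)).symm, Finset.prod_neg,
        Fin.card_Iio, (Nat.even_iff.2 hi).neg_one_pow, one_mul]
    rw [hneg]
    exact Finset.prod_nonneg fun l hl => sub_nonneg.2 (hs (Finset.mem_Iio.1 hl).le)
  · rw [Finset.mem_Ioi, Fin.lt_def] at hl
    rw [Fin.le_def]
    omega

end ordering

/-- the discriminant polynomial `p` has degree `2k−1`, `p(0) = 0`, all its roots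
are real and nonpositive, and its roots listed with multiplicity in nonincreasing order
`s₀ ≥ s₁ ≥ ⋯ ≥ s_{2k−2}` satisfy `s₀ = 0` and `s_{2j} > s_{2j+1}` strictly; in particular
every root has multiplicity at most `2`. -/
theorem stmt1 (k : ℕ) (hk : 1 ≤ k) (α β : Fin k → ℝ)
    (hα : ∀ m, 0 < α m) (hβ : ∀ m, 0 < β m)
    (hprod : ∏ m, α m = ∏ m, β m)
    (p : Polynomial ℝ)
    (hp : ∀ z : ℂ, Polynomial.aeval z p
        = (Matrix.trace (aztecT α β z)) ^ 2 - 4 * (z - 1) ^ (2 * k)) :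
    p.natDegree = 2 * k - 1 ∧
    p.eval 0 = 0 ∧
    (∀ z : ℂ, Polynomial.aeval z p = 0 → z.im = 0 ∧ z.re ≤ 0) ∧
    (∀ s : Fin (2 * k - 1) → ℝ, Antitone s →
        Multiset.map s Finset.univ.val = p.roots →
        s ⟨0, by omega⟩ = 0 ∧
        ∀ i j : Fin (2 * k - 1), (i : ℕ) % 2 = 0 → (j : ℕ) = (i : ℕ) + 1 → s j < s i) ∧
    (∀ x : ℝ, p.rootMultiplicity x ≤ 2) := by
  obtain rfl : p = aztecDisc α β := by
    refine map_injective (algebraMap ℝ ℂ) (algebraMap ℝ ℂ).injective (Polynomial.funext fun z => ?_)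
    rw [eval_map_algebraMap, eval_map_algebraMap, hp, aeval_aztecDisc]
  obtain ⟨hdeg, hlead⟩ := aztecDisc_natDegree_and_leadingCoeff hk hα hβ
  have hne : aztecDisc α β ≠ 0 := leadingCoeff_ne_zero.1 hlead.ne'
  have hzero : (aztecDisc α β).eval 0 = 0 := by
    have h := hp 0
    have h' := aeval_algebraMap_apply ℂ (0 : ℝ) (aztecDisc α β)
    rw [map_zero, h, aztecT_zero_trace hβ hprod, zero_sub, pow_mul] at h'
    norm_num at h'
    exact_mod_cast h'.symm
  have hnonpos : ∀ x : ℝ, (aztecDisc α β).eval x = 0 → x ≤ 0 := fun x hx => by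
    have h := aeval_algebraMap_apply ℂ x (aztecDisc α β)
    rw [coe_aeval_eq_eval, hx, map_zero] at h
    simpa using (nonpos_of_aztecDisc_root hk hα hβ h).2
  refine ⟨hdeg, hzero, fun z hz => nonpos_of_aztecDisc_root hk hα hβ hz, fun s hs hroots => ?_,
    fun x => ?_⟩
  · have hmem : ∀ l, (aztecDisc α β).eval (s l) = 0 := fun l => by
      have : s l ∈ (aztecDisc α β).roots := by
        rw [← hroots]
        exact Multiset.mem_map_of_mem s (Finset.mem_univ_val l)
      exact (mem_roots'.1 this).2
    constructor
    · have h0 : (0 : ℝ) ∈ (aztecDisc α β).roots := (mem_roots hne).2 hzero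
      rw [← hroots] at h0
      obtain ⟨l, -, hl⟩ := Multiset.mem_map.1 h0
      exact le_antisymm (hnonpos _ (hmem _)) (hl ▸ hs (Fin.mk_le_of_le_val (Nat.zero_le _)))
    · intro i j hi hj
      have hij : i ≠ j := fun h => by rw [h] at hj; omega
      refine lt_of_le_of_ne (hs (Fin.le_def.2 (by omega))) fun heq => ?_
      have hfac : aztecDisc α β = (X - C (s i)) ^ 2 *
          (C (aztecDisc α β).leadingCoeff *
            ∏ l ∈ (Finset.univ.erase i).erase j, (X - C (s l))) := by
        have hcard : (aztecDisc α β).roots.card = (aztecDisc α β).natDegree := by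
          rw [← hroots, hdeg]
          simp
        have h := C_leadingCoeff_mul_prod_multiset_X_sub_C hcard
        rw [← hroots, Multiset.map_map] at h
        conv_lhs => rw [← h]
        change _ * (∏ l, (X - C (s l))) = _
        rw [← Finset.mul_prod_erase Finset.univ _ (Finset.mem_univ i),
          ← Finset.mul_prod_erase (Finset.univ.erase i) _
            (Finset.mem_erase.2 ⟨hij.symm, Finset.mem_univ j⟩), heq]
        ring
      obtain ⟨d1, d2⟩ := X_sub_C_sq_mul_derivatives (s i)
        (C (aztecDisc α β).leadingCoeff * ∏ l ∈ (Finset.univ.erase i).erase j, (X - C (s l)))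
      rw [← hfac] at d1 d2
      have hlt := aztecDisc_second_derivative_neg hk hα hβ (hmem i) d1
      have hprod_nonneg := prod_sub_nonneg_of_antitone hs hi hj
      rw [d2, eval_mul, eval_C, eval_prod] at hlt
      simp only [eval_sub, eval_X, eval_C] at hlt
      have := mul_nonneg hlead.le hprod_nonneg
      linarith
  · by_contra! hmul
    obtain ⟨h, hh⟩ := (le_rootMultiplicity_iff hne).1 (show 3 ≤ _ from hmul)
    have hfac : aztecDisc α β = (X - C x) ^ 2 * ((X - C x) * h) := by
      rw [hh]
      ring
    obtain ⟨d1, d2⟩ := X_sub_C_sq_mul_derivatives x ((X - C x) * h)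
    rw [← hfac] at d1 d2
    have hlt := aztecDisc_second_derivative_neg hk hα hβ (by rw [hfac]; simp) d1
    rw [d2] at hlt
    simp at hlt
end

section
/- Let n ≥ 1 and let u, v ∈ ℝ[X] with deg u = n and deg v = n−1, such that all complex roots of u and of v are real and strictly less than 1. List the roots with multiplicity in nonincreasing order: s₁ ≥ s₂ ≥ ⋯ ≥ s_n for u and t₁ ≥ t₂ ≥ ⋯ ≥ t_{n−1} for v. Assume: (a) for every ℓ ∈ {1,…,n} and every real z < 1, the (n−ℓ)-th derivatives satisfy v^{(n−ℓ)}(z) < u^{(n−ℓ)}(z) if ℓ is even and u^{(n−ℓ)}(z) < v^{(n−ℓ)}(z) if ℓ is odd; (b) u^{(ℓ)}(1) > 0 and v^{(ℓ)}(1) > 0 for every ℓ ∈ {0,…,n−1}. Then: if n is odd, s_i > t_i for every odd i with 1 ≤ i ≤ n−1 and t_i > s_i for every even i with 1 ≤ i ≤ n−1 (giving the interlacing s₁ > t₁ ≥ t₂ > s₂ ≥ s₃ > t₃ ≥ t₄ > ⋯ > s_{n−1} ≥ s_n); if n is even, t_i > s_i for every odd i with 1 ≤ i ≤ n−1 and s_i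 > t_i for every even i with 1 ≤ i ≤ n−1 (giving t₁ > s₁ ≥ s₂ > t₂ ≥ t₃ > s₃ ≥ s₄ > ⋯ > s_{n−1} ≥ s_n). -/
open Polynomial

namespace Polynomial

/-- Rolle's theorem on an order-connected set `S`, counting roots with multiplicity: `p` has at most
one more root in `S` than its derivative. -/
theorem card_filter_roots_le_derivative (p : ℝ[X]) (S : Set ℝ) [DecidablePred (· ∈ S)]
    (hS : S.OrdConnected) :
    (p.roots.filter (· ∈ S)).card ≤ (p.derivative.roots.filter (· ∈ S)).card + 1 := by
  rcases eq_or_ne (derivative p) 0 with hp' | hp'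
  · rw [eq_C_of_derivative_eq_zero hp']
    simp
  have hp : p ≠ 0 := ne_of_apply_ne derivative (by rwa [derivative_zero])
  set A := p.roots.filter (· ∈ S) with hA
  set B := p.derivative.roots.filter (· ∈ S) with hB
  have hdistinct : A.toFinset.card ≤ (B.toFinset \ A.toFinset).card + 1 := by
    refine Finset.card_le_sdiff_of_interleaved fun x hx y hy hxy _ => ?_
    rw [Multiset.mem_toFinset, hA, Multiset.mem_filter, mem_roots hp] at hx hy
    obtain ⟨z, hz1, hz2⟩ := exists_deriv_eq_zero hxy p.continuousOn (hx.1.trans hy.1.symm)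
    refine ⟨z, ?_, hz1⟩
    rw [Multiset.mem_toFinset, hB, Multiset.mem_filter, mem_roots hp', IsRoot, ← p.deriv]
    exact ⟨hz2, hS.out hx.2 hy.2 ⟨hz1.1.le, hz1.2.le⟩⟩
  have hcount : ∀ x ∈ A.toFinset, A.count x ≤ B.count x + 1 := by
    intro x hx
    have hxS : x ∈ S := (Multiset.mem_filter.1 (Multiset.mem_toFinset.1 hx)).2
    rw [hA, hB, Multiset.count_filter_of_pos (p := (· ∈ S)) hxS,
      Multiset.count_filter_of_pos (p := (· ∈ S)) hxS,
      count_roots, count_roots]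
    exact Nat.sub_le_iff_le_add.1 (rootMultiplicity_sub_one_le_derivative_rootMultiplicity p x)
  have hnew : (B.toFinset \ A.toFinset).card ≤ ∑ x ∈ B.toFinset \ A.toFinset, B.count x := by
    rw [Finset.card_eq_sum_ones]
    refine Finset.sum_le_sum fun x hx => ?_
    exact Multiset.count_pos.2 (Multiset.mem_toFinset.1 (Finset.mem_sdiff.1 hx).1)
  have hsum : ∑ x ∈ A.toFinset, B.count x + ∑ x ∈ B.toFinset \ A.toFinset, B.count x
      = B.card := by
    rw [← Finset.sum_union Finset.disjoint_sdiff, Finset.union_sdiff_self_eq_union,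
      ← Multiset.toFinset_sum_count_eq, ← Finset.sum_subset Finset.subset_union_right]
    intro x _ hx
    simpa only [Multiset.mem_toFinset, Multiset.count_eq_zero] using hx
  have hle := Finset.sum_le_sum hcount
  rw [Multiset.toFinset_sum_count_eq, Finset.sum_add_distrib, ← Finset.card_eq_sum_ones] at hle
  omega

/-- The first `n` terms of `s` are nonincreasing and are the roots of `p`, with multiplicity. -/
structure IsRootSeq (p : ℝ[X]) (n : ℕ) (s : ℕ → ℝ) : Prop where
  le : ∀ {i j}, i ≤ j → j < n → s j ≤ s i
  map_eq : (Multiset.range n).map s = p.roots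

namespace IsRootSeq

variable {p q : ℝ[X]} {n m : ℕ} {s t : ℕ → ℝ}

theorem card_roots (h : IsRootSeq p n s) : p.roots.card = n := by
  rw [← h.map_eq]; simp

theorem card_filter_roots (h : IsRootSeq p n s) (P : ℝ → Prop) [DecidablePred P] :
    (p.roots.filter P).card = ((Finset.range n).filter fun i => P (s i)).card := by
  rw [← h.map_eq, Multiset.filter_map, Multiset.card_map]
  rfl

theorem exists_of_card_roots (h : p.roots.card = n) : ∃ s, IsRootSeq p n s := by
  have hlen : (p.roots.sort (· ≥ ·)).length = n := by rw [Multiset.length_sort, h]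
  refine ⟨fun i => (p.roots.sort (· ≥ ·)).getD i 0, fun {i j} hij hj => ?_, ?_⟩
  · have hsorted := p.roots.pairwise_sort (· ≥ ·)
    rw [List.getD_eq_getElem _ _ (by omega), List.getD_eq_getElem _ _ (by omega)]
    rcases hij.eq_or_lt with rfl | hlt
    · exact le_rfl
    · exact List.pairwise_iff_getElem.1 hsorted i j (by omega) (by omega) hlt
  · conv_rhs => rw [← p.roots.sort_eq (· ≥ ·)]
    rw [Multiset.range, Multiset.map_coe]
    congr 1
    refine List.ext_getElem (by simp [hlen]) fun i h₁ h₂ => ?_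
    rw [List.getElem_map, List.getElem_range, List.getD_eq_getElem]

theorem le_of_lt_card (h : IsRootSeq p n s) {i : ℕ} {x : ℝ}
    (hx : i < (p.roots.filter (· ∈ Set.Ici x)).card) : x ≤ s i := by
  by_contra! hlt
  rw [h.card_filter_roots] at hx
  have hsub : ((Finset.range n).filter fun j => s j ∈ Set.Ici x) ⊆ Finset.range i := by
    intro j hj
    simp only [Finset.mem_filter, Finset.mem_range, Set.mem_Ici] at hj ⊢
    by_contra! hij
    linarith [h.le hij hj.1]
  have := Finset.card_le_card hsub
  rw [Finset.card_range] at this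
  omega

theorem le_of_le_card (h : IsRootSeq p n s) {i : ℕ} (hi : i < n) {x : ℝ}
    (hx : n - i ≤ (p.roots.filter (· ∈ Set.Iic x)).card) : s i ≤ x := by
  by_contra! hlt
  rw [h.card_filter_roots] at hx
  have hsub : ((Finset.range n).filter fun j => s j ∈ Set.Iic x) ⊆ Finset.Ico (i + 1) n := by
    intro j hj
    simp only [Finset.mem_filter, Finset.mem_range, Set.mem_Iic, Finset.mem_Ico] at hj ⊢
    refine ⟨?_, hj.1⟩
    by_contra! hij
    linarith [h.le (Nat.lt_succ_iff.1 hij) hi]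
  have := Finset.card_le_card hsub
  rw [Nat.card_Ico] at this
  omega

theorem lt_card_filter_Ici (h : IsRootSeq p n s) {i : ℕ} (hi : i < n) :
    i < (p.roots.filter (· ∈ Set.Ici (s i))).card := by
  rw [h.card_filter_roots, Nat.lt_iff_add_one_le, ← Finset.card_range (i + 1)]
  refine Finset.card_le_card fun j hj => ?_
  simp only [Finset.mem_filter, Finset.mem_range, Set.mem_Ici] at hj ⊢
  exact ⟨by omega, h.le (by omega) hi⟩

theorem le_card_filter_Iic (h : IsRootSeq p n s) (i : ℕ) :
    n - i ≤ (p.roots.filter (· ∈ Set.Iic (s i))).card := by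
  rw [h.card_filter_roots, ← Nat.card_Ico]
  refine Finset.card_le_card fun j hj => ?_
  simp only [Finset.mem_filter, Finset.mem_range, Set.mem_Iic, Finset.mem_Ico] at hj ⊢
  exact ⟨hj.2, h.le hj.1 hj.2⟩

theorem derivative_le (h : IsRootSeq p (n + 1) s) (h' : IsRootSeq (derivative p) n t) {i : ℕ}
    (hi : i < n) : t i ≤ s i := by
  classical
  refine h'.le_of_le_card hi ?_
  have h₁ := h.le_card_filter_Iic i
  have h₂ := card_filter_roots_le_derivative p (Set.Iic (s i)) Set.ordConnected_Iic
  omega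

theorem le_derivative (h : IsRootSeq p (n + 1) s) (h' : IsRootSeq (derivative p) n t) {i : ℕ}
    (hi : i < n) : s (i + 1) ≤ t i := by
  classical
  refine h'.le_of_lt_card ?_
  have h₁ := h.lt_card_filter_Ici (i := i + 1) (by omega)
  have h₂ := card_filter_roots_le_derivative p (Set.Ici (s (i + 1))) Set.ordConnected_Ici
  omega

theorem exists_derivative (h : IsRootSeq p (n + 1) s) (hp : p.natDegree = n + 1) :
    ∃ t, IsRootSeq (derivative p) n t := by
  refine exists_of_card_roots (le_antisymm ?_ ?_)
  · exact (card_roots' _).trans (by simp [hp])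
  · have := card_roots_le_derivative p
    rw [h.card_roots] at this
    omega

theorem eval_eq (h : IsRootSeq p n s) (hp : p.natDegree = n) (x : ℝ) :
    p.eval x = p.leadingCoeff * ∏ i ∈ Finset.range n, (x - s i) := by
  conv_lhs => rw [← C_leadingCoeff_mul_prod_multiset_X_sub_C (h.card_roots.trans hp.symm)]
  rw [← h.map_eq, eval_mul, eval_C, eval_multiset_prod, Multiset.map_map, Multiset.map_map]
  simp [Finset.prod]

theorem eval_eq_zero (h : IsRootSeq p n s) (hp : p.natDegree = n) {i : ℕ} (hi : i < n) :
    p.eval (s i) = 0 := by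
  rw [h.eval_eq hp, Finset.prod_eq_zero (Finset.mem_range.2 hi) (sub_self _), mul_zero]

theorem neg_one_pow_mul_eval_nonneg (h : IsRootSeq p n s) (hp : p.natDegree = n)
    (hlc : 0 < p.leadingCoeff) {i : ℕ} (hi : i < n) {x : ℝ} (hx : s i ≤ x)
    (hx' : ∀ j, i = j + 1 → x ≤ s j) : 0 ≤ (-1) ^ i * p.eval x := by
  have hhead : (-1) ^ i * ∏ j ∈ Finset.range i, (x - s j) = ∏ j ∈ Finset.range i, (s j - x) := by
    simp_rw [← neg_sub x, neg_eq_neg_one_mul (x - _), Finset.prod_mul_distrib]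
    simp
  have hhead_nonneg : 0 ≤ ∏ j ∈ Finset.range i, (s j - x) := by
    refine Finset.prod_nonneg fun j hj => ?_
    rw [Finset.mem_range] at hj
    obtain ⟨k, rfl⟩ : ∃ k, i = k + 1 := ⟨i - 1, by omega⟩
    linarith [hx' k rfl, h.le (show j ≤ k by omega) (by omega)]
  have htail : 0 ≤ ∏ j ∈ Finset.Ico i n, (x - s j) := by
    refine Finset.prod_nonneg fun j hj => ?_
    rw [Finset.mem_Ico] at hj
    linarith [h.le hj.1 hj.2]
  rw [h.eval_eq hp, ← Finset.prod_range_mul_prod_Ico _ hi.le]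
  calc 0 ≤ p.leadingCoeff * ((∏ j ∈ Finset.range i, (s j - x)) * ∏ j ∈ Finset.Ico i n, (x - s j)) :=
        by positivity
    _ = _ := by rw [← hhead]; ring

theorem leadingCoeff_pos (h : IsRootSeq p n s) (hp : p.natDegree = n) {x : ℝ}
    (hx : ∀ i < n, s i < x) (hpos : 0 < p.eval x) : 0 < p.leadingCoeff := by
  rw [h.eval_eq hp] at hpos
  refine pos_of_mul_pos_left hpos (Finset.prod_nonneg fun i hi => ?_)
  linarith [hx i (Finset.mem_range.1 hi)]

/-- Suppose `p < q` on `(-∞, a)` and the `i`-th root of one of the polynomials (of `q` for even `i`,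
of `p` for odd `i`) does not exceed the preceding root of the other. Then it is less than the `i`-th
root of the other. -/
theorem lt_of_eval_lt (hP : IsRootSeq p n s) (hQ : IsRootSeq q m t) (hp : p.natDegree = n)
    (hq : q.natDegree = m) (hlp : 0 < p.leadingCoeff) (hlq : 0 < q.leadingCoeff) {a : ℝ}
    (hs : ∀ i < n, s i < a) (ht : ∀ i < m, t i < a) (hlt : ∀ z < a, p.eval z < q.eval z)
    {i : ℕ} (hin : i < n) (him : i < m)
    (hprev : ∀ j, i = j + 1 → if Even i then t i ≤ s j else s i ≤ t j) :
    if Even i then t i < s i else s i < t i := by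
  split_ifs with hi
  · by_contra! hle
    have hsign := hP.neg_one_pow_mul_eval_nonneg hp hlp hin hle
      fun j hj => by simpa [hi] using hprev j hj
    rw [hi.neg_one_pow] at hsign
    linarith [hlt _ (ht i him), hQ.eval_eq_zero hq him]
  · by_contra! hle
    have hsign := hQ.neg_one_pow_mul_eval_nonneg hq hlq him hle
      fun j hj => by simpa [hi] using hprev j hj
    rw [(Nat.not_even_iff_odd.1 hi).neg_one_pow] at hsign
    linarith [hlt _ (hs i hin), hP.eval_eq_zero hp hin]

theorem interlace_of_iterate_derivative_lt {a : ℝ} (n : ℕ) : ∀ {p q : ℝ[X]} {s t : ℕ → ℝ},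
    IsRootSeq p (n + 1) s → IsRootSeq q n t → p.natDegree = n + 1 → q.natDegree = n →
    0 < p.leadingCoeff → 0 < q.leadingCoeff → (∀ i < n + 1, s i < a) → (∀ i < n, t i < a) →
    (∀ k ≤ n, ∀ z < a, if Even (n + k) then
      (derivative^[k] p).eval z < (derivative^[k] q).eval z else
      (derivative^[k] q).eval z < (derivative^[k] p).eval z) →
    ∀ i < n, if Even (n + i) then t i < s i else s i < t i := by
  induction n with
  | zero => intros; omega
  | succ n ih =>
    intro p q s t hP hQ hp hq hlp hlq hs ht hlt i hi
    obtain ⟨s', hP'⟩ := hP.exists_derivative hp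
    obtain ⟨t', hQ'⟩ := hQ.exists_derivative hq
    have hlt' := ih hP' hQ' (by simp [hp]) (by simp [hq])
      (by rw [leadingCoeff_derivative, hp]; positivity)
      (by rw [leadingCoeff_derivative, hq]; positivity)
      (fun i hi => (hP.derivative_le hP' hi).trans_lt (hs i (by omega)))
      (fun i hi => (hQ.derivative_le hQ' hi).trans_lt (ht i (by omega)))
      (fun k hk z hz => by
        have := hlt (k + 1) (by omega) z hz
        simpa only [show Even (n + 1 + (k + 1)) ↔ Even (n + k) by grind,
          Function.iterate_succ_apply] using this)
    have hprev : ∀ j, i = j + 1 → if Even (n + 1 + i) then t i ≤ s j else s i ≤ t j := by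
      rintro j rfl
      have hj := hlt' j (by omega)
      simp only [show Even (n + 1 + (j + 1)) ↔ Even (n + j) by grind]
      split_ifs at hj ⊢
      · linarith [hQ.le_derivative hQ' (i := j) (by omega), hP.derivative_le hP' (i := j) (by omega)]
      · linarith [hP.le_derivative hP' (i := j) (by omega), hQ.derivative_le hQ' (i := j) (by omega)]
    have hlt₀ := hlt 0 (by omega)
    rcases Nat.even_or_odd (n + 1) with hn | hn
    · simp only [add_zero, hn, if_true, Function.iterate_zero, id_eq] at hlt₀
      simp only [Nat.even_add (m := n + 1), hn, true_iff] at hprev ⊢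
      exact hP.lt_of_eval_lt hQ hp hq hlp hlq hs ht hlt₀ (by omega) hi hprev
    · rw [← Nat.not_even_iff_odd] at hn
      simp only [add_zero, hn, if_false, Function.iterate_zero, id_eq] at hlt₀
      simp only [Nat.even_add (m := n + 1), hn, false_iff, ite_not] at hprev ⊢
      exact hQ.lt_of_eval_lt hP hq hp hlq hlp ht hs hlt₀ hi (by omega) hprev

theorem of_fin {s : Fin n → ℝ} (hs : Antitone s)
    (hroots : Multiset.map s Finset.univ.val = p.roots) :
    IsRootSeq p n fun i => if h : i < n then s ⟨i, h⟩ else 0 := by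
  refine ⟨fun {i j} hij hj => ?_, ?_⟩
  · simpa [hj, hij.trans_lt hj] using hs (show (⟨i, _⟩ : Fin n) ≤ ⟨j, hj⟩ from hij)
  · rw [← hroots, ← Finset.range_val, ← Nat.Iio_eq_range, ← Fin.map_valEmbedding_univ, Finset.map_val,
      Multiset.map_map]
    exact Multiset.map_congr rfl fun i _ => by simp

end IsRootSeq
end Polynomial

/-- interlacing lemma for two real-rooted polynomials `u` of degree `n` and
`v` of degree `n−1`, all of whose roots are `< 1`, whose iterated derivatives are ordered
on `(−∞,1)` with alternating strict inequalities, and whose derivatives are positive at `1`.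
Here `s` and `t` list the roots (with multiplicity) of `u` and `v` in nonincreasing order,
`0`-indexed, so the paper's `s_i` is `s ⟨i−1⟩`. -/
theorem stmt2 (n : ℕ) (hn : 1 ≤ n) (u v : Polynomial ℝ)
    (hu : u.natDegree = n) (hv : v.natDegree = n - 1)
    (huroots : ∀ z : ℂ, Polynomial.aeval z u = 0 → z.im = 0 ∧ z.re < 1)
    (hvroots : ∀ z : ℂ, Polynomial.aeval z v = 0 → z.im = 0 ∧ z.re < 1)
    (s : Fin n → ℝ) (hs : Antitone s)
    (hsroots : Multiset.map s Finset.univ.val = u.roots)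
    (t : Fin (n - 1) → ℝ) (ht : Antitone t)
    (htroots : Multiset.map t Finset.univ.val = v.roots)
    (hderiv : ∀ ℓ : ℕ, 1 ≤ ℓ → ℓ ≤ n → ∀ z : ℝ, z < 1 →
        if Even ℓ then
          (Polynomial.derivative^[n - ℓ] v).eval z < (Polynomial.derivative^[n - ℓ] u).eval z
        else
          (Polynomial.derivative^[n - ℓ] u).eval z < (Polynomial.derivative^[n - ℓ] v).eval z)
    (hpos : ∀ ℓ : ℕ, ℓ ≤ n - 1 →
        0 < (Polynomial.derivative^[ℓ] u).eval 1 ∧ 0 < (Polynomial.derivative^[ℓ] v).eval 1) :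
    ∀ i : ℕ, ∀ _h1 : 1 ≤ i, ∀ _h2 : i ≤ n - 1,
      (Odd n →
        (Odd i → t ⟨i - 1, by omega⟩ < s ⟨i - 1, by omega⟩) ∧
        (Even i → s ⟨i - 1, by omega⟩ < t ⟨i - 1, by omega⟩)) ∧
      (Even n →
        (Odd i → s ⟨i - 1, by omega⟩ < t ⟨i - 1, by omega⟩) ∧
        (Even i → t ⟨i - 1, by omega⟩ < s ⟨i - 1, by omega⟩)) := by
  intro i h1 h2
  obtain ⟨m, rfl⟩ : ∃ m, n = m + 1 := ⟨n - 1, by omega⟩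
  have hu_ne : u ≠ 0 := by
    rintro rfl
    simp at hu
  have hv_ne : v ≠ 0 := by
    rintro rfl
    simpa using (hpos 0 (by omega)).2
  have root_lt {p : ℝ[X]} (hp : p ≠ 0)
      (h : ∀ z : ℂ, Polynomial.aeval z p = 0 → z.im = 0 ∧ z.re < 1) {x : ℝ} (hx : x ∈ p.roots) :
      x < 1 := by
    have hx0 : Polynomial.aeval (x : ℂ) p = 0 := by
      rw [← Complex.coe_algebraMap, aeval_algebraMap_apply, coe_aeval_eq_eval,
        (mem_roots hp).1 hx, map_zero]
    simpa using (h x hx0).2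
  have hS := IsRootSeq.of_fin hs hsroots
  have hT := IsRootSeq.of_fin ht htroots
  have hs_lt : ∀ j : Fin (m + 1), s j < 1 := fun j =>
    root_lt hu_ne huroots (hsroots ▸ Multiset.mem_map_of_mem s (Finset.mem_univ j))
  have ht_lt : ∀ j : Fin (m + 1 - 1), t j < 1 := fun j =>
    root_lt hv_ne hvroots (htroots ▸ Multiset.mem_map_of_mem t (Finset.mem_univ j))
  have hS_lt : ∀ j < m + 1, (if h : j < m + 1 then s ⟨j, h⟩ else 0) < 1 := fun j hj => by
    simpa [hj] using hs_lt ⟨j, hj⟩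
  have hT_lt : ∀ j < m, (if h : j < m + 1 - 1 then t ⟨j, h⟩ else 0) < 1 := fun j hj => by
    simpa [hj] using ht_lt ⟨j, hj⟩
  have hmain := IsRootSeq.interlace_of_iterate_derivative_lt m hS hT hu hv
    (hS.leadingCoeff_pos hu hS_lt (hpos 0 (by omega)).1)
    (hT.leadingCoeff_pos hv hT_lt (hpos 0 (by omega)).2) hS_lt hT_lt
    (fun k hk z hz => by
      have h := hderiv (m + 1 - k) (by omega) (by omega) z hz
      rw [show m + 1 - (m + 1 - k) = k by omega] at h
      have hpar : Even (m + 1 - k) ↔ ¬ Even (m + k) := by grind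
      simpa only [hpar, ite_not] using h) (i - 1) (by omega)
  rw [dif_pos (show i - 1 < m + 1 by omega), dif_pos (show i - 1 < m + 1 - 1 by omega)] at hmain
  refine ⟨fun hn' => ⟨fun hi => ?_, fun hi => ?_⟩, fun hn' => ⟨fun hi => ?_, fun hi => ?_⟩⟩
  · rwa [if_pos (by grind)] at hmain
  · rwa [if_neg (by grind)] at hmain
  · rwa [if_neg (by grind)] at hmain
  · rwa [if_pos (by grind)] at hmain
end

section
/- The polynomial (X−1)·(Tr T)′ − k·Tr T ∈ ℝ[X] (which equals (z−1)^{k+1} Tr Φ′(z)) is divisible by q in ℝ[X]; the quotient R := ((X−1)(Tr T)′ − k·Tr T)/q has degree exactly k′−1; and R(x_ℓ) ≠ 0 for every root x_ℓ of p₀ (ℓ = 0,…,2(k′−1)). -/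
open Polynomial Matrix

/-- The matrix `aztecA a b` with polynomial entries. -/
noncomputable def aztecAPoly (a b : ℝ) : Matrix (Fin 2) (Fin 2) ℝ[X] :=
  !![X + C (a * b⁻¹), C (a + b); X * C (a⁻¹ + b⁻¹), X + C (b * a⁻¹)]

/-- The product of the polynomial matrices `aztecAPoly a b` over a list of pairs `(a, b)`. -/
noncomputable def aztecTPoly (l : List (ℝ × ℝ)) : Matrix (Fin 2) (Fin 2) ℝ[X] :=
  (l.map fun c => aztecAPoly c.1 c.2).prod

lemma aztecTPoly_cons (c : ℝ × ℝ) (l : List (ℝ × ℝ)) :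
    aztecTPoly (c :: l) = aztecAPoly c.1 c.2 * aztecTPoly l := by
  simp [aztecTPoly]

lemma aztecT_eq_map {k : ℕ} (α β : Fin k → ℝ) (z : ℂ) :
    aztecT α β z =
      (aeval z : ℝ[X] →ₐ[ℝ] ℂ).toRingHom.mapMatrix
        (aztecTPoly (List.ofFn fun m => (α m, β m))) := by
  rw [aztecT, aztecTPoly, map_list_prod, List.map_map, List.map_ofFn]
  congr 2
  funext m
  ext i j
  fin_cases i <;> fin_cases j <;> simp [aztecA, aztecAPoly]

lemma det_aztecTPoly (l : List (ℝ × ℝ)) (hl : ∀ c ∈ l, 0 < c.1 ∧ 0 < c.2) :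
    (aztecTPoly l).det = (X - 1) ^ (2 * l.length) := by
  induction l with
  | nil => simp [aztecTPoly]
  | cons c l ih =>
    obtain ⟨h1, h2⟩ := hl c (by simp)
    have hA : (aztecAPoly c.1 c.2).det = (X - 1) ^ 2 := by
      have e1 : (C (c.1 * c.2⁻¹) * C (c.2 * c.1⁻¹) : ℝ[X]) = 1 := by
        rw [← C_mul, ← C_1]; congr 1; field_simp
      have e2 : (C (c.1 + c.2) * C (c.1⁻¹ + c.2⁻¹) : ℝ[X])
          = C (c.1 * c.2⁻¹) + C (c.2 * c.1⁻¹) + 2 := by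
        rw [← C_mul, ← C_add, ← C_ofNat, ← C_add]; congr 1; field_simp; ring
      rw [aztecAPoly, det_fin_two_of]
      linear_combination e1 - X * e2
    rw [aztecTPoly_cons, det_mul, hA, ih fun d hd => hl d (by simp [hd]), List.length_cons]
    ring

lemma aztecTPoly_coeff_nonneg (l : List (ℝ × ℝ)) (hl : ∀ c ∈ l, 0 < c.1 ∧ 0 < c.2)
    (i j : Fin 2) (n : ℕ) : 0 ≤ (aztecTPoly l i j).coeff n := by
  induction l generalizing i j n with
  | nil =>
    rw [aztecTPoly, List.map_nil, List.prod_nil, one_apply]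
    split_ifs
    · rw [coeff_one]; split_ifs <;> norm_num
    · simp
  | cons c l ih =>
    obtain ⟨h1, h2⟩ := hl c (by simp)
    have ih := ih fun d hd => hl d (by simp [hd])
    have i0 := ih 0 j
    have i1 := ih 1 j
    have p1 : 0 ≤ c.1 * c.2⁻¹ := by positivity
    have p2 : 0 ≤ c.2 * c.1⁻¹ := by positivity
    have p3 : 0 ≤ c.1 + c.2 := by positivity
    have p4 : 0 ≤ c.1⁻¹ + c.2⁻¹ := by positivity
    have hX : ∀ f : ℝ[X], (∀ m, 0 ≤ f.coeff m) → 0 ≤ (X * f).coeff n := by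
      intro f hf
      cases n with
      | zero => simp
      | succ n => simpa using hf n
    rw [aztecTPoly_cons, mul_apply, Fin.sum_univ_two]
    fin_cases i
    · simp only [aztecAPoly, Fin.zero_eta, of_apply, cons_val_zero, cons_val_one, cons_val',
        cons_val_fin_one, add_mul, coeff_add, coeff_C_mul]
      have := hX _ i0
      have := mul_nonneg p1 (i0 n)
      have := mul_nonneg p3 (i1 n)
      linarith
    · simp only [aztecAPoly, Fin.mk_one, of_apply, cons_val_zero, cons_val_one, cons_val',
        cons_val_fin_one, add_mul, coeff_add, coeff_C_mul]
      have := hX _ i1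
      have := mul_nonneg p2 (i1 n)
      have : 0 ≤ (X * C (c.1⁻¹ + c.2⁻¹) * aztecTPoly l 0 j).coeff n := by
        rw [mul_assoc]
        exact hX _ fun m => by rw [coeff_C_mul]; exact mul_nonneg p4 (i0 m)
      linarith

lemma aztecTPoly_coeff_top (l : List (ℝ × ℝ)) :
    (aztecTPoly l 0 0).coeff l.length = 1 ∧ (aztecTPoly l 1 1).coeff l.length = 1 ∧
    (aztecTPoly l 0 1).coeff l.length = 0 ∧
    ∀ i j n, l.length < n → (aztecTPoly l i j).coeff n = 0 := by
  induction l with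
  | nil =>
    simp only [aztecTPoly, List.map_nil, List.prod_nil, List.length_nil]
    refine ⟨by simp, by simp, by simp, fun i j n hn => ?_⟩
    rw [one_apply]
    split_ifs
    · rw [coeff_one, if_neg hn.ne']
    · simp
  | cons c l ih =>
    obtain ⟨h00, h11, h01, hd⟩ := ih
    have h0 : ∀ j n, (aztecTPoly (c :: l) 0 j).coeff (n + 1) =
        (aztecTPoly l 0 j).coeff n + c.1 * c.2⁻¹ * (aztecTPoly l 0 j).coeff (n + 1)
          + (c.1 + c.2) * (aztecTPoly l 1 j).coeff (n + 1) := by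
      intro j n
      rw [aztecTPoly_cons, mul_apply, Fin.sum_univ_two]
      simp only [aztecAPoly, of_apply, cons_val_zero, cons_val_one, cons_val',
        cons_val_fin_one, add_mul _ _ (aztecTPoly l _ _), coeff_add, coeff_C_mul, coeff_X_mul]
    have h1 : ∀ j n, (aztecTPoly (c :: l) 1 j).coeff (n + 1) =
        (c.1⁻¹ + c.2⁻¹) * (aztecTPoly l 0 j).coeff n
          + ((aztecTPoly l 1 j).coeff n + c.2 * c.1⁻¹ * (aztecTPoly l 1 j).coeff (n + 1)) := by
      intro j n
      rw [aztecTPoly_cons, mul_apply, Fin.sum_univ_two]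
      simp only [aztecAPoly, of_apply, cons_val_zero, cons_val_one, cons_val', mul_assoc X,
        cons_val_fin_one, add_mul _ _ (aztecTPoly l _ _), coeff_add, coeff_C_mul, coeff_X_mul]
    rw [List.length_cons]
    refine ⟨?_, ?_, ?_, ?_⟩
    · rw [h0, h00, hd _ _ _ (Nat.lt_succ_self _), hd _ _ _ (Nat.lt_succ_self _)]; ring
    · rw [h1, h11, h01, hd _ _ _ (Nat.lt_succ_self _)]; ring
    · rw [h0, h01, hd _ _ _ (Nat.lt_succ_self _), hd _ _ _ (Nat.lt_succ_self _)]; ring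
    · intro i j n hn
      obtain ⟨n, rfl⟩ : ∃ m, n = m + 1 := ⟨n - 1, by omega⟩
      have e1 := fun i j => hd i j n (by omega)
      have e2 := fun i j => hd i j (n + 1) (by omega)
      fin_cases i
      · exact (h0 j n).trans (by simp [e1, e2])
      · exact (h1 j n).trans (by simp [e1, e2])

/-- The `i`-th coordinate of `M(x) w` for a polynomial matrix `M`. -/
noncomputable def evalMulVec (M : Matrix (Fin 2) (Fin 2) ℝ[X]) (x : ℝ) (w : Fin 2 → ℝ)
    (i : Fin 2) : ℝ :=
  (M i 0).eval x * w 0 + (M i 1).eval x * w 1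

/-- The determinant of the pair of vectors `(M(x) w, M'(x) w)`. -/
noncomputable def rotationForm (M : Matrix (Fin 2) (Fin 2) ℝ[X]) (x : ℝ) (w : Fin 2 → ℝ) : ℝ :=
  evalMulVec M x w 0 * evalMulVec (M.map derivative) x w 1 -
    evalMulVec M x w 1 * evalMulVec (M.map derivative) x w 0

lemma evalMulVec_aztecTPoly_cons (c : ℝ × ℝ) (l : List (ℝ × ℝ)) (x : ℝ) (w : Fin 2 → ℝ) :
    evalMulVec (aztecTPoly (c :: l)) x w 0 =
      (x + c.1 * c.2⁻¹) * evalMulVec (aztecTPoly l) x w 0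
        + (c.1 + c.2) * evalMulVec (aztecTPoly l) x w 1 ∧
    evalMulVec (aztecTPoly (c :: l)) x w 1 =
      x * (c.1⁻¹ + c.2⁻¹) * evalMulVec (aztecTPoly l) x w 0
        + (x + c.2 * c.1⁻¹) * evalMulVec (aztecTPoly l) x w 1 := by
  constructor <;>
  · simp only [evalMulVec, aztecTPoly_cons, mul_apply, Fin.sum_univ_two, aztecAPoly, of_apply,
      cons_val_zero, cons_val_one, cons_val', cons_val_fin_one, eval_add, eval_mul, eval_X, eval_C]
    ring

lemma rotationForm_aztecTPoly_cons (c : ℝ × ℝ) (l : List (ℝ × ℝ)) (hc : 0 < c.1 ∧ 0 < c.2)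
    (x : ℝ) (w : Fin 2 → ℝ) :
    rotationForm (aztecTPoly (c :: l)) x w =
      (c.1 + c.2) * (evalMulVec (aztecTPoly l) x w 1
        + evalMulVec (aztecTPoly l) x w 0 * c.2⁻¹) ^ 2
      + (x - 1) ^ 2 * rotationForm (aztecTPoly l) x w := by
  obtain ⟨h1, h2⟩ := hc
  obtain ⟨e0, e1⟩ := evalMulVec_aztecTPoly_cons c l x w
  have d0 : evalMulVec ((aztecTPoly (c :: l)).map derivative) x w 0 =
      evalMulVec (aztecTPoly l) x w 0
        + (x + c.1 * c.2⁻¹) * evalMulVec ((aztecTPoly l).map derivative) x w 0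
        + (c.1 + c.2) * evalMulVec ((aztecTPoly l).map derivative) x w 1 := by
    simp only [evalMulVec, aztecTPoly_cons, mul_apply, Fin.sum_univ_two, aztecAPoly, of_apply,
      cons_val_zero, cons_val_one, cons_val', cons_val_fin_one, map_apply, derivative_add,
      derivative_mul, derivative_X, derivative_C, eval_add, eval_mul, eval_X, eval_C, eval_one,
      eval_zero]
    ring
  have d1 : evalMulVec ((aztecTPoly (c :: l)).map derivative) x w 1 =
      (c.1⁻¹ + c.2⁻¹) * evalMulVec (aztecTPoly l) x w 0 + evalMulVec (aztecTPoly l) x w 1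
        + x * (c.1⁻¹ + c.2⁻¹) * evalMulVec ((aztecTPoly l).map derivative) x w 0
        + (x + c.2 * c.1⁻¹) * evalMulVec ((aztecTPoly l).map derivative) x w 1 := by
    simp only [evalMulVec, aztecTPoly_cons, mul_apply, Fin.sum_univ_two, aztecAPoly, of_apply,
      cons_val_zero, cons_val_one, cons_val', cons_val_fin_one, map_apply, derivative_add,
      derivative_mul, derivative_X, derivative_C, eval_add, eval_mul, eval_X, eval_C, eval_one,
      eval_zero]
    ring
  rw [rotationForm, e0, e1, d0, d1, rotationForm]
  field_simp
  ring

lemma rotationForm_aztecTPoly_nonneg (l : List (ℝ × ℝ)) (hl : ∀ c ∈ l, 0 < c.1 ∧ 0 < c.2)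
    (x : ℝ) (w : Fin 2 → ℝ) : 0 ≤ rotationForm (aztecTPoly l) x w := by
  induction l with
  | nil => simp [rotationForm, evalMulVec, aztecTPoly]
  | cons c l ih =>
    have hc := hl c (by simp)
    have ih := ih fun d hd => hl d (by simp [hd])
    rw [rotationForm_aztecTPoly_cons c l hc]
    have : 0 < c.1 + c.2 := add_pos hc.1 hc.2
    positivity

lemma rotationForm_aztecTPoly_ne_zero (c d : ℝ × ℝ) (l : List (ℝ × ℝ))
    (hl : ∀ e ∈ c :: d :: l, 0 < e.1 ∧ 0 < e.2) {x : ℝ} (hx : x ≠ 1) {w : Fin 2 → ℝ}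
    (hw : w ≠ 0) : rotationForm (aztecTPoly (c :: d :: l)) x w ≠ 0 := by
  intro h0
  have hc := hl c (by simp)
  have hd := hl d (by simp)
  have hl' : ∀ e ∈ d :: l, 0 < e.1 ∧ 0 < e.2 := fun e he => hl e (List.mem_cons_of_mem _ he)
  have hl'' : ∀ e ∈ l, 0 < e.1 ∧ 0 < e.2 := fun e he => hl' e (List.mem_cons_of_mem _ he)
  have hx2 : 0 < (x - 1) ^ 2 := by
    have := sub_ne_zero.2 hx
    positivity
  have n1 := rotationForm_aztecTPoly_nonneg (d :: l) hl' x w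
  have n2 := rotationForm_aztecTPoly_nonneg l hl'' x w
  have key : ∀ s u r y : ℝ, 0 < s → 0 ≤ r → 0 < y → s * u ^ 2 + y * r = 0 → u = 0 ∧ r = 0 := by
    intro s u r y hs hr hy h
    have a1 : 0 ≤ s * u ^ 2 := by positivity
    have a2 : 0 ≤ y * r := by positivity
    have a3 : s * u ^ 2 = 0 := by linarith
    have a4 : y * r = 0 := by linarith
    exact ⟨by simpa [hs.ne'] using a3, by simpa [hy.ne'] using a4⟩
  rw [rotationForm_aztecTPoly_cons c _ hc] at h0
  obtain ⟨u1, r1⟩ := key _ _ _ _ (add_pos hc.1 hc.2) n1 hx2 h0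
  rw [rotationForm_aztecTPoly_cons d _ hd] at r1
  obtain ⟨u2, -⟩ := key _ _ _ _ (add_pos hd.1 hd.2) n2 hx2 r1
  obtain ⟨e0, e1⟩ := evalMulVec_aztecTPoly_cons d l x w
  rw [e0, e1] at u1
  obtain ⟨a, b⟩ := c
  obtain ⟨a', b'⟩ := d
  simp only at hc hd u1 u2
  have hdet := congrArg (eval x) (det_aztecTPoly l hl'')
  rw [det_fin_two] at hdet
  simp only [eval_sub, eval_mul, eval_pow, eval_X, eval_one] at hdet
  have hdet0 : (x - 1) ^ (2 * l.length) ≠ 0 := pow_ne_zero _ (sub_ne_zero.2 hx)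
  set v0 := evalMulVec (aztecTPoly l) x w 0 with hv0
  set v1 := evalMulVec (aztecTPoly l) x w 1 with hv1
  have hv1' : v1 = -v0 * b'⁻¹ := by linarith
  rw [hv1'] at u1
  have hz : (x - 1) * v0 * (a'⁻¹ + b⁻¹) = 0 := by
    obtain ⟨_, _⟩ := hc
    obtain ⟨_, _⟩ := hd
    rw [← u1]
    field_simp
    ring
  have hpos : a'⁻¹ + b⁻¹ ≠ 0 := (add_pos (inv_pos.2 hd.1) (inv_pos.2 hc.2)).ne'
  have hv0z : v0 = 0 := by simpa [sub_ne_zero.2 hx, hpos] using hz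
  have hv1z : v1 = 0 := by simp [hv1', hv0z]
  rw [hv0, evalMulVec] at hv0z
  rw [hv1, evalMulVec] at hv1z
  rw [← hdet] at hdet0
  apply hw
  ext i
  fin_cases i
  · refine (mul_eq_zero.1 ?_).resolve_left hdet0
    simp only [Fin.zero_eta]
    linear_combination (aztecTPoly l 1 1).eval x * hv0z - (aztecTPoly l 0 1).eval x * hv1z
  · refine (mul_eq_zero.1 ?_).resolve_left hdet0
    simp only [Fin.mk_one]
    linear_combination (aztecTPoly l 0 0).eval x * hv1z - (aztecTPoly l 1 0).eval x * hv0z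

lemma X_sub_one_mul_derivative_pow (n : ℕ) :
    (X - 1) * derivative ((X - 1 : ℝ[X]) ^ n) = C (n : ℝ) * (X - 1) ^ n := by
  rw [derivative_pow]
  rcases n with _ | n
  · simp
  · rw [Nat.add_sub_cancel, pow_succ]
    simp only [derivative_sub, derivative_X, derivative_one]
    ring

/-- If `det M = (X - 1) ^ (2 k)` and the rotation form of `M` is definite at `x ≠ 1`, then
`(X - 1) (Tr M)' - k Tr M` has no multiple root at a point where the discriminant vanishes. -/
lemma derivative_ne_zero_of_rotationForm_ne_zero (M : Matrix (Fin 2) (Fin 2) ℝ[X]) (k : ℕ)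
    (hdet : M.det = (X - 1) ^ (2 * k)) {x : ℝ} (hx : x ≠ 1)
    (hM : ∀ w, w ≠ 0 → rotationForm M x w ≠ 0)
    (hdisc : M.trace.eval x ^ 2 = 4 * (x - 1) ^ (2 * k))
    (hS : ((X - 1) * derivative M.trace - C (k : ℝ) * M.trace).eval x = 0) :
    (derivative ((X - 1) * derivative M.trace - C (k : ℝ) * M.trace)).eval x ≠ 0 := by
  intro hS'
  rw [det_fin_two] at hdet
  rw [trace_fin_two] at hdisc hS hS'
  simp only [rotationForm, evalMulVec, map_apply] at hM
  generalize M 0 0 = a at *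
  generalize M 0 1 = b at *
  generalize M 1 0 = c at *
  generalize M 1 1 = d at *
  have hdet0 := congrArg (eval x) hdet
  have hdet1 : (X - 1) * (derivative a * d + a * derivative d - derivative b * c - b * derivative c)
      = C (2 * (k : ℝ)) * (a * d - b * c) := by
    have hpow := X_sub_one_mul_derivative_pow (2 * k)
    rw [← hdet] at hpow
    push_cast at hpow
    rw [← hpow]
    simp only [derivative_sub, derivative_mul]
    ring
  have h1 := congrArg (eval x) hdet1
  have h2 := congrArg (fun f => eval x (derivative f)) hdet1
  simp only [derivative_add, derivative_sub, derivative_mul, derivative_X, derivative_one,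
    derivative_C, eval_add, eval_sub, eval_mul, eval_pow, eval_X, eval_one,
    eval_C, eval_zero] at hdet0 h1 h2 hS hS' hdisc
  generalize eval x (derivative (derivative a)) = a2 at *
  generalize eval x (derivative (derivative b)) = b2 at *
  generalize eval x (derivative (derivative c)) = c2 at *
  generalize eval x (derivative (derivative d)) = d2 at *
  generalize eval x (derivative a) = a1 at *
  generalize eval x (derivative b) = b1 at *
  generalize eval x (derivative c) = c1 at *
  generalize eval x (derivative d) = d1 at *
  generalize eval x a = a0 at *
  generalize eval x b = b0 at *
  generalize eval x c = c0 at *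
  generalize eval x d = d0 at *
  have hy : x - 1 ≠ 0 := sub_ne_zero.2 hx
  have hlam : (x - 1) ^ (2 * k) ≠ 0 := pow_ne_zero _ hy
  rw [← hdet0] at hlam hdisc
  generalize x - 1 = y at *
  generalize (k : ℝ) = κ at *
  have hM' : ∀ w0 w1 : ℝ, (a0 * w0 + b0 * w1) * (c1 * w0 + d1 * w1)
      - (c0 * w0 + d0 * w1) * (a1 * w0 + b1 * w1) = 0 → w0 = 0 ∧ w1 = 0 := by
    intro w0 w1 h
    by_contra hne
    refine hM ![w0, w1] (fun h' => hne ⟨?_, ?_⟩) (by simpa using h)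
    · simpa using congrFun h' 0
    · simpa using congrFun h' 1
  obtain ⟨l, n, rfl, rfl⟩ : ∃ l n, a0 = l + n ∧ d0 = l - n :=
    ⟨(a0 + d0) / 2, (a0 - d0) / 2, by ring, by ring⟩
  have hn : n ^ 2 + b0 * c0 = 0 := by linear_combination hdisc / 4
  have hN : y * (b0 * c1 + c0 * b1 + n * (a1 - d1)) = 0 := by
    linear_combination l * hS - h1 + 2 * κ * hn
  have hb : b0 = 0 ∧ -n = 0 := by
    apply hM'
    apply mul_left_cancel₀ hy
    linear_combination l * b0 * hN + y * (-l * b1 - (b0 * a1 - n * b1)) * hn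
  have hc : n = 0 ∧ c0 = 0 := by
    apply hM'
    apply mul_left_cancel₀ hy
    linear_combination -l * c0 * hN + y * (l * c1 + (c1 * n + d1 * c0)) * hn
  obtain ⟨rfl, rfl⟩ := hc
  obtain ⟨rfl, -⟩ := hb
  have hl : l ≠ 0 := by
    rintro rfl
    simp at hlam
  have hD : (y * a1 - κ * l) * (y * d1 - κ * l) - y * b1 * (y * c1) = 0 := by
    linear_combination (y / 2) * h2 - (y * l / 2) * hS' - (κ * l / 2) * hS
  have hker : y * b1 = 0 ∧ -(y * a1 - κ * l) = 0 := by
    apply hM'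
    apply mul_left_cancel₀ hy
    linear_combination -l * (y * b1) * hD
  have hb1 : b1 = 0 := (mul_eq_zero.1 hker.1).resolve_left hy
  exact one_ne_zero (hM' 0 1 (by rw [hb1]; ring)).2

/-- If `t` has nonnegative coefficients, degree at most `k` and top coefficient `2`, then
`t ^ 2 - 4 (X - 1) ^ (2 k)` has degree `2 k - 1` and `(X - 1) t' - k t` has degree `k - 1`. -/
lemma natDegree_of_coeff_nonneg {k : ℕ} (hk : 1 ≤ k) (t : ℝ[X]) (h0 : ∀ n, 0 ≤ t.coeff n)
    (htop : t.coeff k = 2) (hd : ∀ n, k < n → t.coeff n = 0) :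
    (t ^ 2 - 4 * (X - 1) ^ (2 * k)).natDegree = 2 * k - 1 ∧
    ((X - 1) * derivative t - C (k : ℝ) * t).natDegree = k - 1 ∧
    (X - 1) * derivative t - C (k : ℝ) * t ≠ 0 := by
  obtain ⟨n, rfl⟩ : ∃ n, k = n + 1 := ⟨k - 1, by omega⟩
  obtain ⟨u, hu⟩ : ∃ u, t = u + 2 * (X - 1) ^ (n + 1) := ⟨t - 2 * (X - 1) ^ (n + 1), by ring⟩
  have hcoeff : ∀ m, ((X - 1 : ℝ[X]) ^ (n + 1)).coeff m
      = (-1) ^ (n + 1 - m) * ((n + 1).choose m : ℝ) := by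
    intro m
    rw [sub_eq_add_neg, ← C_1, ← C_neg, coeff_X_add_C_pow]
  have hut : ∀ m, u.coeff m = t.coeff m - 2 * ((X - 1 : ℝ[X]) ^ (n + 1)).coeff m := by
    intro m
    rw [hu, coeff_add, ← C_ofNat, coeff_C_mul]
    ring
  have hudeg : u.natDegree ≤ n := by
    rw [natDegree_le_iff_coeff_eq_zero]
    intro m hm
    rw [hut, hcoeff]
    rcases eq_or_lt_of_le (Nat.succ_le_of_lt hm) with rfl | h
    · simp [htop]
    · rw [hd m h, Nat.choose_eq_zero_of_lt h]
      simp
  have hun : 0 < u.coeff n := by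
    rw [hut, hcoeff]
    have := h0 n
    simp only [Nat.add_sub_cancel_left, pow_one, Nat.choose_succ_self_right]
    push_cast
    have : (0 : ℝ) ≤ n := n.cast_nonneg
    linarith
  have hudeg' : u.natDegree = n := natDegree_eq_of_le_of_coeff_ne_zero hudeg hun.ne'
  have hu0 : u ≠ 0 := by rintro rfl; simp at hun
  have hX : ((X - 1 : ℝ[X]) ^ (n + 1)).natDegree = n + 1 := by
    rw [← C_1, natDegree_pow, natDegree_X_sub_C, mul_one]
  have h4 : (u + C 4 * (X - 1) ^ (n + 1)).natDegree = n + 1 := by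
    have : (C 4 * (X - 1 : ℝ[X]) ^ (n + 1)).natDegree = n + 1 := by
      rw [natDegree_C_mul (by norm_num), hX]
    rw [natDegree_add_eq_right_of_natDegree_lt (by omega), this]
  have h40 : u + C 4 * (X - 1) ^ (n + 1) ≠ 0 := by
    intro h
    simp [h] at h4
  have hSu : (X - 1) * derivative t - C ((n + 1 : ℕ) : ℝ) * t
      = (X - 1) * derivative u - C ((n + 1 : ℕ) : ℝ) * u := by
    have h2 : derivative (2 : ℝ[X]) = 0 := derivative_ofNat 2
    have := X_sub_one_mul_derivative_pow (n + 1)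
    rw [hu, derivative_add, derivative_mul, h2]
    linear_combination 2 * this
  have hu1 : u.coeff (n + 1) = 0 := coeff_eq_zero_of_natDegree_lt (by omega)
  have hScoeff : ((X - 1) * derivative u - C ((n + 1 : ℕ) : ℝ) * u).coeff n = - u.coeff n := by
    rw [coeff_sub, coeff_C_mul, sub_mul, one_mul, coeff_sub]
    cases n with
    | zero => simp [coeff_derivative, hu1]
    | succ m =>
      rw [coeff_X_mul, coeff_derivative, coeff_derivative, hu1]
      push_cast
      ring
  have hSn : ((X - 1) * derivative u - C ((n + 1 : ℕ) : ℝ) * u).natDegree = n := by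
    refine natDegree_eq_of_le_of_coeff_ne_zero ?_ (by rw [hScoeff]; exact (neg_neg_of_pos hun).ne)
    rw [natDegree_le_iff_coeff_eq_zero]
    intro m hm
    obtain ⟨m, rfl⟩ : ∃ j, m = j + 1 := ⟨m - 1, by omega⟩
    rw [coeff_sub, coeff_C_mul, sub_mul, one_mul, coeff_sub, coeff_X_mul, coeff_derivative,
      coeff_derivative, coeff_eq_zero_of_natDegree_lt (show u.natDegree < m + 1 by omega),
      coeff_eq_zero_of_natDegree_lt (show u.natDegree < m + 1 + 1 by omega)]
    ring
  refine ⟨?_, ?_, ?_⟩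
  · have : t ^ 2 - 4 * (X - 1) ^ (2 * (n + 1)) = u * (u + C 4 * (X - 1) ^ (n + 1)) := by
      rw [hu, C_ofNat]
      ring
    rw [this, natDegree_mul hu0 h40, hudeg', h4]
    omega
  · rw [hSu, hSn]
    omega
  · rw [hSu]
    intro h
    rw [h, coeff_zero] at hScoeff
    linarith

/-- the polynomial `(X−1)·(Tr T)′ − k·Tr T` is divisible by `q`, the quotient
`R` has degree exactly `k′−1`, and `R` does not vanish at any root `x_ℓ` of `p₀`. -/
theorem stmt6 (k : ℕ) (hk : 1 ≤ k) (α β : Fin k → ℝ)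
    (hα : ∀ m, 0 < α m) (hβ : ∀ m, 0 < β m)
    (hprod : ∏ m, α m = ∏ m, β m)
    (trT p : Polynomial ℝ)
    (htr : ∀ z : ℂ, Polynomial.aeval z trT = Matrix.trace (aztecT α β z))
    (hp : ∀ z : ℂ, Polynomial.aeval z p
        = (Matrix.trace (aztecT α β z)) ^ 2 - 4 * (z - 1) ^ (2 * k))
    (k' : ℕ) (hk'1 : 1 ≤ k') (hk'k : k' ≤ k)
    (q p₀ : Polynomial ℝ) (hq : q.Monic) (hp₀sf : Squarefree p₀)
    (hp₀lead : 0 < p₀.leadingCoeff) (hfact : p = q ^ 2 * p₀)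
    (hp₀deg : p₀.natDegree = 2 * k' - 1)
    (x : Fin (2 * k' - 1) → ℝ) (hx0 : x ⟨0, by omega⟩ = 0) (hxanti : StrictAnti x)
    (hxroot : ∀ i, p₀.eval (x i) = 0) :
    q ∣ ((X - 1) * Polynomial.derivative trT - Polynomial.C (k : ℝ) * trT) ∧
    ∀ R : Polynomial ℝ,
      (X - 1) * Polynomial.derivative trT - Polynomial.C (k : ℝ) * trT = q * R →
      R.natDegree = k' - 1 ∧ ∀ ℓ : Fin (2 * k' - 1), R.eval (x ℓ) ≠ 0 := by
  set l := List.ofFn fun m => (α m, β m) with hl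
  have hlpos : ∀ c ∈ l, 0 < c.1 ∧ 0 < c.2 := by
    intro c hc
    obtain ⟨m, rfl⟩ := (List.mem_ofFn' _ _).1 hc
    exact ⟨hα m, hβ m⟩
  have hlen : l.length = k := by simp [hl]
  have htrace : ∀ z : ℂ, Matrix.trace (aztecT α β z) = aeval z (aztecTPoly l).trace := by
    intro z
    rw [aztecT_eq_map, trace_fin_two, trace_fin_two, map_add]
    rfl
  have hext : ∀ f g : ℝ[X], (∀ z : ℂ, aeval z f = aeval z g) → f = g := by
    intro f g h
    apply Polynomial.funext
    intro r
    have := h (r : ℂ)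
    rw [← Complex.coe_algebraMap, aeval_algebraMap_apply, aeval_algebraMap_apply] at this
    simpa using this
  have ht : trT = (aztecTPoly l).trace := hext _ _ fun z => (htr z).trans (htrace z)
  have hp' : p = trT ^ 2 - 4 * (X - 1) ^ (2 * k) := by
    apply hext
    intro z
    rw [hp z, ← htr z, ← C_ofNat]
    simp only [map_sub, map_mul, map_pow, aeval_X, map_one, map_ofNat]
  obtain ⟨c00, c11, -, cgt⟩ := aztecTPoly_coeff_top l
  rw [hlen] at c00 c11 cgt
  have hnn : ∀ n, 0 ≤ trT.coeff n := by
    intro n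
    rw [ht, trace_fin_two, coeff_add]
    exact add_nonneg (aztecTPoly_coeff_nonneg l hlpos _ _ _)
      (aztecTPoly_coeff_nonneg l hlpos _ _ _)
  have htop : trT.coeff k = 2 := by
    rw [ht, trace_fin_two, coeff_add, c00, c11]
    norm_num
  have hgt : ∀ n, k < n → trT.coeff n = 0 := by
    intro n hn
    rw [ht, trace_fin_two, coeff_add, cgt _ _ n hn, cgt _ _ n hn, add_zero]
  obtain ⟨hpdeg, hSdeg, hS0⟩ := natDegree_of_coeff_nonneg hk trT hnn htop hgt
  have ht1 : trT.eval 1 ≠ 0 := by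
    rw [eval_eq_sum_range]
    simp only [one_pow, mul_one]
    have hmem : k ∈ Finset.range (trT.natDegree + 1) := by
      rw [Finset.mem_range, Nat.lt_succ_iff]
      exact le_natDegree_of_ne_zero (by rw [htop]; norm_num)
    have := Finset.single_le_sum (fun i _ => hnn i) hmem
    rw [htop] at this
    linarith
  have hcop : IsCoprime trT q := by
    have h1 : IsCoprime trT (X - 1) := by
      refine ((irreducible_X_sub_C (1 : ℝ)).coprime_iff_not_dvd.2 ?_).symm
      rwa [dvd_iff_isRoot]
    have h2 : IsCoprime trT (C 4 * (X - 1) ^ (2 * k)) :=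
      (isCoprime_mul_unit_left_right (isUnit_C.2 (isUnit_iff_ne_zero.2 (by norm_num))) _ _).2
        h1.pow_right
    have h3 : IsCoprime trT p := by
      have := (h2.neg_right).add_mul_left_right trT
      rwa [show -(C 4 * (X - 1) ^ (2 * k)) + trT * trT = p by rw [hp', C_ofNat]; ring] at this
    exact h3.of_isCoprime_of_dvd_right (hfact ▸ Dvd.intro _ (by ring : q * (q * p₀) = _))
  set S := (X - 1) * derivative trT - C (k : ℝ) * trT with hS
  have hpS : (X - 1) * derivative p - C (2 * (k : ℝ)) * p = 2 * trT * S := by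
    have h2 : derivative (4 : ℝ[X]) = 0 := derivative_ofNat 4
    have := X_sub_one_mul_derivative_pow (2 * k)
    push_cast at this
    rw [hp', hS, derivative_sub, derivative_mul, h2, derivative_pow]
    simp only [Nat.cast_ofNat, C_ofNat, C_mul] at this ⊢
    linear_combination -4 * this
  have hqS : q * ((X - 1) * (2 * derivative q * p₀ + q * derivative p₀)
      - C (2 * (k : ℝ)) * q * p₀) = 2 * trT * S := by
    rw [← hpS, hfact, derivative_mul, derivative_pow]
    simp only [Nat.cast_ofNat, C_ofNat]
    ring
  refine ⟨?_, fun R hR => ?_⟩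
  · refine hcop.symm.dvd_of_dvd_mul_left (z := S) ?_
    have h2 : IsUnit (2 : ℝ[X]) := by
      rw [← C_ofNat]; exact isUnit_C.2 (isUnit_iff_ne_zero.2 (by norm_num))
    rw [← h2.dvd_mul_left, ← mul_assoc]
    exact Dvd.intro _ hqS
  have hq0 : q ≠ 0 := hq.ne_zero
  have hp₀0 : p₀ ≠ 0 := hp₀sf.ne_zero
  have hR0 : R ≠ 0 := by
    rintro rfl
    exact hS0 (by rw [hR, mul_zero])
  have hqdeg : q.natDegree + k' = k := by
    rw [← hp', hfact, natDegree_mul (pow_ne_zero _ hq0) hp₀0, natDegree_pow, hp₀deg] at hpdeg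
    omega
  refine ⟨?_, fun ℓ hRℓ => ?_⟩
  · rw [hR, natDegree_mul hq0 hR0] at hSdeg
    omega
  have hdisc : trT.eval (x ℓ) ^ 2 = 4 * (x ℓ - 1) ^ (2 * k) := by
    have := congrArg (eval (x ℓ)) (hp'.symm.trans hfact)
    simp only [eval_sub, eval_mul, eval_pow, eval_X, eval_one, eval_ofNat, hxroot ℓ] at this
    linarith
  have hx1 : x ℓ ≠ 1 := by
    intro h
    rw [h, sub_self, zero_pow (by omega), mul_zero] at hdisc
    exact ht1 (pow_eq_zero_iff two_ne_zero |>.1 hdisc)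
  have hRS : (X - 1) * (2 * derivative q * p₀ + q * derivative p₀)
      - C (2 * (k : ℝ)) * q * p₀ = 2 * trT * R := by
    apply mul_left_cancel₀ hq0
    rw [hqS, hR]
    ring
  have hp₀' : (derivative p₀).eval (x ℓ) ≠ 0 := by
    have hsep := PerfectField.separable_iff_squarefree.2 hp₀sf
    exact hsep.eval₂_derivative_ne_zero (RingHom.id ℝ) (hxroot ℓ)
  have hqx : q.eval (x ℓ) = 0 := by
    have := congrArg (eval (x ℓ)) hRS
    simp only [eval_add, eval_sub, eval_mul, eval_X, eval_one, hxroot ℓ, hRℓ, mul_zero, zero_add,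
      sub_zero] at this
    have h1 := (mul_eq_zero.1 this).resolve_left (sub_ne_zero.2 hx1)
    exact (mul_eq_zero.1 h1).resolve_right hp₀'
  obtain ⟨c, d, l', hcd⟩ : ∃ c d l', l = c :: d :: l' := by
    have h2 : 2 ≤ l.length := by
      have : q.natDegree ≠ 0 := fun h => by
        rw [hq.natDegree_eq_zero.1 h] at hqx
        simp at hqx
      omega
    match l, h2 with
    | c :: d :: l', _ => exact ⟨c, d, l', rfl⟩
  have hdet := det_aztecTPoly l hlpos
  rw [hlen] at hdet
  refine derivative_ne_zero_of_rotationForm_ne_zero (aztecTPoly l) k hdet hx1 ?_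
    (by rwa [← ht]) ?_ ?_
  · intro w hw
    rw [hcd] at hlpos ⊢
    exact rotationForm_aztecTPoly_ne_zero c d l' hlpos hx1 hw
  · rw [← ht, ← hS, hR, eval_mul, hqx, zero_mul]
  · rw [← ht, ← hS, hR, derivative_mul, eval_add, eval_mul, eval_mul, hqx, hRℓ, mul_zero,
      zero_mul, add_zero]
end

section
/- All complex roots of R are real and simple, R has no roots in [0,∞), and for each ℓ = 1,…,k′−1 the open interval I_ℓ = (x_{2ℓ}, x_{2ℓ−1}) contains exactly one root of R; since deg R = k′−1, the roots of R are exactly one in each gap I_ℓ and there are no other roots. -/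
open Polynomial Matrix

/-- A polynomial vanishing at `natDegree` many distinct points has exactly these roots. -/
lemma roots_eq_map_of_injective {K : Type*} [Field K] {P : K[X]} (hP : P ≠ 0) {n : ℕ}
    (hdeg : P.natDegree = n) (y : Fin n → K) (hy : Function.Injective y)
    (hroot : ∀ i, P.eval (y i) = 0) : P.roots = (Finset.univ.val.map y) := by
  have hnodup : (Finset.univ.val.map y).Nodup := Finset.univ.nodup.map hy
  refine (Multiset.eq_of_le_of_card_le ((Multiset.le_iff_subset hnodup).2 ?_) ?_).symm
  · intro a ha
    obtain ⟨i, -, rfl⟩ := Multiset.mem_map.1 ha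
    exact (mem_roots hP).2 (hroot i)
  · simpa [hdeg] using P.card_roots'

/-- A polynomial vanishing at `natDegree` many distinct points is the product of the
corresponding linear factors. -/
lemma eq_C_mul_prod_of_injective {K : Type*} [Field K] {P : K[X]} (hP : P ≠ 0) {n : ℕ}
    (hdeg : P.natDegree = n) (y : Fin n → K) (hy : Function.Injective y)
    (hroot : ∀ i, P.eval (y i) = 0) :
    P = C P.leadingCoeff * ∏ i, (X - C (y i)) := by
  have hroots := roots_eq_map_of_injective hP hdeg y hy hroot
  have h := C_leadingCoeff_mul_prod_multiset_X_sub_C (p := P) (by simp [hroots, hdeg])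
  rw [hroots, Multiset.map_map] at h
  exact h.symm

/-- The product `∏ (y - x i)` is positive if `y` lies below the first `2ℓ` members of the family
and above all the others. -/
lemma prod_sub_pos_of_even {n : ℕ} (x : Fin n → ℝ) (y : ℝ) (ℓ : ℕ) (hℓ : 2 * ℓ ≤ n)
    (hlt : ∀ i : Fin n, (i : ℕ) < 2 * ℓ → y < x i)
    (hgt : ∀ i : Fin n, ¬ (i : ℕ) < 2 * ℓ → x i < y) : 0 < ∏ i, (y - x i) := by
  rw [← Finset.prod_filter_mul_prod_filter_not Finset.univ (fun i : Fin n => (i : ℕ) < 2 * ℓ)]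
  refine mul_pos ?_ (Finset.prod_pos fun i hi => sub_pos.2 (hgt i (Finset.mem_filter.1 hi).2))
  have hcard : (Finset.univ.filter fun i : Fin n => (i : ℕ) < 2 * ℓ).card = 2 * ℓ := by
    simp [Fin.card_filter_val_lt, hℓ]
  have hneg : ∏ i ∈ Finset.univ.filter (fun i : Fin n => (i : ℕ) < 2 * ℓ), (y - x i)
      = ∏ i ∈ Finset.univ.filter (fun i : Fin n => (i : ℕ) < 2 * ℓ), (x i - y) := by
    rw [Finset.prod_congr rfl fun i _ => (neg_sub (x i) y).symm, Finset.prod_neg, hcard]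
    simp
  rw [hneg]
  exact Finset.prod_pos fun i hi => sub_pos.2 (hlt i (Finset.mem_filter.1 hi).2)

/-- Between two zeros of `p₀` to the left of `1`, with `p₀ ≥ 0` in between, the quotient `R`
has a root: Rolle's theorem for `t / (X - 1) ^ k` between two neighbouring zeros of the
discriminant. -/
lemma exists_root_of_discriminant_nonneg {k : ℕ} {t q p₀ R : ℝ[X]}
    (hfact : t ^ 2 - 4 * (X - 1) ^ (2 * k) = q ^ 2 * p₀) (hp : q ^ 2 * p₀ ≠ 0)
    (hR : (X - 1) * derivative t - C (k : ℝ) * t = q * R)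
    {a b : ℝ} (hab : a < b) (hb1 : b < 1) (ha : p₀.eval a = 0) (hb : p₀.eval b = 0)
    (hpos : ∀ y ∈ Set.Ioo a b, 0 ≤ p₀.eval y) : ∃ c ∈ Set.Ioo a b, R.eval c = 0 := by
  classical
  set p := q ^ 2 * p₀ with hpdef
  obtain ⟨b', hab', hb'b, hb', hmin⟩ : ∃ b', a < b' ∧ b' ≤ b ∧ p.eval b' = 0 ∧
      ∀ c ∈ Set.Ioo a b', p.eval c ≠ 0 := by
    set S := p.roots.toFinset.filter (a < ·) with hS
    have hmem : ∀ c, c ∈ S ↔ p.eval c = 0 ∧ a < c := fun c => by simp [hS, hp]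
    have hbS : b ∈ S := (hmem b).2 ⟨by simp [hpdef, hb], hab⟩
    have hm := (hmem _).1 (S.min'_mem ⟨b, hbS⟩)
    exact ⟨S.min' ⟨b, hbS⟩, hm.2, S.min'_le b hbS, hm.1, fun c hc hc0 =>
      absurd (S.min'_le c ((hmem c).2 ⟨hc0, hc.1⟩)) (not_le.2 hc.2)⟩
  set f : ℝ → ℝ := fun z => t.eval z / (z - 1) ^ k with hf
  have hne : ∀ z ∈ Set.Icc a b', z - 1 ≠ 0 := fun z hz => by linarith [hz.2]
  have hsq : ∀ z ∈ Set.Icc a b', f z ^ 2 - 4 = p.eval z / (z - 1) ^ (2 * k) := by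
    intro z hz
    have h0 := pow_ne_zero k (hne z hz)
    have h := congrArg (eval z) hfact
    simp only [eval_sub, eval_pow, eval_mul, eval_X, eval_one, eval_ofNat] at h
    rw [← h, hf, mul_comm 2 k, pow_mul]
    field_simp
  have hcont : ContinuousOn f (Set.Icc a b') :=
    t.continuous.continuousOn.div (by fun_prop) fun z hz => pow_ne_zero k (hne z hz)
  have hfa : f a ^ 2 = 4 := by
    have := hsq a ⟨le_rfl, hab'.le⟩
    rw [hpdef] at this
    simp only [eval_mul, ha, mul_zero, zero_div] at this
    linarith
  have hfb : f b' ^ 2 = 4 := by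
    have := hsq b' ⟨hab'.le, le_rfl⟩
    rw [hb', zero_div] at this
    linarith
  have hnz : ∀ z ∈ Set.Icc a b', f z ≠ 0 := by
    intro z hz h0
    rcases hz.1.eq_or_lt with rfl | haz
    · norm_num [h0] at hfa
    rcases hz.2.eq_or_lt with rfl | hzb
    · norm_num [h0] at hfb
    have h := hsq z hz
    have h1 : 0 ≤ p.eval z / (z - 1) ^ (2 * k) := by
      refine div_nonneg ?_ ((even_two_mul k).pow_nonneg _)
      rw [hpdef, eval_mul, eval_pow]
      exact mul_nonneg (sq_nonneg _) (hpos z ⟨haz, hzb.trans_le hb'b⟩)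
    rw [← h, h0] at h1
    norm_num at h1
  have heq : f a = f b' := by
    rcases sq_eq_sq_iff_eq_or_eq_neg.1 (hfa.trans hfb.symm) with h | h
    · exact h
    exfalso
    have h0 : (0 : ℝ) ∈ Set.uIcc (f a) (f b') := by
      rw [h, Set.mem_uIcc]
      rcases le_total 0 (f b') with h | h
      · left; constructor <;> linarith
      · right; constructor <;> linarith
    rw [← Set.uIcc_of_le hab'.le] at hcont
    obtain ⟨z, hz, hz0⟩ := intermediate_value_uIcc hcont h0
    rw [Set.uIcc_of_le hab'.le] at hz
    exact hnz z hz hz0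
  obtain ⟨c, hc, hc0⟩ := exists_hasDerivAt_eq_zero
    (f' := fun z => ((derivative t).eval z * (z - 1) ^ k - t.eval z * (k * (z - 1) ^ (k - 1) * 1))
      / ((z - 1) ^ k) ^ 2) hab' hcont heq fun z hz =>
      (t.hasDerivAt z).div (((hasDerivAt_id z).sub_const 1).pow k)
        (pow_ne_zero k (hne z (Set.Ioo_subset_Icc_self hz)))
  have hc1 := hne c (Set.Ioo_subset_Icc_self hc)
  have hnum := (div_eq_zero_iff.1 hc0).resolve_right (pow_ne_zero 2 (pow_ne_zero k hc1))
  have hqR : (c - 1) * (derivative t).eval c - k * t.eval c = q.eval c * R.eval c := by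
    simpa using congrArg (eval c) hR
  have hzero : q.eval c * R.eval c = 0 := by
    rw [← hqR]
    rcases k with _ | m
    · simp at hnum
      simp [hnum]
    · have : (c - 1) ^ m * ((c - 1) * (derivative t).eval c - (m + 1 : ℕ) * t.eval c) = 0 := by
        rw [← hnum, Nat.add_sub_cancel]
        ring
      exact (mul_eq_zero.1 this).resolve_left (pow_ne_zero m hc1)
  refine ⟨c, ⟨hc.1, hc.2.trans_le hb'b⟩, (mul_eq_zero.1 hzero).resolve_left fun hq0 => ?_⟩
  exact hmin c hc (by simp [hpdef, hq0])

/-- If the discriminant has odd degree, then `(X - 1) t' - k t` does not vanish. -/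
lemma ne_zero_of_odd_natDegree_discriminant {k : ℕ} {t p : ℝ[X]}
    (hp : t ^ 2 - 4 * (X - 1) ^ (2 * k) = p) (hodd : Odd p.natDegree) :
    (X - 1) * derivative t - C (k : ℝ) * t ≠ 0 := by
  intro h0
  have hder : (X - 1) * derivative p = C (2 * k : ℝ) * p := by
    have h1 : (X - 1 : ℝ[X]) * derivative ((X - 1) ^ (2 * k))
        = C (2 * k : ℝ) * (X - 1) ^ (2 * k) := by
      rcases k with _ | m
      · simp
      · rw [derivative_pow, show 2 * (m + 1) - 1 = 2 * m + 1 by omega]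
        simp
        ring
    rw [← hp, derivative_sub, derivative_pow, derivative_mul]
    simp only [derivative_ofNat, zero_mul, zero_add, C_mul] at *
    simp only [Nat.cast_ofNat, Nat.add_one_sub_one, pow_one, map_ofNat] at *
    linear_combination 2 * t * h0 - 4 * h1
  obtain ⟨n, hn⟩ := hodd
  have hc := congrArg (fun r => r.coeff (2 * n + 1)) hder
  simp only [sub_mul, one_mul, coeff_sub, coeff_X_mul, coeff_C_mul, coeff_derivative] at hc
  rw [coeff_eq_zero_of_natDegree_lt (by omega : p.natDegree < 2 * n + 1 + 1)] at hc
  have hlead : p.coeff (2 * n + 1) ≠ 0 := by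
    rw [← hn]
    refine leadingCoeff_ne_zero.2 ?_
    rintro rfl
    simp at hn
  have : ((2 * n : ℕ) + 1 : ℝ) = 2 * k := mul_left_cancel₀ hlead (by linear_combination hc)
  have : 2 * n + 1 = 2 * k := by exact_mod_cast this
  omega

/-- all roots of `R` are real and simple, none lie in `[0,∞)`, each gap
`I_ℓ = (x_{2ℓ}, x_{2ℓ−1})` (`ℓ = 1,…,k′−1`) contains exactly one root of `R`, and these
are all the roots. -/
theorem stmt7 (k : ℕ) (hk : 1 ≤ k) (α β : Fin k → ℝ)
    (hα : ∀ m, 0 < α m) (hβ : ∀ m, 0 < β m)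
    (hprod : ∏ m, α m = ∏ m, β m)
    (trT p : Polynomial ℝ)
    (htr : ∀ z : ℂ, Polynomial.aeval z trT = Matrix.trace (aztecT α β z))
    (hp : ∀ z : ℂ, Polynomial.aeval z p
        = (Matrix.trace (aztecT α β z)) ^ 2 - 4 * (z - 1) ^ (2 * k))
    (k' : ℕ) (hk'1 : 1 ≤ k') (hk'k : k' ≤ k)
    (q p₀ : Polynomial ℝ) (hq : q.Monic) (hp₀sf : Squarefree p₀)
    (hp₀lead : 0 < p₀.leadingCoeff) (hfact : p = q ^ 2 * p₀)
    (hp₀deg : p₀.natDegree = 2 * k' - 1)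
    (x : Fin (2 * k' - 1) → ℝ) (hx0 : x ⟨0, by omega⟩ = 0) (hxanti : StrictAnti x)
    (hxroot : ∀ i, p₀.eval (x i) = 0)
    (R : Polynomial ℝ)
    (hR : (X - 1) * Polynomial.derivative trT - Polynomial.C (k : ℝ) * trT = q * R)
    (hRdeg : R.natDegree = k' - 1) :
    (∀ z : ℂ, Polynomial.aeval z R = 0 → z.im = 0) ∧
    (∀ y : ℝ, R.rootMultiplicity y ≤ 1) ∧
    (∀ y : ℝ, 0 ≤ y → R.eval y ≠ 0) ∧
    (∀ ℓ : ℕ, ∀ _h1 : 1 ≤ ℓ, ∀ _h2 : ℓ ≤ k' - 1,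
      ∃! y : ℝ,
        y ∈ Set.Ioo (x ⟨2 * ℓ, by omega⟩) (x ⟨2 * ℓ - 1, by omega⟩) ∧ R.eval y = 0) ∧
    (∀ y : ℝ, R.eval y = 0 →
      ∃ ℓ : ℕ, ∃ _h1 : 1 ≤ ℓ, ∃ _h2 : ℓ ≤ k' - 1,
        y ∈ Set.Ioo (x ⟨2 * ℓ, by omega⟩) (x ⟨2 * ℓ - 1, by omega⟩)) := by
  have hdisc : trT ^ 2 - 4 * (X - 1) ^ (2 * k) = q ^ 2 * p₀ := by
    rw [← hfact]
    refine map_injective (algebraMap ℝ ℂ) (algebraMap ℝ ℂ).injective (funext fun z => ?_)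
    rw [eval_map_algebraMap, eval_map_algebraMap, hp z, ← htr z]
    simp only [map_sub, map_mul, map_pow, map_ofNat, map_one, aeval_X]
  have hp₀ne : p₀ ≠ 0 := leadingCoeff_ne_zero.1 hp₀lead.ne'
  have hpne : q ^ 2 * p₀ ≠ 0 := mul_ne_zero (pow_ne_zero 2 hq.ne_zero) hp₀ne
  have hRne : R ≠ 0 := by
    rintro rfl
    refine ne_zero_of_odd_natDegree_discriminant hdisc ?_ (hR.trans (mul_zero q))
    rw [natDegree_mul (pow_ne_zero 2 hq.ne_zero) hp₀ne, natDegree_pow, hp₀deg]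
    exact ⟨q.natDegree + (k' - 1), by omega⟩
  have hp₀eq := eq_C_mul_prod_of_injective hp₀ne hp₀deg x hxanti.injective hxroot
  have hxneg : ∀ i : Fin (2 * k' - 1), 0 < (i : ℕ) → x i < 0 := fun i hi =>
    hx0 ▸ hxanti (Fin.mk_lt_of_lt_val hi)
  have hgap : ∀ i : Fin (k' - 1), ∃ c ∈ Set.Ioo (x ⟨2 * (i + 1), by omega⟩)
      (x ⟨2 * (i + 1) - 1, by omega⟩), R.eval c = 0 := by
    intro i
    refine exists_root_of_discriminant_nonneg hdisc hpne hR
      (hxanti (Fin.mk_lt_mk.2 (by omega)))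
      ((hxneg _ (show 0 < 2 * ((i : ℕ) + 1) - 1 by omega)).trans one_pos)
      (hxroot _) (hxroot _) fun y hy => ?_
    rw [hp₀eq, eval_mul, eval_C, eval_prod]
    simp only [eval_sub, eval_X, eval_C]
    refine (mul_pos hp₀lead (prod_sub_pos_of_even x y (i + 1) (by omega) ?_ ?_)).le
    · exact fun j hj => hy.2.trans_le (hxanti.antitone (Fin.mk_le_mk.2 (by omega)))
    · exact fun j hj => (hxanti.antitone (Fin.mk_le_mk.2 (by omega))).trans_lt hy.1
  choose y hy hyroot using hgap
  have hyanti : StrictAnti y := fun i j hij =>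
    (hy j).2.trans ((hxanti (Fin.mk_lt_mk.2 (by
      have : (i : ℕ) < j := hij
      omega))).trans (hy i).1)
  have hroots := roots_eq_map_of_injective hRne hRdeg y hyanti.injective hyroot
  have hReq := eq_C_mul_prod_of_injective hRne hRdeg y hyanti.injective hyroot
  have hmem : ∀ c : ℝ, R.eval c = 0 → ∃ i, y i = c := by
    intro c hc
    have : c ∈ R.roots := (mem_roots hRne).2 hc
    rw [hroots] at this
    obtain ⟨i, -, hi⟩ := Multiset.mem_map.1 this
    exact ⟨i, hi⟩
  refine ⟨fun z hz => ?_, fun c => ?_, fun c hc hc0 => ?_, fun ℓ h1 h2 => ?_, fun c hc => ?_⟩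
  · rw [hReq, map_mul, aeval_C, map_prod, mul_eq_zero] at hz
    have hz := hz.resolve_left (by simpa using hRne)
    obtain ⟨i, -, hi⟩ := Finset.prod_eq_zero_iff.1 hz
    simp only [map_sub, aeval_X, aeval_C] at hi
    rw [sub_eq_zero.1 hi]
    simp
  · rw [← count_roots, hroots]
    exact Multiset.nodup_iff_count_le_one.1 (Finset.univ.nodup.map hyanti.injective) c
  · obtain ⟨i, rfl⟩ := hmem c hc0
    exact absurd ((hy i).2.trans (hxneg _ (show 0 < 2 * ((i : ℕ) + 1) - 1 by omega)))
      (not_lt.2 hc)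
  · obtain ⟨m, rfl⟩ : ∃ m, ℓ = m + 1 := ⟨ℓ - 1, by omega⟩
    refine ⟨y ⟨m, by omega⟩, ⟨hy ⟨m, by omega⟩, hyroot _⟩, ?_⟩
    rintro c ⟨hc, hc0⟩
    obtain ⟨j, rfl⟩ := hmem c hc0
    have hlt := hxanti.lt_iff_gt.1 (hc.1.trans (hy j).2)
    have hgt := hxanti.lt_iff_gt.1 ((hy j).1.trans hc.2)
    simp only [Fin.mk_lt_mk] at hlt hgt
    exact congrArg y (Fin.ext (by simp only; omega))
  · obtain ⟨i, rfl⟩ := hmem c hc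
    exact ⟨i + 1, by omega, by omega, hy i⟩
end

section
/- Let z ∈ ℂ with Im z > 0. Then there exist nonzero z₀, z̃₀ ∈ ℂ such that the vectors (1, z₀) and (1, z̃₀) are eigenvectors of T(z), with 0 ≤ arg z₀ ≤ arg z and 0 ≤ arg(−z̃₀) ≤ arg z. In particular z₀ ≠ z̃₀, so T(z) has two linearly independent eigenvectors (is diagonalizable) and T(z) is not a scalar multiple of the identity. -/
open Polynomial Matrix

open ComplexConjugate

/-- The indefinite Hermitian form `Re (conj x * y * conj u)` at the vector `(x, y)`. -/
noncomputable def halfPlaneForm (u x y : ℂ) : ℝ := (conj x * y * conj u).re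

/-- The vector `(x, y)` satisfies `y / x ∈ {s + t z | 0 ≤ s, t}`, written without division. -/
def InSector (z x y : ℂ) : Prop := 0 ≤ (conj x * y).im ∧ 0 ≤ (x * conj y * z).im

/-- The matrix `M` maps the closed half-plane cone of `u` into its interior and preserves
the sector cone of `u ^ 2`. -/
structure PreservesCones (u : ℂ) (M : Matrix (Fin 2) (Fin 2) ℂ) : Prop where
  form_pos : ∀ x y : ℂ, (x ≠ 0 ∨ y ≠ 0) → 0 ≤ halfPlaneForm u x y →
    0 < halfPlaneForm u (M 0 0 * x + M 0 1 * y) (M 1 0 * x + M 1 1 * y)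
  sector : ∀ x y : ℂ, InSector (u ^ 2) x y →
    InSector (u ^ 2) (M 0 0 * x + M 0 1 * y) (M 1 0 * x + M 1 1 * y)

/-- Exchange of the diagonal entries, that is, the adjugate conjugated by `diag (1, -1)`. -/
def diagSwap (M : Matrix (Fin 2) (Fin 2) ℂ) : Matrix (Fin 2) (Fin 2) ℂ :=
  !![M 1 1, M 0 1; M 1 0, M 0 0]

theorem diagSwap_mul (M N : Matrix (Fin 2) (Fin 2) ℂ) :
    diagSwap (M * N) = diagSwap N * diagSwap M := by
  ext i j
  fin_cases i <;> fin_cases j <;> simp [diagSwap, Matrix.mul_apply, Fin.sum_univ_two] <;> ring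

theorem halfPlaneForm_mul (u c x y : ℂ) :
    halfPlaneForm u (c * x) (c * y) = Complex.normSq c * halfPlaneForm u x y := by
  simp only [halfPlaneForm, Complex.normSq_apply, Complex.mul_re, Complex.mul_im,
    Complex.conj_re, Complex.conj_im]
  ring

theorem inSector_mul_iff {z c : ℂ} (hc : c ≠ 0) (x y : ℂ) :
    InSector z (c * x) (c * y) ↔ InSector z x y := by
  have hn : 0 < Complex.normSq c := Complex.normSq_pos.2 hc
  have h1 : (conj (c * x) * (c * y)).im = Complex.normSq c * (conj x * y).im := by
    simp only [Complex.normSq_apply, Complex.mul_re, Complex.mul_im,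
      Complex.conj_re, Complex.conj_im]
    ring
  have h2 : (c * x * conj (c * y) * z).im = Complex.normSq c * (x * conj y * z).im := by
    simp only [Complex.normSq_apply, Complex.mul_re, Complex.mul_im,
      Complex.conj_re, Complex.conj_im]
    ring
  simp only [InSector, h1, h2, mul_nonneg_iff_of_pos_left hn]

theorem PreservesCones.mul {u : ℂ} {M N : Matrix (Fin 2) (Fin 2) ℂ}
    (hM : PreservesCones u M) (hN : PreservesCones u N) : PreservesCones u (M * N) := by
  have key : ∀ i (x y : ℂ), (M * N) i 0 * x + (M * N) i 1 * y =
      M i 0 * (N 0 0 * x + N 0 1 * y) + M i 1 * (N 1 0 * x + N 1 1 * y) := by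
    intro i x y
    simp only [Matrix.mul_apply, Fin.sum_univ_two]
    ring
  refine ⟨fun x y hxy h => ?_, fun x y h => ?_⟩
  · rw [key, key]
    have h' := hN.form_pos x y hxy h
    refine hM.form_pos _ _ ?_ h'.le
    by_contra! h0
    simp [h0.1, halfPlaneForm] at h'
  · rw [key, key]
    exact hM.sector _ _ (hN.sector x y h)

theorem preservesCones_of_pos {u : ℂ} (hu : 0 < u.re) (hz : 0 < (u ^ 2).im) {p q r s : ℝ}
    (hp : 0 < p) (hq : 0 < q) (hr : 0 < r) (hs : 0 < s) :
    PreservesCones u !![(p : ℂ), q; r * u ^ 2, s] := by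
  refine ⟨fun x y hxy h => ?_, fun x y h => ⟨?_, ?_⟩⟩
  · have hN : 0 < Complex.normSq u := Complex.normSq_pos.2 (by rintro rfl; simp at hu)
    have e : halfPlaneForm u (p * x + q * y) (r * u ^ 2 * x + s * y) =
        p * r * Complex.normSq u * u.re * Complex.normSq x + q * s * u.re * Complex.normSq y
          + (p * s + q * r * Complex.normSq u) * halfPlaneForm u x y := by
      simp only [halfPlaneForm, Complex.normSq_apply, pow_two, Complex.mul_re, Complex.mul_im,
        Complex.conj_re, Complex.conj_im, Complex.add_re, Complex.add_im, Complex.ofReal_re,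
        Complex.ofReal_im]
      ring
    simp only [Matrix.of_apply, Matrix.cons_val', Matrix.cons_val_zero, Matrix.cons_val_one,
      Matrix.cons_val_fin_one]
    rw [e]
    have hx0 := Complex.normSq_nonneg x
    have hy0 := Complex.normSq_nonneg y
    rcases hxy with hx | hy
    · have := Complex.normSq_pos.2 hx
      positivity
    · have := Complex.normSq_pos.2 hy
      positivity
  · have e : (conj (p * x + q * y) * (r * u ^ 2 * x + s * y)).im =
        p * r * Complex.normSq x * (u ^ 2).im + p * s * (conj x * y).im
          + q * r * (x * conj y * u ^ 2).im + q * s * (conj y * y).im := by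
      generalize u ^ 2 = z
      simp only [Complex.normSq_apply, Complex.mul_re, Complex.mul_im,
        Complex.conj_re, Complex.conj_im, Complex.add_re, Complex.add_im, Complex.ofReal_re,
        Complex.ofReal_im, map_add, map_mul]
      ring
    have hy : (conj y * y).im = 0 := by
      simp only [Complex.mul_im, Complex.conj_re, Complex.conj_im]
      ring
    simp only [Matrix.of_apply, Matrix.cons_val', Matrix.cons_val_zero, Matrix.cons_val_one,
      Matrix.cons_val_fin_one]
    rw [e, hy]
    have := h.1
    have := h.2
    have := Complex.normSq_nonneg x
    positivity
  · have e : ((p * x + q * y) * conj (r * u ^ 2 * x + s * y) * u ^ 2).im =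
        q * s * Complex.normSq y * (u ^ 2).im + p * s * (x * conj y * u ^ 2).im
          + q * r * Complex.normSq (u ^ 2) * (conj x * y).im := by
      generalize u ^ 2 = z
      simp only [Complex.normSq_apply, Complex.mul_re, Complex.mul_im,
        Complex.conj_re, Complex.conj_im, Complex.add_re, Complex.add_im, Complex.ofReal_re,
        Complex.ofReal_im, map_add, map_mul]
      ring
    simp only [Matrix.of_apply, Matrix.cons_val', Matrix.cons_val_zero, Matrix.cons_val_one,
      Matrix.cons_val_fin_one]
    rw [e]
    have := h.1
    have := h.2
    have := Complex.normSq_nonneg y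
    have := Complex.normSq_nonneg (u ^ 2)
    positivity

theorem aztecA_eq_mul {a b : ℝ} (ha : a ≠ 0) (hb : b ≠ 0) (z : ℂ) :
    aztecA a b z = !![((1 : ℝ) : ℂ), (a : ℝ); (a⁻¹ : ℝ) * z, (1 : ℝ)] *
      !![((a / b : ℝ) : ℂ), (a : ℝ); (a⁻¹ : ℝ) * z, (b / a : ℝ)] := by
  have ha' : (a : ℂ) ≠ 0 := by exact_mod_cast ha
  have hb' : (b : ℂ) ≠ 0 := by exact_mod_cast hb
  ext i j
  fin_cases i <;> fin_cases j <;>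
    simp [aztecA, Matrix.mul_apply, Fin.sum_univ_two] <;> field_simp <;> ring

theorem preservesCones_aztecA {u : ℂ} (hu : 0 < u.re) (hz : 0 < (u ^ 2).im) {a b : ℝ}
    (ha : 0 < a) (hb : 0 < b) :
    PreservesCones u (aztecA a b (u ^ 2)) ∧ PreservesCones u (diagSwap (aztecA a b (u ^ 2))) := by
  rw [aztecA_eq_mul ha.ne' hb.ne', diagSwap_mul]
  have hab : 0 < a / b := by positivity
  have hba : 0 < b / a := by positivity
  have hai : 0 < a⁻¹ := by positivity
  exact ⟨(preservesCones_of_pos hu hz one_pos ha hai one_pos).mul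
      (preservesCones_of_pos hu hz hab ha hai hba),
    (preservesCones_of_pos hu hz hba ha hai hab).mul
      (preservesCones_of_pos hu hz one_pos ha hai one_pos)⟩

theorem preservesCones_list_prod {u : ℂ} (l : List (Matrix (Fin 2) (Fin 2) ℂ)) (hl : l ≠ [])
    (h : ∀ M ∈ l, PreservesCones u M ∧ PreservesCones u (diagSwap M)) :
    PreservesCones u l.prod ∧ PreservesCones u (diagSwap l.prod) := by
  induction l with
  | nil => exact absurd rfl hl
  | cons M l ih =>
    have hM := h M (by simp)
    rcases eq_or_ne l [] with rfl | hl'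
    · simpa using hM
    · have hP := ih hl' fun N hN => h N (by simp [hN])
      rw [List.prod_cons, diagSwap_mul]
      exact ⟨hM.1.mul hP.1, hP.2.mul hM.2⟩

theorem exists_le_norm_and_norm_add_le (d : ℂ) {n : ℝ} (hn : 0 ≤ n) :
    ∃ a : ℂ, n ≤ ‖a‖ ∧ ‖a + d‖ ≤ n := by
  rcases le_or_gt n ‖d‖ with h | h
  · exact ⟨-d, by simpa using h, by simpa using hn⟩
  rcases eq_or_ne d 0 with rfl | hd
  · exact ⟨n, by simp [abs_of_nonneg hn], by simp [abs_of_nonneg hn]⟩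
  have hd' : 0 < ‖d‖ := norm_pos_iff.2 hd
  refine ⟨((-(n / ‖d‖) : ℝ) : ℂ) * d, ?_, ?_⟩
  · rw [norm_mul, Complex.norm_real, norm_neg, Real.norm_of_nonneg (by positivity),
      div_mul_cancel₀ _ hd'.ne']
  · have e : ((-(n / ‖d‖) : ℝ) : ℂ) * d + d = ((1 - n / ‖d‖ : ℝ) : ℂ) * d := by
      push_cast
      ring
    have h1 : 1 ≤ n / ‖d‖ := (one_le_div hd').2 h.le
    rw [e, norm_mul, Complex.norm_real, Real.norm_of_nonpos (by linarith), neg_sub, sub_mul,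
      div_mul_cancel₀ _ hd'.ne']
    linarith

/-- A Schwarz–Pick bound: the eigenvalue of an eigenvector in the half-plane dominates. -/
theorem norm_eigenvalue_lt {u : ℂ} {M : Matrix (Fin 2) (Fin 2) ℂ} (hM : PreservesCones u M)
    {w w' : ℂ} (hs : M 1 1 = M 0 0 + M 0 1 * (w + w')) (hr : M 1 0 = -(M 0 1 * w * w'))
    (hw : 0 < halfPlaneForm u 1 w) :
    ‖M 0 0 + M 0 1 * w'‖ < ‖M 0 0 + M 0 1 * w‖ := by
  obtain ⟨hform, -⟩ := hM
  rw [hs, hr] at hform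
  generalize M 0 0 = p at *
  generalize M 0 1 = q at *
  set c := p * conj u - q * (conj w * u) - (p + q * w') * conj u with hc
  have hJ : ∀ a b : ℂ, halfPlaneForm u (a + b * conj u) (a * w - b * (conj w * u)) =
      (‖a‖ ^ 2 - ‖u‖ ^ 2 * ‖b‖ ^ 2) * halfPlaneForm u 1 w := by
    intro a b
    simp only [halfPlaneForm, ← Complex.normSq_eq_norm_sq, Complex.normSq_apply, Complex.mul_re,
      Complex.mul_im, Complex.conj_re, Complex.conj_im, Complex.add_re, Complex.add_im,
      Complex.sub_re, Complex.sub_im, Complex.one_re, Complex.one_im]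
    ring
  have key : ∀ a b : ℂ, (a + b * conj u ≠ 0 ∨ a * w - b * (conj w * u) ≠ 0) →
      ‖u‖ ^ 2 * ‖b‖ ^ 2 ≤ ‖a‖ ^ 2 →
      ‖u‖ ^ 2 * ‖(p + q * w') * b‖ ^ 2 < ‖(p + q * w) * a + c * b‖ ^ 2 := by
    intro a b h0 hab
    have h1 := hform _ _ h0 (by rw [hJ]; exact mul_nonneg (by linarith) hw.le)
    have e1 : p * (a + b * conj u) + q * (a * w - b * (conj w * u)) =
        ((p + q * w) * a + c * b) + ((p + q * w') * b) * conj u := by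
      rw [hc]; ring
    have e2 : -(q * w * w') * (a + b * conj u) + (p + q * (w + w')) * (a * w - b * (conj w * u)) =
        ((p + q * w) * a + c * b) * w - ((p + q * w') * b) * (conj w * u) := by
      rw [hc]; ring
    rw [e1, e2, hJ] at h1
    linarith [pos_of_mul_pos_left h1 hw.le]
  have hμ : 0 < ‖p + q * w‖ := by
    have h := key 1 0 (by simp) (by simp)
    rw [norm_pos_iff]
    intro h0
    simp [h0] at h
  have hμ0 : p + q * w ≠ 0 := norm_pos_iff.1 hμ
  obtain ⟨a, ha, ha'⟩ := exists_le_norm_and_norm_add_le (c / (p + q * w)) (norm_nonneg u)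
  have hne : a + 1 * conj u ≠ 0 ∨ a * w - 1 * (conj w * u) ≠ 0 := by
    by_contra! h0
    have h1 : a = -conj u := by linear_combination h0.1
    have h2 : conj u * w + conj w * u = 0 := by
      have := h0.2
      rw [h1] at this
      linear_combination -this
    have h3 := congrArg Complex.re h2
    simp [halfPlaneForm] at h3 hw
    linarith
  have h := key a 1 hne (by simpa using pow_le_pow_left₀ (norm_nonneg u) ha 2)
  by_contra! hlt
  have e : (p + q * w) * a + c * 1 = (p + q * w) * (a + c / (p + q * w)) := by
    field_simp
  rw [mul_one, e, norm_mul, ← mul_pow] at h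
  have : ‖p + q * w‖ * ‖a + c / (p + q * w)‖ ≤ ‖u‖ * ‖p + q * w'‖ := by
    rw [mul_comm ‖u‖]
    exact mul_le_mul hlt ha' (norm_nonneg _) (norm_nonneg _)
  exact absurd (pow_le_pow_left₀ (by positivity) this 2) (not_le.2 h)

/-- The dominant eigenvector is a limit of iterates of `(1, 0)`, so it lies in the sector. -/
theorem inSector_of_dominant {u : ℂ} {M : Matrix (Fin 2) (Fin 2) ℂ} (hM : PreservesCones u M)
    {w w' : ℂ} (hs : M 1 1 = M 0 0 + M 0 1 * (w + w')) (hr : M 1 0 = -(M 0 1 * w * w'))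
    (hw' : w' ≠ 0) (hlt : ‖M 0 0 + M 0 1 * w'‖ < ‖M 0 0 + M 0 1 * w‖) :
    InSector (u ^ 2) 1 w := by
  set μ := M 0 0 + M 0 1 * w with hμ
  set ν := M 0 0 + M 0 1 * w' with hν
  have hμ0 : μ ≠ 0 := norm_pos_iff.1 ((norm_nonneg _).trans_lt hlt)
  have iter : ∀ n : ℕ, InSector (u ^ 2) (w' - w * (ν / μ) ^ n) (w' * w - w * (ν / μ) ^ n * w') := by
    intro n
    induction n with
    | zero =>
      have e : w' * w - w * (ν / μ) ^ 0 * w' = 0 := by ring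
      rw [e]
      simp [InSector]
    | succ n ih =>
      rw [← inSector_mul_iff hμ0]
      have h := hM.sector _ _ ih
      have hρ : μ * (ν / μ) ^ (n + 1) = ν * (ν / μ) ^ n := by
        rw [pow_succ]
        field_simp
      rw [hs, hr] at h
      convert h using 1
      · linear_combination (-w) * hρ + w' * hμ - w * (ν / μ) ^ n * hν
      · linear_combination (-w * w') * hρ + w' * w * hμ - w * w' * (ν / μ) ^ n * hν
  have hρ : Filter.Tendsto (fun n : ℕ => (ν / μ) ^ n) Filter.atTop (nhds 0) := by
    apply tendsto_pow_atTop_nhds_zero_of_norm_lt_one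
    rw [norm_div, div_lt_one (norm_pos_iff.2 hμ0)]
    exact hlt
  have hx : Filter.Tendsto (fun n : ℕ => w' - w * (ν / μ) ^ n) Filter.atTop (nhds w') := by
    simpa using (hρ.const_mul w).const_sub w'
  have hy : Filter.Tendsto (fun n : ℕ => w' * w - w * (ν / μ) ^ n * w') Filter.atTop
      (nhds (w' * w)) := by
    simpa using ((hρ.const_mul w).mul_const w').const_sub (w' * w)
  have hcx := (Complex.continuous_conj.tendsto _).comp hx
  have hcy := (Complex.continuous_conj.tendsto _).comp hy
  have hlim : InSector (u ^ 2) (w' * 1) (w' * w) := by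
    rw [mul_one]
    exact ⟨ge_of_tendsto' ((Complex.continuous_im.tendsto _).comp (hcx.mul hy))
        fun n => (iter n).1,
      ge_of_tendsto' ((Complex.continuous_im.tendsto _).comp ((hx.mul hcy).mul_const (u ^ 2)))
        fun n => (iter n).2⟩
  exact (inSector_mul_iff hw' 1 w).1 hlim

theorem PreservesCones.apply_zero_one_ne_zero {u : ℂ} {M : Matrix (Fin 2) (Fin 2) ℂ}
    (hM : PreservesCones u M) : M 0 1 ≠ 0 := by
  intro h
  simpa [h, halfPlaneForm] using hM.form_pos 0 1 (by simp) (by simp [halfPlaneForm])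

theorem PreservesCones.form_ne_zero {u : ℂ} {M : Matrix (Fin 2) (Fin 2) ℂ}
    (hM : PreservesCones u M) {w w' : ℂ} (hs : M 1 1 = M 0 0 + M 0 1 * (w + w'))
    (hr : M 1 0 = -(M 0 1 * w * w')) : halfPlaneForm u 1 w ≠ 0 := by
  intro h
  have h1 := hM.form_pos 1 w (by simp) h.ge
  have e1 : M 0 0 * 1 + M 0 1 * w = (M 0 0 + M 0 1 * w) * 1 := by ring
  have e2 : M 1 0 * 1 + M 1 1 * w = (M 0 0 + M 0 1 * w) * w := by
    rw [hs, hr]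
    ring
  rw [e1, e2, halfPlaneForm_mul, h, mul_zero] at h1
  exact lt_irrefl _ h1

theorem halfPlaneForm_neg (u x y : ℂ) : halfPlaneForm u x (-y) = -halfPlaneForm u x y := by
  simp [halfPlaneForm]

theorem exists_eigenvectors_inSector {u : ℂ} {M : Matrix (Fin 2) (Fin 2) ℂ}
    (hM : PreservesCones u M) (hM' : PreservesCones u (diagSwap M)) :
    ∃ w w' : ℂ, M 1 1 = M 0 0 + M 0 1 * (w + w') ∧ M 1 0 = -(M 0 1 * w * w') ∧
      0 < halfPlaneForm u 1 w ∧ halfPlaneForm u 1 w' < 0 ∧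
      InSector (u ^ 2) 1 w ∧ InSector (u ^ 2) 1 (-w') := by
  have hq := hM.apply_zero_one_ne_zero
  obtain ⟨w, w', hs, hr⟩ : ∃ w w' : ℂ,
      M 1 1 = M 0 0 + M 0 1 * (w + w') ∧ M 1 0 = -(M 0 1 * w * w') := by
    obtain ⟨δ, hδ⟩ := IsAlgClosed.exists_pow_nat_eq
      ((M 0 0 - M 1 1) ^ 2 + 4 * M 0 1 * M 1 0) two_pos
    refine ⟨(M 1 1 - M 0 0 + δ) / (2 * M 0 1), (M 1 1 - M 0 0 - δ) / (2 * M 0 1), ?_, ?_⟩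
    · field_simp
      ring
    · field_simp
      linear_combination -hδ
  have hs' : M 1 1 = M 0 0 + M 0 1 * (w' + w) := by rw [hs]; ring
  have hr' : M 1 0 = -(M 0 1 * w' * w) := by rw [hr]; ring
  wlog hw : 0 < halfPlaneForm u 1 w generalizing w w'
  · by_cases hw' : 0 < halfPlaneForm u 1 w'
    · exact this w' w hs' hr' hs hr hw'
    have h1 := lt_of_le_of_ne (not_lt.1 hw) (hM.form_ne_zero hs hr)
    have h2 := lt_of_le_of_ne (not_lt.1 hw') (hM.form_ne_zero hs' hr')
    have k1 := norm_eigenvalue_lt (w := -w) (w' := -w') hM'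
      (by simp [diagSwap, hs]; ring) (by simp [diagSwap, hr])
      (by rw [halfPlaneForm_neg]; linarith)
    have k2 := norm_eigenvalue_lt (w := -w') (w' := -w) hM'
      (by simp [diagSwap, hs]; ring) (by simp [diagSwap, hr'])
      (by rw [halfPlaneForm_neg]; linarith)
    exact absurd k1 k2.not_gt
  have hlt := norm_eigenvalue_lt hM hs hr hw
  have hw' : halfPlaneForm u 1 w' < 0 := by
    refine lt_of_le_of_ne (not_lt.1 fun h => ?_) (hM.form_ne_zero hs' hr')
    exact absurd (norm_eigenvalue_lt hM hs' hr' h) hlt.not_gt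
  have hw0 : w ≠ 0 := by
    rintro rfl
    simp [halfPlaneForm] at hw
  have hw0' : w' ≠ 0 := by
    rintro rfl
    simp [halfPlaneForm] at hw'
  have hsd : diagSwap M 1 1 = diagSwap M 0 0 + diagSwap M 0 1 * (-w' + -w) := by
    simp [diagSwap, hs]
    ring
  have hrd : diagSwap M 1 0 = -(diagSwap M 0 1 * -w' * -w) := by
    simp [diagSwap, hr']
  refine ⟨w, w', hs, hr, hw, hw', inSector_of_dominant hM hs hr hw0' hlt,
    inSector_of_dominant hM' hsd hrd (neg_ne_zero.2 hw0) ?_⟩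
  exact norm_eigenvalue_lt hM' hsd hrd (by rw [halfPlaneForm_neg]; linarith)

theorem InSector.arg_mem {z w : ℂ} (hz : 0 < z.im) (hw : w ≠ 0) (h : InSector z 1 w) :
    0 ≤ w.arg ∧ w.arg ≤ z.arg := by
  obtain ⟨h1, h2⟩ := h
  simp only [map_one, one_mul] at h1 h2
  refine ⟨Complex.arg_nonneg_iff.2 h1, ?_⟩
  by_contra! hlt
  have hz0 : z ≠ 0 := by
    rintro rfl
    simp at hz
  have hpos : 0 < z.arg := by
    refine lt_of_le_of_ne (Complex.arg_nonneg_iff.2 hz.le) fun h0 => ?_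
    exact hz.ne' (Complex.arg_eq_zero_iff.1 h0.symm).2
  have hsin : 0 < Real.sin (w.arg - z.arg) :=
    Real.sin_pos_of_pos_of_lt_pi (by linarith)
      (by linarith [Complex.arg_le_pi w])
  have e : (conj w * z).im = -(‖w‖ * ‖z‖ * Real.sin (w.arg - z.arg)) := by
    rw [Real.sin_sub]
    simp only [Complex.mul_im, Complex.conj_re, Complex.conj_im]
    linear_combination (-‖z‖ * Real.sin z.arg) * Complex.norm_mul_cos_arg w
      - w.re * Complex.norm_mul_sin_arg z
      + ‖z‖ * Real.cos z.arg * Complex.norm_mul_sin_arg w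
      + w.im * Complex.norm_mul_cos_arg z
  have : 0 < ‖w‖ * ‖z‖ * Real.sin (w.arg - z.arg) :=
    mul_pos (mul_pos (norm_pos_iff.2 hw) (norm_pos_iff.2 hz0)) hsin
  linarith

theorem mulVec_eq_smul_of_roots {M : Matrix (Fin 2) (Fin 2) ℂ} {w w' : ℂ}
    (hs : M 1 1 = M 0 0 + M 0 1 * (w + w')) (hr : M 1 0 = -(M 0 1 * w * w')) :
    M.mulVec ![1, w] = (M 0 0 + M 0 1 * w) • ![1, w] := by
  ext i
  fin_cases i
  · simp [Matrix.mulVec, dotProduct, Fin.sum_univ_two]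
  · simp [Matrix.mulVec, dotProduct, Fin.sum_univ_two, hs, hr]
    ring

theorem exists_sq_eq_and_re_pos {z : ℂ} (hz : 0 < z.im) : ∃ u : ℂ, u ^ 2 = z ∧ 0 < u.re := by
  obtain ⟨u, rfl⟩ := IsAlgClosed.exists_pow_nat_eq z two_pos
  have hre : u.re ≠ 0 := by
    intro h
    simp [pow_two, h] at hz
  rcases hre.lt_or_gt with h | h
  · exact ⟨-u, by ring, by simpa using h⟩
  · exact ⟨u, rfl, h⟩

/-- for `Im z > 0` there are nonzero `z₀, z̃₀` with `(1, z₀)` and `(1, z̃₀)`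
eigenvectors of `T(z)`, `0 ≤ arg z₀ ≤ arg z` and `0 ≤ arg(−z̃₀) ≤ arg z`; in particular
`z₀ ≠ z̃₀`, the two eigenvectors are linearly independent (so `T(z)` is diagonalizable)
and `T(z)` is not a scalar multiple of the identity. -/
theorem stmt12 (k : ℕ) (hk : 1 ≤ k) (α β : Fin k → ℝ)
    (hα : ∀ m, 0 < α m) (hβ : ∀ m, 0 < β m)
    (z : ℂ) (hz : 0 < z.im) :
    ∃ z₀ z₁ : ℂ, z₀ ≠ 0 ∧ z₁ ≠ 0 ∧
      (∃ μ : ℂ, (aztecT α β z).mulVec ![1, z₀] = μ • ![1, z₀]) ∧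
      (∃ μ : ℂ, (aztecT α β z).mulVec ![1, z₁] = μ • ![1, z₁]) ∧
      0 ≤ z₀.arg ∧ z₀.arg ≤ z.arg ∧
      0 ≤ (-z₁).arg ∧ (-z₁).arg ≤ z.arg ∧
      z₀ ≠ z₁ ∧
      LinearIndependent ℂ ![(![1, z₀] : Fin 2 → ℂ), ![1, z₁]] ∧
      ∀ c : ℂ, aztecT α β z ≠ c • (1 : Matrix (Fin 2) (Fin 2) ℂ) := by
  obtain ⟨u, rfl, hu⟩ := exists_sq_eq_and_re_pos hz
  obtain ⟨hM, hM'⟩ : PreservesCones u (aztecT α β (u ^ 2)) ∧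
      PreservesCones u (diagSwap (aztecT α β (u ^ 2))) := by
    refine preservesCones_list_prod _ ?_ ?_
    · rw [Ne, List.ofFn_eq_nil_iff]
      omega
    · intro M hMmem
      obtain ⟨m, rfl⟩ := List.mem_ofFn.1 hMmem
      exact preservesCones_aztecA hu hz (hα m) (hβ m)
  obtain ⟨w, w', hs, hr, hw, hw', hS, hS'⟩ := exists_eigenvectors_inSector hM hM'
  have hq := hM.apply_zero_one_ne_zero
  have hw0 : w ≠ 0 := by
    rintro rfl
    simp [halfPlaneForm] at hw
  have hw0' : w' ≠ 0 := by
    rintro rfl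
    simp [halfPlaneForm] at hw'
  have hne : w ≠ w' := by
    rintro rfl
    exact absurd hw hw'.not_gt
  obtain ⟨harg, harg'⟩ := hS.arg_mem hz hw0
  obtain ⟨hargn, hargn'⟩ := hS'.arg_mem hz (neg_ne_zero.2 hw0')
  refine ⟨w, w', hw0, hw0', ⟨_, mulVec_eq_smul_of_roots hs hr⟩,
    ⟨_, mulVec_eq_smul_of_roots (w := w') (w' := w) (by rw [hs]; ring) (by rw [hr]; ring)⟩,
    harg, harg', hargn, hargn', hne, ?_, ?_⟩
  · rw [LinearIndependent.pair_iff]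
    intro a b hab
    have h0 := congrFun hab 0
    have h1 := congrFun hab 1
    simp at h0 h1
    have ha : a * (w - w') = 0 := by linear_combination h1 - w' * h0
    have ha0 : a = 0 := (mul_eq_zero.1 ha).resolve_right (sub_ne_zero.2 hne)
    exact ⟨ha0, by simpa [ha0] using h0⟩
  · intro c hc
    apply hq
    rw [hc]
    simp
end

section
/- For each ℓ ∈ {1,…,k′−1}: p₀ is strictly positive on the open interval I_ℓ = (x_{2ℓ}, x_{2ℓ−1}), and the function g : I_ℓ → ℝ defined by g(z) = z·R(z) / ((z−1)·√(p₀(z))) (real square root) is surjective onto ℝ. -/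
open Polynomial Matrix

/-- The function `g(z) = z R(z) / ((z−1) √(p₀(z)))`, which up to sign is `z ρ₁′(z)/ρ₁(z)`. -/
noncomputable def aztecg (R p₀ : Polynomial ℝ) (z : ℝ) : ℝ :=
  z * R.eval z / ((z - 1) * Real.sqrt (p₀.eval z))

/-- The polynomial version of `aztecA`. -/
noncomputable def polyA (c : ℝ × ℝ) : Matrix (Fin 2) (Fin 2) ℝ[X] :=
  !![X + C (c.1 * c.2⁻¹), C (c.1 + c.2);
     X * C (c.1⁻¹ + c.2⁻¹), X + C (c.2 * c.1⁻¹)]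

/-- The polynomial version of `aztecT`, for a list of pairs of parameters. -/
noncomputable def polyT (l : List (ℝ × ℝ)) : Matrix (Fin 2) (Fin 2) ℝ[X] :=
  (l.map polyA).prod

lemma polyT_cons (c : ℝ × ℝ) (l : List (ℝ × ℝ)) : polyT (c :: l) = polyA c * polyT l := by
  simp [polyT]

lemma aeval_trace_polyT {k : ℕ} (α β : Fin k → ℝ) (z : ℂ) :
    aeval z (polyT (List.ofFn fun m => (α m, β m))).trace = (aztecT α β z).trace := by
  have hA : ∀ c : ℝ × ℝ, (aeval z : ℝ[X] →ₐ[ℝ] ℂ).toRingHom.mapMatrix (polyA c)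
      = aztecA c.1 c.2 z := by
    intro c
    ext i j
    fin_cases i <;> fin_cases j <;> simp [polyA, aztecA]
  have hT : (aeval z : ℝ[X] →ₐ[ℝ] ℂ).toRingHom.mapMatrix
      (polyT (List.ofFn fun m => (α m, β m))) = aztecT α β z := by
    rw [polyT, map_list_prod, List.map_map, List.map_ofFn, aztecT]
    congr 2
    funext m
    exact hA (α m, β m)
  rw [← hT]
  simp [Matrix.trace_fin_two]

lemma det_polyT (l : List (ℝ × ℝ)) (hl : ∀ c ∈ l, 0 < c.1 ∧ 0 < c.2) :
    (polyT l).det = (X - 1) ^ (2 * l.length) := by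
  induction l with
  | nil => simp [polyT]
  | cons c l ih =>
    have hc := hl c (by simp)
    have hA : (polyA c).det = (X - 1) ^ 2 := by
      apply Polynomial.funext
      intro r
      have h1 := hc.1.ne'
      have h2 := hc.2.ne'
      simp [polyA, Matrix.det_fin_two]
      field_simp
      ring
    rw [polyT_cons, Matrix.det_mul, hA, ih fun c hc => hl c (by simp [hc])]
    simp only [List.length_cons]
    ring

/-- The logarithmic derivative of `(z - 1)⁻ⁿ T(z)`, multiplied by `(z - 1)²`, is a trace-zero matrix
whose associated quadratic form is nonnegative, and positive definite for at least two factors. -/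
lemma exists_logDeriv_polyT (z : ℝ) (hz : z ≠ 1) (l : List (ℝ × ℝ))
    (hl : ∀ c ∈ l, 0 < c.1 ∧ 0 < c.2) :
    ∃ x y w : ℝ,
      (∀ j, (z - 1) ^ 2 * (derivative (polyT l 0 j)).eval z
        = (l.length * (z - 1) + x) * (polyT l 0 j).eval z + y * (polyT l 1 j).eval z) ∧
      (∀ j, (z - 1) ^ 2 * (derivative (polyT l 1 j)).eval z
        = w * (polyT l 0 j).eval z + (l.length * (z - 1) - x) * (polyT l 1 j).eval z) ∧
      (∀ s t : ℝ, 0 ≤ w * s ^ 2 - 2 * x * s * t - y * t ^ 2) ∧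
      (1 ≤ l.length → ∀ s t : ℝ, s * t < 0 → 0 < w * s ^ 2 - 2 * x * s * t - y * t ^ 2) ∧
      (2 ≤ l.length → ∀ s t : ℝ, s ≠ 0 ∨ t ≠ 0 → 0 < w * s ^ 2 - 2 * x * s * t - y * t ^ 2) := by
  induction l with
  | nil =>
    refine ⟨0, 0, 0, ?_, ?_, by simp, by simp, by simp⟩
    · intro j
      fin_cases j <;> simp [polyT]
    · intro j
      fin_cases j <;> simp [polyT]
  | cons c l ih =>
    obtain ⟨x, y, w, h0, h1, hnn, hpos, -⟩ := ih fun c hc => hl c (by simp [hc])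
    obtain ⟨ha, hb⟩ := hl c (by simp)
    obtain ⟨a, b⟩ := c
    dsimp only at ha hb
    have hz' : z - 1 ≠ 0 := sub_ne_zero.2 hz
    have ha' := ha.ne'
    have hb' := hb.ne'
    obtain ⟨A00, hA00⟩ : ∃ r, r = z + a * b⁻¹ := ⟨_, rfl⟩
    obtain ⟨A01, hA01⟩ : ∃ r, r = a + b := ⟨_, rfl⟩
    obtain ⟨A10, hA10⟩ : ∃ r, r = z * (a⁻¹ + b⁻¹) := ⟨_, rfl⟩
    obtain ⟨A11, hA11⟩ : ∃ r, r = z + b * a⁻¹ := ⟨_, rfl⟩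
    obtain ⟨μ, hμ⟩ : ∃ r, r = ((z - 1) ^ 2)⁻¹ := ⟨_, rfl⟩
    have hμpos : 0 < μ := by rw [hμ]; positivity
    have hdet : μ * (A00 * A11 - A01 * A10) = 1 := by
      subst hA00 hA01 hA10 hA11 hμ
      field_simp
      ring
    have hQ : ∀ s t : ℝ,
        ((1 + b / a) / a + μ * (A11 ^ 2 * w + 2 * A10 * A11 * x - A10 ^ 2 * y)) * s ^ 2
        - 2 * ((1 + b / a) + μ * (A11 * A01 * w + (A00 * A11 + A01 * A10) * x - A00 * A10 * y))
          * s * t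
        - (-(a + b) + μ * (-A01 ^ 2 * w - 2 * A00 * A01 * x + A00 ^ 2 * y)) * t ^ 2
        = (a + b) / a ^ 2 * (s - a * t) ^ 2
          + μ * (w * (A11 * s - A01 * t) ^ 2
            - 2 * x * (A11 * s - A01 * t) * (-A10 * s + A00 * t)
            - y * (-A10 * s + A00 * t) ^ 2) := by
      intro s t
      field_simp
      ring
    refine ⟨(1 + b / a) + μ * (A11 * A01 * w + (A00 * A11 + A01 * A10) * x - A00 * A10 * y),
      -(a + b) + μ * (-A01 ^ 2 * w - 2 * A00 * A01 * x + A00 ^ 2 * y),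
      (1 + b / a) / a + μ * (A11 ^ 2 * w + 2 * A10 * A11 * x - A10 ^ 2 * y),
      ?_, ?_, fun s t => ?_, fun _ s t hst => ?_, fun hlen s t hst => ?_⟩
    rotate_left 2
    · rw [hQ]
      have := hnn (A11 * s - A01 * t) (-A10 * s + A00 * t)
      positivity
    · rw [hQ]
      have := hnn (A11 * s - A01 * t) (-A10 * s + A00 * t)
      have h : 0 < (s - a * t) ^ 2 := by
        have : s - a * t ≠ 0 := by
          intro h
          have : s = a * t := by linarith
          subst this
          nlinarith [mul_nonneg ha.le (sq_nonneg t)]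
        positivity
      positivity
    · rw [hQ]
      by_cases h : s - a * t = 0
      · have hs : s = a * t := by linarith
        have ht : t ≠ 0 := by
          rintro rfl
          simp [hs] at hst
        have e1 : A11 * s - A01 * t = a * (z - 1) * t := by
          subst hA00 hA01 hA10 hA11 hs
          field_simp
          ring
        have e2 : -A10 * s + A00 * t = - (a / b) * (z - 1) * t := by
          subst hA00 hA01 hA10 hA11 hs
          field_simp
          ring
        have := hpos (by simpa using hlen) (A11 * s - A01 * t) (-A10 * s + A00 * t) (by
          rw [e1, e2]
          have : 0 < a * (a / b) * ((z - 1) ^ 2 * t ^ 2) := by positivity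
          linarith)
        positivity
      · have := hnn (A11 * s - A01 * t) (-A10 * s + A00 * t)
        positivity
    · intro j
      have d0 : (z - 1) ^ 2 = (z - 1 + (1 + b / a)) * A00 - (a + b) * A10 := by
        subst hA00 hA10
        field_simp
        ring
      have d1 : 0 = (z - 1 + (1 + b / a)) * A01 - (a + b) * A11 := by
        subst hA01 hA11
        field_simp
        ring
      have h0 := h0 j
      have h1 := h1 j
      simp [polyT_cons, polyA, Matrix.mul_apply, Fin.sum_univ_two]
      rw [← hA00, ← hA01, ← hA10, ← hA11]
      generalize eval z (derivative (polyT l 0 j)) = S0' at *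
      generalize eval z (derivative (polyT l 1 j)) = S1' at *
      generalize eval z (polyT l 0 j) = S0 at *
      generalize eval z (polyT l 1 j) = S1 at *
      linear_combination A00 * h0 + A01 * h1 + S0 * d0 + S1 * d1
        - ((A00 * x + A01 * w) * S0 + (A00 * y - A01 * x) * S1) * hdet
    · intro j
      have d0 : (z - 1) ^ 2 * (a⁻¹ + b⁻¹)
          = (1 + b / a) / a * A00 + (z - 1 - (1 + b / a)) * A10 := by
        subst hA00 hA10
        field_simp
        ring
      have d1 : (z - 1) ^ 2 = (1 + b / a) / a * A01 + (z - 1 - (1 + b / a)) * A11 := by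
        subst hA01 hA11
        field_simp
        ring
      have h0 := h0 j
      have h1 := h1 j
      simp [polyT_cons, polyA, Matrix.mul_apply, Fin.sum_univ_two]
      rw [← hA00, ← hA01, ← hA10, ← hA11]
      generalize eval z (derivative (polyT l 0 j)) = S0' at *
      generalize eval z (derivative (polyT l 1 j)) = S1' at *
      generalize eval z (polyT l 0 j) = S0 at *
      generalize eval z (polyT l 1 j) = S1 at *
      linear_combination A10 * h0 + A11 * h1 + S0 * d0 + S1 * d1
        - ((A10 * x + A11 * w) * S0 + (A10 * y - A11 * x) * S1) * hdet

/-- A trace-zero nilpotent matrix orthogonal to a definite trace-zero matrix vanishes. -/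
lemma eq_zero_of_orthogonal_definite {x y w e b c : ℝ} (hw : 0 < w) (hdisc : x ^ 2 + y * w < 0)
    (hnil : e ^ 2 + b * c = 0) (horth : 2 * x * e + y * c + w * b = 0) :
    e = 0 ∧ b = 0 ∧ c = 0 := by
  have he : e = 0 := by
    by_contra he
    have : 0 < e ^ 2 := by positivity
    have h : (y * c - w * b) ^ 2 = 4 * (e ^ 2 * (x ^ 2 + y * w)) := by
      linear_combination (y * c + w * b - 2 * x * e) * horth - 4 * y * w * hnil
    linarith [sq_nonneg (y * c - w * b), mul_neg_of_pos_of_neg this hdisc]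
  subst he
  have hbc : b * c = 0 := by simpa using hnil
  have hy : y ≠ 0 := by
    rintro rfl
    nlinarith [sq_nonneg x]
  rcases mul_eq_zero.1 hbc with rfl | rfl
  · simpa [hy] using horth
  · simpa [hw.ne'] using horth

/-- Double zeros of the discriminant occur only at points where the squarefree part is negative. -/
lemma eval_neg_of_isRoot_sq_factor {l : List (ℝ × ℝ)} (hl : ∀ c ∈ l, 0 < c.1 ∧ 0 < c.2)
    (hlen : 2 ≤ l.length) {q p₀ R : ℝ[X]}
    (hfact : (polyT l).trace ^ 2 - 4 * (X - 1) ^ (2 * l.length) = q ^ 2 * p₀)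
    (hR : (X - 1) * derivative (polyT l).trace - C (l.length : ℝ) * (polyT l).trace = q * R)
    {z : ℝ} (hz : z ≠ 1) (hq : q.eval z = 0) : p₀.eval z < 0 := by
  obtain ⟨x, y, w, h0, h1, -, -, hpd⟩ := exists_logDeriv_polyT z hz l hl
  have hpd := hpd hlen
  have hz' : z - 1 ≠ 0 := sub_ne_zero.2 hz
  have hw : 0 < w := by simpa using hpd 1 0 (by simp)
  have hdisc : x ^ 2 + y * w < 0 := by
    have := hpd x w (Or.inr hw.ne')
    nlinarith
  have hdet := det_polyT l hl
  rw [Matrix.det_fin_two] at hdet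
  rw [Matrix.trace_fin_two] at hfact hR
  have h00 := h0 0
  have h01 := h0 1
  have h10 := h1 0
  have h11 := h1 1
  clear h0 h1 hpd
  generalize polyT l 0 0 = a at *
  generalize polyT l 0 1 = b at *
  generalize polyT l 1 0 = c at *
  generalize polyT l 1 1 = d at *
  have hp : (a - d) ^ 2 + 4 * (b * c) = q ^ 2 * p₀ := by
    rw [← hfact, ← hdet]
    ring
  have hR' := congrArg (eval z) hR
  have hp' := congrArg (eval z) hp
  have hp'' := congrArg (fun f => eval z (derivative (derivative f))) hp
  have hdet' := congrArg (eval z) hdet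
  simp [hq] at hR' hp' hdet'
  simp [hq, pow_two] at hp''
  obtain ⟨he, hb, hc⟩ := eq_zero_of_orthogonal_definite (e := (a.eval z - d.eval z) / 2)
    (b := b.eval z) (c := c.eval z) hw hdisc (by linarith)
    (by linear_combination (z - 1) * hR' - h00 - h11)
  have hd : d.eval z = a.eval z := by linarith
  simp only [hb, hc, hd] at h00 h01 h10 h11 hp'' hdet'
  have ha : a.eval z ≠ 0 := by
    intro ha
    have : (z - 1) ^ (2 * l.length) ≠ 0 := pow_ne_zero _ hz'
    apply this
    rw [← hdet', ha]
    ring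
  have key : (z - 1) ^ 4 * ((derivative q).eval z ^ 2 * p₀.eval z)
      = 4 * (a.eval z) ^ 2 * (x ^ 2 + y * w) := by
    have e1 : (z - 1) ^ 2 * ((derivative a).eval z - (derivative d).eval z) = 2 * x * a.eval z := by
      linarith
    have e2 : (z - 1) ^ 2 * (derivative b).eval z = y * a.eval z := by linarith
    have e3 : (z - 1) ^ 2 * (derivative c).eval z = w * a.eval z := by linarith
    have : (derivative q).eval z ^ 2 * p₀.eval z
        = ((derivative a).eval z - (derivative d).eval z) ^ 2
          + 4 * (derivative b).eval z * (derivative c).eval z := by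
      linarith
    rw [this]
    calc _ = ((z - 1) ^ 2 * ((derivative a).eval z - (derivative d).eval z)) ^ 2
          + 4 * ((z - 1) ^ 2 * (derivative b).eval z)
            * ((z - 1) ^ 2 * (derivative c).eval z) := by ring
      _ = _ := by
        rw [e1, e2, e3]
        ring
  by_contra! hneg
  have h2 : 0 < 4 * (a.eval z) ^ 2 := by positivity
  have h3 : 0 ≤ (z - 1) ^ 4 * ((derivative q).eval z ^ 2 * p₀.eval z) := by positivity
  nlinarith

lemma eval_mul_eval_pos_of_ne_zero {f : ℝ[X]} {a b : ℝ} (hab : a ≤ b)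
    (hf : ∀ z ∈ Set.Icc a b, f.eval z ≠ 0) : 0 < f.eval a * f.eval b := by
  by_contra! h
  have hcont : ContinuousOn (fun z => f.eval z) (Set.Icc a b) := f.continuous.continuousOn
  rcases mul_nonpos_iff.1 h with ⟨h1, h2⟩ | ⟨h1, h2⟩
  · obtain ⟨z, hz, hz0⟩ := intermediate_value_Icc' hab hcont ⟨h2, h1⟩
    exact hf z hz hz0
  · obtain ⟨z, hz, hz0⟩ := intermediate_value_Icc hab hcont ⟨h1, h2⟩
    exact hf z hz hz0

lemma derivative_eval_nonneg_of_pos_right {f : ℝ[X]} {a b : ℝ} (hab : a < b) (ha : f.eval a = 0)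
    (hf : ∀ z ∈ Set.Ioo a b, 0 < f.eval z) : 0 ≤ (derivative f).eval a := by
  obtain ⟨g, rfl⟩ := dvd_iff_isRoot.2 ha
  have hg : ∀ z ∈ Set.Ioo a b, 0 ≤ g.eval z := by
    intro z hz
    have := hf z hz
    simp only [eval_mul, eval_sub, eval_X, eval_C] at this
    exact (pos_of_mul_pos_right this (sub_pos.2 hz.1).le).le
  have : 0 ≤ g.eval a := by
    have hcl : a ∈ closure (Set.Ioo a b) := by
      rw [closure_Ioo hab.ne]
      exact Set.left_mem_Icc.2 hab.le
    exact closure_minimal hg (isClosed_le continuous_const g.continuous) hcl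
  simpa using this

lemma derivative_eval_nonpos_of_pos_left {f : ℝ[X]} {a b : ℝ} (hab : a < b) (hb : f.eval b = 0)
    (hf : ∀ z ∈ Set.Ioo a b, 0 < f.eval z) : (derivative f).eval b ≤ 0 := by
  have := derivative_eval_nonneg_of_pos_right (f := f.comp (-X)) (a := -b) (b := -a) (by linarith)
    (by simpa using hb) (by
      intro z hz
      simpa using hf (-z) ⟨by linarith [hz.2], by linarith [hz.1]⟩)
  simpa [derivative_comp] using this

/-- A function `h / √f` on an interval at whose end points `f` vanishes and `h` has opposite signs
takes every real value. -/
lemma exists_div_sqrt_eq {h f : ℝ → ℝ} {a b : ℝ} (hab : a < b)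
    (hh : ContinuousOn h (Set.Icc a b)) (hf : Continuous f) (hfa : f a = 0) (hfb : f b = 0)
    (hfpos : ∀ z ∈ Set.Ioo a b, 0 < f z) (hsign : h a * h b < 0) (y : ℝ) :
    ∃ z ∈ Set.Ioo a b, h z / √(f z) = y := by
  have hIcc := Set.Ioo_subset_Icc_self (a := a) (b := b)
  have hcont : ContinuousOn (fun z => h z / √(f z)) (Set.Ioo a b) :=
    (hh.mono hIcc).div hf.sqrt.continuousOn fun z hz => (Real.sqrt_pos.2 (hfpos z hz)).ne'
  have hlim : ∀ e ∈ Set.Icc a b, f e = 0 →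
      Filter.Tendsto (fun z => h z) (nhdsWithin e (Set.Ioo a b)) (nhds (h e)) ∧
      Filter.Tendsto (fun z => (√(f z))⁻¹) (nhdsWithin e (Set.Ioo a b)) Filter.atTop := by
    intro e he hfe
    refine ⟨((hh e he).mono hIcc).tendsto, Filter.Tendsto.inv_tendsto_nhdsGT_zero ?_⟩
    refine tendsto_nhdsWithin_iff.2 ⟨?_, ?_⟩
    · have := hf.sqrt.continuousWithinAt (s := Set.Ioo a b) (x := e)
      simpa [ContinuousWithinAt, hfe] using this
    · filter_upwards [self_mem_nhdsWithin] with z hz using Real.sqrt_pos.2 (hfpos z hz)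
  obtain ⟨ha1, ha2⟩ := hlim a (Set.left_mem_Icc.2 hab.le) hfa
  obtain ⟨hb1, hb2⟩ := hlim b (Set.right_mem_Icc.2 hab.le) hfb
  have : (nhdsWithin a (Set.Ioo a b)).NeBot := by
    rw [← mem_closure_iff_nhdsWithin_neBot, closure_Ioo hab.ne]
    exact Set.left_mem_Icc.2 hab.le
  have : (nhdsWithin b (Set.Ioo a b)).NeBot := by
    rw [← mem_closure_iff_nhdsWithin_neBot, closure_Ioo hab.ne]
    exact Set.right_mem_Icc.2 hab.le
  have hle : ∀ e, nhdsWithin e (Set.Ioo a b) ≤ Filter.principal (Set.Ioo a b) :=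
    fun e => inf_le_right
  rcases mul_neg_iff.1 hsign with ⟨h1, h2⟩ | ⟨h1, h2⟩
  · exact isPreconnected_Ioo.intermediate_value_Iii (hle b) (hle a) hcont
      (hb1.neg_mul_atTop h2 hb2) (ha1.pos_mul_atTop h1 ha2) (Set.mem_univ y)
  · exact isPreconnected_Ioo.intermediate_value_Iii (hle a) (hle b) hcont
      (ha1.neg_mul_atTop h1 ha2) (hb1.pos_mul_atTop h2 hb2) (Set.mem_univ y)

/-- A polynomial with simple real roots in decreasing order is positive between the roots number
`2 ℓ - 1` and `2 ℓ` (counting from zero). -/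
lemma eval_pos_between_roots {n : ℕ} {f : ℝ[X]} (hlead : 0 < f.leadingCoeff)
    (hdeg : f.natDegree = n) {x : Fin n → ℝ} (hx : StrictAnti x) (hroot : ∀ i, f.eval (x i) = 0)
    {ℓ : ℕ} (i j : Fin n) (hi : (i : ℕ) = 2 * ℓ) (hj : (j : ℕ) = 2 * ℓ - 1)
    {z : ℝ} (hz : z ∈ Set.Ioo (x i) (x j)) : 0 < f.eval z := by
  have hf0 : f ≠ 0 := by
    rintro rfl
    simp at hlead
  have hroots : f.roots = Finset.univ.val.map x := by
    symm
    apply Multiset.eq_of_le_of_card_le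
    · refine (Multiset.le_iff_subset ((Multiset.nodup_map_iff_of_injective hx.injective).2
        Finset.univ.nodup)).2 ?_
      intro r hr
      obtain ⟨i, -, rfl⟩ := Multiset.mem_map.1 hr
      exact (mem_roots hf0).2 (hroot i)
    · simpa [hdeg] using f.card_roots'
  have hfac : f = C f.leadingCoeff * ∏ i, (X - C (x i)) := by
    have := C_leadingCoeff_mul_prod_multiset_X_sub_C (p := f) (by rw [hroots]; simp [hdeg])
    rw [hroots, Multiset.map_map] at this
    exact this.symm
  rw [hfac, eval_mul, eval_C, eval_prod]
  refine mul_pos hlead ?_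
  simp only [eval_sub, eval_X, eval_C]
  rw [← Finset.prod_filter_mul_prod_filter_not _ (fun m : Fin n => (m : ℕ) < 2 * ℓ)]
  refine mul_pos ?_ (Finset.prod_pos ?_)
  · have hcard : (Finset.univ.filter fun m : Fin n => (m : ℕ) < 2 * ℓ).card = 2 * ℓ := by
      rw [Fin.card_filter_val_lt]
      omega
    have : ∏ m ∈ Finset.univ.filter (fun m : Fin n => (m : ℕ) < 2 * ℓ), (z - x m)
        = ∏ m ∈ Finset.univ.filter (fun m : Fin n => (m : ℕ) < 2 * ℓ), (x m - z) := by
      have h := Finset.prod_neg (s := Finset.univ.filter (fun m : Fin n => (m : ℕ) < 2 * ℓ))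
        (f := fun m => x m - z)
      simpa [hcard] using h
    rw [this]
    refine Finset.prod_pos fun m hm => ?_
    have hm : (m : ℕ) < 2 * ℓ := by simpa using hm
    have : x j ≤ x m := hx.antitone (Fin.le_def.2 (by omega))
    linarith [hz.2]
  · intro m hm
    have hm : 2 * ℓ ≤ (m : ℕ) := by simpa using hm
    have : x m ≤ x i := hx.antitone (Fin.le_def.2 (by omega))
    linarith [hz.1]

/-- for each `ℓ = 1,…,k′−1`, `p₀ > 0` on `I_ℓ = (x_{2ℓ}, x_{2ℓ−1})`, and
`g : I_ℓ → ℝ` is surjective onto `ℝ`. -/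
theorem stmt15 (k : ℕ) (hk : 1 ≤ k) (α β : Fin k → ℝ)
    (hα : ∀ m, 0 < α m) (hβ : ∀ m, 0 < β m)
    (hprod : ∏ m, α m = ∏ m, β m)
    (trT p : Polynomial ℝ)
    (htr : ∀ z : ℂ, Polynomial.aeval z trT = Matrix.trace (aztecT α β z))
    (hp : ∀ z : ℂ, Polynomial.aeval z p
        = (Matrix.trace (aztecT α β z)) ^ 2 - 4 * (z - 1) ^ (2 * k))
    (k' : ℕ) (hk'1 : 1 ≤ k') (hk'k : k' ≤ k)
    (q p₀ : Polynomial ℝ) (hq : q.Monic) (hp₀sf : Squarefree p₀)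
    (hp₀lead : 0 < p₀.leadingCoeff) (hfact : p = q ^ 2 * p₀)
    (hp₀deg : p₀.natDegree = 2 * k' - 1)
    (x : Fin (2 * k' - 1) → ℝ) (hx0 : x ⟨0, by omega⟩ = 0) (hxanti : StrictAnti x)
    (hxroot : ∀ i, p₀.eval (x i) = 0)
    (R : Polynomial ℝ)
    (hR : (X - 1) * Polynomial.derivative trT - Polynomial.C (k : ℝ) * trT = q * R)
    (hRdeg : R.natDegree = k' - 1) :
    ∀ ℓ : ℕ, ∀ _h1 : 1 ≤ ℓ, ∀ _h2 : ℓ ≤ k' - 1,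
      (∀ z ∈ Set.Ioo (x ⟨2 * ℓ, by omega⟩) (x ⟨2 * ℓ - 1, by omega⟩), 0 < p₀.eval z) ∧
      ∀ y : ℝ, ∃ z ∈ Set.Ioo (x ⟨2 * ℓ, by omega⟩) (x ⟨2 * ℓ - 1, by omega⟩),
        aztecg R p₀ z = y := by
  intro ℓ h1 h2
  have hposI : ∀ z ∈ Set.Ioo (x ⟨2 * ℓ, by omega⟩) (x ⟨2 * ℓ - 1, by omega⟩), 0 < p₀.eval z :=
    fun z hz => eval_pos_between_roots hp₀lead hp₀deg hxanti hxroot _ _ rfl rfl hz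
  refine ⟨hposI, ?_⟩
  have ha := hxroot ⟨2 * ℓ, by omega⟩
  have hb := hxroot ⟨2 * ℓ - 1, by omega⟩
  have hab : x ⟨2 * ℓ, by omega⟩ < x ⟨2 * ℓ - 1, by omega⟩ := hxanti (Fin.lt_def.2 (by simp; omega))
  have hb0 : x ⟨2 * ℓ - 1, by omega⟩ < 0 := by
    rw [← hx0]
    exact hxanti (Fin.lt_def.2 (by simp; omega))
  generalize x ⟨2 * ℓ, by omega⟩ = a at *
  generalize x ⟨2 * ℓ - 1, by omega⟩ = b at *
  obtain ⟨l, hl⟩ : ∃ l, l = List.ofFn fun m => (α m, β m) := ⟨_, rfl⟩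
  have hlen : l.length = k := by simp [hl]
  have hlpos : ∀ c ∈ l, 0 < c.1 ∧ 0 < c.2 := by
    intro c hc
    rw [hl, List.mem_ofFn] at hc
    obtain ⟨m, rfl⟩ := hc
    exact ⟨hα m, hβ m⟩
  have hinj : ∀ f g : ℝ[X], (∀ z : ℂ, aeval z f = aeval z g) → f = g := by
    intro f g h
    refine Polynomial.funext fun r => ?_
    have := h (algebraMap ℝ ℂ r)
    rw [aeval_algebraMap_apply, aeval_algebraMap_apply] at this
    simpa using this
  have htrT : trT = (polyT l).trace := hinj _ _ fun z => by rw [htr, hl, aeval_trace_polyT]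
  have hpT : trT ^ 2 - 4 * (X - 1) ^ (2 * k) = q ^ 2 * p₀ := by
    rw [← hfact]
    refine hinj _ _ fun z => ?_
    rw [hp, ← htr]
    simp [map_ofNat (aeval z : ℝ[X] →ₐ[ℝ] ℂ) 4]
  have hIcc : ∀ z ∈ Set.Icc a b, 0 ≤ p₀.eval z := by
    intro z hz
    rcases eq_or_lt_of_le hz.1 with rfl | h
    · exact ha.ge
    rcases eq_or_lt_of_le hz.2 with rfl | h'
    · exact hb.ge
    exact (hposI z ⟨h, h'⟩).le
  have hqne : ∀ z ∈ Set.Icc a b, q.eval z ≠ 0 := by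
    intro z hz hqz
    refine (hIcc z hz).not_gt (eval_neg_of_isRoot_sq_factor hlpos (by omega) (q := q) (R := R)
      ?_ ?_ (by linarith [hz.2]) hqz)
    · rw [← htrT, hlen, hpT]
    · rw [← htrT, hlen, hR]
  have htne : ∀ z ∈ Set.Icc a b, trT.eval z ≠ 0 := by
    intro z hz htz
    have h := congrArg (eval z) hpT
    simp [htz] at h
    have h3 : 0 ≤ q.eval z ^ 2 * p₀.eval z := mul_nonneg (sq_nonneg _) (hIcc z hz)
    have h4 : 0 < (z - 1) ^ (2 * k) := by
      rw [pow_mul]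
      have : z - 1 ≠ 0 := by linarith [hz.2]
      positivity
    linarith
  have hq2 := eval_mul_eval_pos_of_ne_zero hab.le hqne
  have ht2 := eval_mul_eval_pos_of_ne_zero hab.le htne
  have hsep : p₀.Separable := PerfectField.separable_iff_squarefree.2 hp₀sf
  have hda : 0 < (derivative p₀).eval a :=
    lt_of_le_of_ne (derivative_eval_nonneg_of_pos_right hab ha hposI)
      (hsep.eval₂_derivative_ne_zero (RingHom.id ℝ) ha).symm
  have hdb : (derivative p₀).eval b < 0 :=
    lt_of_le_of_ne (derivative_eval_nonpos_of_pos_left hab hb hposI)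
      (hsep.eval₂_derivative_ne_zero (RingHom.id ℝ) hb)
  have hRe : ∀ e ∈ Set.Icc a b, p₀.eval e = 0 →
      (e - 1) * q.eval e * (derivative p₀).eval e = 2 * trT.eval e * R.eval e := by
    intro e he hpe
    have h := congrArg (eval e) hpT
    have hd := congrArg (fun f => eval e (derivative f)) hpT
    have hR' := congrArg (eval e) hR
    have hpow : (e - 1) * (e - 1) ^ (2 * k - 1) = (e - 1) ^ (2 * k) := by
      rw [← pow_succ']
      congr 1
      omega
    simp [hpe, derivative_pow] at h hd hR'
    apply mul_left_cancel₀ (hqne e he)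
    linear_combination -(e - 1) * hd + 2 * trT.eval e * hR' + 2 * k * h - 8 * k * hpow
  have hRsign : R.eval a * R.eval b < 0 := by
    have hRa := hRe a (Set.left_mem_Icc.2 hab.le) ha
    have hRb := hRe b (Set.right_mem_Icc.2 hab.le) hb
    have h3 : 0 < (a - 1) * (b - 1) := mul_pos_of_neg_of_neg (by linarith) (by linarith)
    have h4 : (a - 1) * (b - 1) * (q.eval a * q.eval b)
        * ((derivative p₀).eval a * (derivative p₀).eval b)
        = 4 * (trT.eval a * trT.eval b) * (R.eval a * R.eval b) := by
      linear_combination (b - 1) * q.eval b * (derivative p₀).eval b * hRa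
        + 2 * trT.eval a * R.eval a * hRb
    have h5 := mul_neg_of_pos_of_neg (mul_pos h3 hq2) (mul_neg_of_pos_of_neg hda hdb)
    rw [h4] at h5
    exact neg_of_mul_neg_right h5 (by linarith)
  intro y
  have hne : ∀ z ∈ Set.Icc a b, z - 1 ≠ 0 := fun z hz => by linarith [hz.2]
  obtain ⟨z, hz, hzy⟩ := exists_div_sqrt_eq (h := fun z => z * R.eval z / (z - 1))
    (f := fun z => p₀.eval z) hab
    (ContinuousOn.div (by fun_prop) (by fun_prop) hne) p₀.continuous ha hb hposI (by
      have e : a * R.eval a / (a - 1) * (b * R.eval b / (b - 1))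
          = (a / (a - 1) * (b / (b - 1))) * (R.eval a * R.eval b) := by ring
      rw [e]
      refine mul_neg_of_pos_of_neg (mul_pos ?_ ?_) hRsign <;>
        exact div_pos_of_neg_of_neg (by linarith) (by linarith)) y
  exact ⟨z, hz, by rw [aztecg, ← div_div, hzy]⟩
end

section
/- On I₀ = (0,∞)∖{1}: p₀ is strictly positive, the function g(z) = z·R(z) / ((z−1)·√(p₀(z))) (real square root) never vanishes, the image g(I₀) equals ℝ∖{0}, and g(z) → 0 both as z → 0⁺ and as z → ∞. -/
open Polynomial Matrix

open Filter

/-- The matrix `A_m` with entries in `ℝ[X]`. -/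
noncomputable def aztecPolyA (a b : ℝ) : Matrix (Fin 2) (Fin 2) ℝ[X] :=
  !![X + C (a * b⁻¹), C (a + b); X * C (a⁻¹ + b⁻¹), X + C (b * a⁻¹)]

theorem aztecPolyA_map_aeval (a b : ℝ) (z : ℂ) :
    (aeval z).mapMatrix (aztecPolyA a b) = aztecA a b z := by
  ext i j
  fin_cases i <;> fin_cases j <;> simp [aztecPolyA, aztecA]

/-- At `z` the polynomial `f` is positive and the derivative of `f / |X - 1| ^ n`, multiplied by
`(X - 1) |X - 1| ^ n`, is negative. -/
def PosDecreasingAt (z : ℝ) (n : ℕ) (f : ℝ[X]) : Prop :=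
  0 < f.eval z ∧ (z - 1) * (derivative f).eval z - n * f.eval z < 0

theorem PosDecreasingAt.add {z : ℝ} {n : ℕ} {f g : ℝ[X]} (hf : PosDecreasingAt z n f)
    (hg : PosDecreasingAt z n g) : PosDecreasingAt z n (f + g) := by
  obtain ⟨hf, hf'⟩ := hf
  obtain ⟨hg, hg'⟩ := hg
  refine ⟨by simpa using add_pos hf hg, ?_⟩
  simp only [derivative_add, eval_add]
  linarith

theorem PosDecreasingAt.mul {z : ℝ} {m n : ℕ} {f g : ℝ[X]} (hf : PosDecreasingAt z m f)
    (hg : PosDecreasingAt z n g) : PosDecreasingAt z (m + n) (f * g) := by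
  obtain ⟨hf, hf'⟩ := hf
  obtain ⟨hg, hg'⟩ := hg
  refine ⟨by simpa using mul_pos hf hg, ?_⟩
  simp only [derivative_mul, eval_add, eval_mul, Nat.cast_add]
  linarith [mul_neg_of_neg_of_pos hf' hg, mul_neg_of_pos_of_neg hf hg']

theorem posDecreasingAt_aztecPolyA {a b z : ℝ} (ha : 0 < a) (hb : 0 < b) (hz : 0 < z)
    (i j : Fin 2) : PosDecreasingAt z 1 (aztecPolyA a b i j) := by
  have hc : 0 < a * b⁻¹ := by positivity
  have hd : 0 < b * a⁻¹ := by positivity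
  have he : 0 < a⁻¹ + b⁻¹ := by positivity
  fin_cases i <;> fin_cases j <;>
    simp only [PosDecreasingAt, aztecPolyA, Fin.zero_eta, Fin.mk_one, of_apply, cons_val',
      cons_val_zero, cons_val_one, cons_val_fin_one, derivative_add, derivative_mul, derivative_X,
      derivative_C, eval_add, eval_mul, eval_X, eval_C, eval_one, eval_zero, Nat.cast_one] <;>
    constructor <;> first | positivity | linarith

theorem posDecreasingAt_list_prod {z : ℝ} (hz : 0 < z) (l : List (ℝ × ℝ)) (hl : l ≠ [])
    (hpos : ∀ c ∈ l, 0 < c.1 ∧ 0 < c.2) (i j : Fin 2) :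
    PosDecreasingAt z l.length ((l.map fun c => aztecPolyA c.1 c.2).prod i j) := by
  induction l generalizing i j with
  | nil => exact absurd rfl hl
  | cons c l ih =>
    have hc := hpos c List.mem_cons_self
    have hA := posDecreasingAt_aztecPolyA hc.1 hc.2 hz
    rcases eq_or_ne l [] with rfl | hne
    · simpa using hA i j
    · have hM := ih hne fun d hd => hpos d (List.mem_cons_of_mem c hd)
      rw [List.map_cons, List.prod_cons, Matrix.mul_apply, Fin.sum_univ_two, List.length_cons,
        add_comm]
      exact ((hA i 0).mul (hM 0 j)).add ((hA i 1).mul (hM 1 j))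

theorem eq_trace_prod_aztecPolyA {k : ℕ} (α β : Fin k → ℝ) (f : ℝ[X])
    (hf : ∀ z : ℂ, aeval z f = (aztecT α β z).trace) :
    f = ((List.ofFn fun m => (α m, β m)).map fun c => aztecPolyA c.1 c.2).prod.trace := by
  refine Polynomial.funext fun r => Complex.ofReal_injective ?_
  have hcast (g : ℝ[X]) : ((g.eval r : ℝ) : ℂ) = aeval (r : ℂ) g :=
    (aeval_algebraMap_apply_eq_algebraMap_eval r g).symm
  rw [hcast, hcast, hf, AddMonoidHom.map_trace]
  congr 1
  change _ = (aeval (r : ℂ)).mapMatrix _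
  rw [map_list_prod, List.map_map, List.map_ofFn, aztecT]
  congr 2
  funext m
  exact (aztecPolyA_map_aeval _ _ _).symm

/-- `(z - 1) t'(z) - k t(z)` is negative on `(0, ∞)`, where `t` is the trace of `T`. -/
theorem eval_derivative_trace_neg {k : ℕ} (hk : 1 ≤ k) {α β : Fin k → ℝ} (hα : ∀ m, 0 < α m)
    (hβ : ∀ m, 0 < β m) {f : ℝ[X]} (hf : ∀ z : ℂ, aeval z f = (aztecT α β z).trace)
    {z : ℝ} (hz : 0 < z) : ((X - 1) * derivative f - C (k : ℝ) * f).eval z < 0 := by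
  have h := posDecreasingAt_list_prod hz (List.ofFn fun m => (α m, β m))
    (by simpa [List.ofFn_eq_nil_iff] using Nat.one_le_iff_ne_zero.mp hk)
    (by
      intro c hc
      obtain ⟨m, rfl⟩ := List.mem_ofFn.mp hc
      exact ⟨hα m, hβ m⟩)
  have h2 := (h 0 0).add (h 1 1)
  rw [← Matrix.trace_fin_two, ← eq_trace_prod_aztecPolyA α β f hf, List.length_ofFn] at h2
  simpa using h2.2

/-- A polynomial with positive leading coefficient and no root in `(a, ∞)` is positive there. -/
theorem eval_pos_of_forall_ne_zero {f : ℝ[X]} {a : ℝ} (hlead : 0 < f.leadingCoeff)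
    (h : ∀ z, a < z → f.eval z ≠ 0) {z : ℝ} (hz : a < z) : 0 < f.eval z := by
  by_contra hneg
  have hlt : f.eval z < 0 := lt_of_le_of_ne (not_lt.mp hneg) (h z hz)
  have hev : ∀ᶠ w in atTop, 0 < f.eval w := by
    rcases Nat.eq_zero_or_pos f.natDegree with hd | hd
    · rw [eq_C_of_natDegree_eq_zero hd] at hlead ⊢
      exact Eventually.of_forall fun w => by simpa using hlead
    · exact (f.tendsto_atTop_of_leadingCoeff_nonneg (natDegree_pos_iff_degree_pos.mp hd)
        hlead.le).eventually_gt_atTop 0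
  obtain ⟨w, hw, hzw⟩ := (hev.and (eventually_ge_atTop z)).exists
  obtain ⟨c, hc, hc0⟩ := intermediate_value_Icc hzw f.continuous.continuousOn ⟨hlt.le, hw.le⟩
  exact h c (hz.trans_le hc.1) hc0

/-- A polynomial of degree `n` has no roots besides `n` given distinct ones. -/
theorem exists_eq_of_eval_eq_zero {f : ℝ[X]} (hf : f ≠ 0) {n : ℕ} (hn : f.natDegree = n)
    {x : Fin n → ℝ} (hx : Function.Injective x) (hroot : ∀ i, f.eval (x i) = 0) {z : ℝ}
    (hz : f.eval z = 0) : ∃ i, x i = z := by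
  by_contra! hne
  refine hf (eq_zero_of_natDegree_lt_card_of_eval_eq_zero f (f := (Fin.cons z x : Fin (n + 1) → ℝ))
    (Fin.cons_injective_iff.mpr ⟨by simpa using hne, hx⟩) (fun i => ?_) (by simp [hn]))
  refine Fin.cases ?_ (fun j => ?_) i <;> simp [hz, hroot]

theorem tendsto_zero_of_sq {ι : Type*} {l : Filter ι} {f : ι → ℝ}
    (h : Tendsto (fun i => f i ^ 2) l (nhds 0)) : Tendsto f l (nhds 0) := by
  rw [tendsto_zero_iff_abs_tendsto_zero]
  simpa [Function.comp_def, Real.sqrt_sq_eq_abs] using h.sqrt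

theorem aztecg_sq {R p₀ : ℝ[X]} {z : ℝ} (hz : 0 < p₀.eval z) :
    aztecg R p₀ z ^ 2 = (X ^ 2 * R ^ 2).eval z / ((X - 1) ^ 2 * p₀).eval z := by
  simp [aztecg, div_pow, mul_pow, Real.sq_sqrt hz.le]

theorem tendsto_aztecg_nhdsGT_zero {R p₀ : ℝ[X]} (hsf : Squarefree p₀)
    (hpos : ∀ z, 0 < z → 0 < p₀.eval z) (hroot : p₀.eval 0 = 0) :
    Tendsto (aztecg R p₀) (nhdsWithin 0 (Set.Ioi 0)) (nhds 0) := by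
  obtain ⟨f, rfl⟩ : X ∣ p₀ := by rwa [X_dvd_iff, coeff_zero_eq_eval_zero]
  have hf : f.eval 0 ≠ 0 := by
    intro h0
    obtain ⟨g, rfl⟩ : X ∣ f := by rwa [X_dvd_iff, coeff_zero_eq_eval_zero]
    exact not_isUnit_X (hsf X ⟨g, by ring⟩)
  have hlim : Tendsto (fun z : ℝ => (X * R ^ 2).eval z / ((X - 1) ^ 2 * f).eval z)
      (nhdsWithin 0 (Set.Ioi 0)) (nhds 0) := by
    have hc : ContinuousAt (fun z : ℝ => (X * R ^ 2).eval z / ((X - 1) ^ 2 * f).eval z) 0 :=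
      (X * R ^ 2).continuousAt.div ((X - 1) ^ 2 * f).continuousAt (by simpa using hf)
    simpa [ContinuousAt] using hc.tendsto.mono_left nhdsWithin_le_nhds
  refine tendsto_zero_of_sq (hlim.congr' ?_)
  filter_upwards [self_mem_nhdsWithin] with z hz
  have hz0 : z ≠ 0 := ne_of_gt hz
  rw [aztecg_sq (hpos z hz), ← mul_div_mul_left _ _ hz0]
  simp only [eval_mul, eval_pow, eval_X]
  ring

theorem tendsto_aztecg_atTop {R p₀ : ℝ[X]} (hpos : ∀ z, 0 < z → 0 < p₀.eval z)
    (hdeg : 2 * R.natDegree < p₀.natDegree) : Tendsto (aztecg R p₀) atTop (nhds 0) := by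
  have hp0 : p₀ ≠ 0 := by rintro rfl; simp at hdeg
  have hX : (X - 1 : ℝ[X]).natDegree = 1 := by simpa using natDegree_X_sub_C (1 : ℝ)
  have hX0 : (X - 1 : ℝ[X]) ≠ 0 := by rintro h; simp [h] at hX
  refine tendsto_zero_of_sq ((div_tendsto_atTop_zero_of_degree_lt (X ^ 2 * R ^ 2) ((X - 1) ^ 2 * p₀)
    ?_).congr' ?_)
  · refine degree_lt_degree ?_
    rw [natDegree_mul (pow_ne_zero 2 hX0) hp0, natDegree_pow, hX]
    refine natDegree_mul_le.trans_lt ?_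
    rw [natDegree_X_pow, natDegree_pow]
    omega
  · filter_upwards [eventually_gt_atTop 0] with z hz
    exact (aztecg_sq (hpos z hz)).symm

theorem continuousOn_aztecg {R p₀ : ℝ[X]} (hpos : ∀ z, 0 < z → 0 < p₀.eval z) :
    ContinuousOn (aztecg R p₀) (Set.Ioi 0 \ {1}) := by
  unfold aztecg
  refine ContinuousOn.div (by fun_prop) (by fun_prop) fun z hz => ?_
  exact mul_ne_zero (sub_ne_zero.mpr hz.2) (Real.sqrt_pos.mpr (hpos z hz.1)).ne'

theorem aztecg_eq_mul_inv (R p₀ : ℝ[X]) (z : ℝ) :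
    aztecg R p₀ z = z * R.eval z / Real.sqrt (p₀.eval z) * (z - 1)⁻¹ := by
  rw [aztecg, mul_comm (z - 1), ← div_div, div_eq_mul_inv _ (z - 1)]

theorem tendsto_aztecg_numerator {R p₀ : ℝ[X]} (hpos : 0 < p₀.eval 1) :
    Tendsto (fun z => z * R.eval z / Real.sqrt (p₀.eval z)) (nhds 1)
      (nhds (R.eval 1 / Real.sqrt (p₀.eval 1))) := by
  have hc : ContinuousAt (fun z => z * R.eval z / Real.sqrt (p₀.eval z)) 1 :=
    ContinuousAt.div (by fun_prop) (by fun_prop) (Real.sqrt_pos.mpr hpos).ne'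
  simpa [ContinuousAt] using hc

theorem tendsto_aztecg_nhdsLT_one {R p₀ : ℝ[X]} (hpos : 0 < p₀.eval 1) (hR : R.eval 1 < 0) :
    Tendsto (aztecg R p₀) (nhdsWithin 1 (Set.Iio 1)) atTop := by
  have hinv : Tendsto (fun z : ℝ => (z - 1)⁻¹) (nhdsWithin 1 (Set.Iio 1)) atBot := by
    refine tendsto_inv_nhdsLT_zero.comp (tendsto_nhdsWithin_iff.mpr ⟨?_, ?_⟩)
    · exact tendsto_nhdsWithin_of_tendsto_nhds (Continuous.tendsto' (by fun_prop) _ _ (by simp))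
    · filter_upwards [self_mem_nhdsWithin] with z hz using sub_neg.mpr (Set.mem_Iio.mp hz)
  simpa only [← aztecg_eq_mul_inv] using Tendsto.neg_mul_atBot
    (div_neg_of_neg_of_pos hR (Real.sqrt_pos.mpr hpos))
    ((tendsto_aztecg_numerator hpos).mono_left nhdsWithin_le_nhds) hinv

theorem tendsto_aztecg_nhdsGT_one {R p₀ : ℝ[X]} (hpos : 0 < p₀.eval 1) (hR : R.eval 1 < 0) :
    Tendsto (aztecg R p₀) (nhdsWithin 1 (Set.Ioi 1)) atBot := by
  have hinv : Tendsto (fun z : ℝ => (z - 1)⁻¹) (nhdsWithin 1 (Set.Ioi 1)) atTop := by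
    refine tendsto_inv_nhdsGT_zero.comp (tendsto_nhdsWithin_iff.mpr ⟨?_, ?_⟩)
    · exact tendsto_nhdsWithin_of_tendsto_nhds (Continuous.tendsto' (by fun_prop) _ _ (by simp))
    · filter_upwards [self_mem_nhdsWithin] with z hz using sub_pos.mpr (Set.mem_Ioi.mp hz)
  simpa only [← aztecg_eq_mul_inv] using Tendsto.neg_mul_atTop
    (div_neg_of_neg_of_pos hR (Real.sqrt_pos.mpr hpos))
    ((tendsto_aztecg_numerator hpos).mono_left nhdsWithin_le_nhds) hinv

/-- on `I₀ = (0,∞)∖{1}`, `p₀ > 0`, `g` never vanishes, `g(I₀) = ℝ∖{0}`,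
and `g(z) → 0` as `z → 0⁺` and as `z → ∞`. -/
theorem stmt16 (k : ℕ) (hk : 1 ≤ k) (α β : Fin k → ℝ)
    (hα : ∀ m, 0 < α m) (hβ : ∀ m, 0 < β m)
    (hprod : ∏ m, α m = ∏ m, β m)
    (trT p : Polynomial ℝ)
    (htr : ∀ z : ℂ, Polynomial.aeval z trT = Matrix.trace (aztecT α β z))
    (hp : ∀ z : ℂ, Polynomial.aeval z p
        = (Matrix.trace (aztecT α β z)) ^ 2 - 4 * (z - 1) ^ (2 * k))
    (k' : ℕ) (hk'1 : 1 ≤ k') (hk'k : k' ≤ k)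
    (q p₀ : Polynomial ℝ) (hq : q.Monic) (hp₀sf : Squarefree p₀)
    (hp₀lead : 0 < p₀.leadingCoeff) (hfact : p = q ^ 2 * p₀)
    (hp₀deg : p₀.natDegree = 2 * k' - 1)
    (x : Fin (2 * k' - 1) → ℝ) (hx0 : x ⟨0, by omega⟩ = 0) (hxanti : StrictAnti x)
    (hxroot : ∀ i, p₀.eval (x i) = 0)
    (R : Polynomial ℝ)
    (hR : (X - 1) * Polynomial.derivative trT - Polynomial.C (k : ℝ) * trT = q * R)
    (hRdeg : R.natDegree = k' - 1) :
    (∀ z ∈ Set.Ioi (0 : ℝ) \ {1}, 0 < p₀.eval z) ∧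
    (∀ z ∈ Set.Ioi (0 : ℝ) \ {1}, aztecg R p₀ z ≠ 0) ∧
    aztecg R p₀ '' (Set.Ioi (0 : ℝ) \ {1}) = {y : ℝ | y ≠ 0} ∧
    Tendsto (aztecg R p₀) (nhdsWithin 0 (Set.Ioi 0)) (nhds 0) ∧
    Tendsto (aztecg R p₀) atTop (nhds 0) := by
  have hp₀0 : p₀ ≠ 0 := by rintro rfl; simp at hp₀lead
  have hp₀pos : ∀ z, 0 < z → 0 < p₀.eval z := fun z hz =>
    eval_pos_of_forall_ne_zero hp₀lead (fun w hw hw0 => by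
      obtain ⟨i, rfl⟩ := exists_eq_of_eval_eq_zero hp₀0 hp₀deg hxanti.injective hxroot hw0
      have hle : x i ≤ x ⟨0, by omega⟩ := hxanti.antitone (Fin.mk_le_of_le_val (Nat.zero_le _))
      exact absurd hw (not_lt.mpr (hle.trans_eq hx0))) hz
  have hqR : ∀ z, 0 < z → q.eval z * R.eval z < 0 := fun z hz => by
    simpa only [hR, eval_mul] using eval_derivative_trace_neg hk hα hβ htr hz
  have hqpos : ∀ z, 0 < z → 0 < q.eval z := fun z hz =>
    eval_pos_of_forall_ne_zero (by simp [hq.leadingCoeff])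
      (fun w hw => left_ne_zero_of_mul (hqR w hw).ne) hz
  have hRneg : ∀ z, 0 < z → R.eval z < 0 := fun z hz =>
    neg_of_mul_neg_right (hqR z hz) (hqpos z hz).le
  have hne : ∀ z ∈ Set.Ioi (0 : ℝ) \ {1}, aztecg R p₀ z ≠ 0 := fun z hz =>
    div_ne_zero (mul_ne_zero (ne_of_gt hz.1) (hRneg z hz.1).ne)
      (mul_ne_zero (sub_ne_zero.mpr hz.2) (Real.sqrt_pos.mpr (hp₀pos z hz.1)).ne')
  have hlim0 : Tendsto (aztecg R p₀) (nhdsWithin 0 (Set.Ioi 0)) (nhds 0) :=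
    tendsto_aztecg_nhdsGT_zero hp₀sf hp₀pos (by simpa [hx0] using hxroot ⟨0, by omega⟩)
  have hlimTop : Tendsto (aztecg R p₀) atTop (nhds 0) :=
    tendsto_aztecg_atTop hp₀pos (by omega)
  refine ⟨fun z hz => hp₀pos z hz.1, hne, Set.Subset.antisymm ?_ fun y hy => ?_, hlim0, hlimTop⟩
  · rintro _ ⟨z, hz, rfl⟩
    exact hne z hz
  · have hcont := continuousOn_aztecg (R := R) hp₀pos
    rcases lt_or_gt_of_ne hy with hy | hy
    · have hsub : Set.Ioi (1 : ℝ) ⊆ Set.Ioi 0 \ {1} := fun z hz =>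
        ⟨Set.mem_Ioi.mpr (one_pos.trans (Set.mem_Ioi.mp hz)), ne_of_gt hz⟩
      exact Set.image_mono hsub (isPreconnected_Ioi.intermediate_value_Iio
        (l₁ := nhdsWithin 1 (Set.Ioi 1)) (l₂ := atTop) inf_le_right
        (le_principal_iff.mpr (Ioi_mem_atTop 1)) (hcont.mono hsub)
        (tendsto_aztecg_nhdsGT_one (hp₀pos 1 one_pos) (hRneg 1 one_pos)) hlimTop hy)
    · have hsub : Set.Ioo (0 : ℝ) 1 ⊆ Set.Ioi 0 \ {1} := fun z hz => ⟨hz.1, ne_of_lt hz.2⟩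
      exact Set.image_mono hsub (isPreconnected_Ioo.intermediate_value_Ioi
        (l₁ := nhdsWithin 0 (Set.Ioi 0)) (l₂ := nhdsWithin 1 (Set.Iio 1))
        (le_principal_iff.mpr (Ioo_mem_nhdsGT one_pos))
        (le_principal_iff.mpr (Ioo_mem_nhdsLT one_pos)) (hcont.mono hsub) hlim0
        (tendsto_aztecg_nhdsLT_one (hp₀pos 1 one_pos) (hRneg 1 one_pos)) hy)
end
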